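/- For a finite-dimensional H_m-module M and a finite-dimensional H_n-module N there is an isomorphism of H_{m+n}-modules (ind^{m+n}_{m,n} M ⊠ N)^τ ≅ ind^{m+n}_{n,m} (N^τ ⊠ M^τ). -/

import Mathlib

set_option maxHeartbeats 1000000

namespace HC

/-- Generators of the affine Hecke–Clifford superalgebra `H_n`. -/
inductive Gen (n : ℕ) : Type
  | X : Fin n → Gen n
  | Xinv : Fin n → Gen n
  | C : Fin n → Gen n
  | T : Fin (n - 1) → Gen n

/-- The node `i` of `Fin n`, for `i : Fin (n-1)` (1-based: the node `i`). -/
def lo {n : ℕ} (i : Fin (n - 1)) : Fin n :=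
  ⟨i.val, by have := i.isLt; omega⟩

/-- The node `i+1` of `Fin n`, for `i : Fin (n-1)`. -/
def hi {n : ℕ} (i : Fin (n - 1)) : Fin n :=
  ⟨i.val + 1, by have := i.isLt; omega⟩

variable (F : Type) [Field F]

/-- The free algebra on the generators. -/
abbrev FA (n : ℕ) : Type := FreeAlgebra F (Gen n)

noncomputable def fx {n : ℕ} (i : Fin n) : FA F n := FreeAlgebra.ι F (Gen.X i)
noncomputable def fxinv {n : ℕ} (i : Fin n) : FA F n := FreeAlgebra.ι F (Gen.Xinv i)
noncomputable def fc {n : ℕ} (i : Fin n) : FA F n := FreeAlgebra.ι F (Gen.C i)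
noncomputable def ft {n : ℕ} (i : Fin (n - 1)) : FA F n := FreeAlgebra.ι F (Gen.T i)

/-- The defining relations of the affine Hecke–Clifford superalgebra, with parameter
`q` and `ξ = q - q⁻¹`. -/
inductive Rel (q : F) (n : ℕ) : FA F n → FA F n → Prop
  | XXinv (i : Fin n) : Rel q n (fx F i * fxinv F i) 1
  | XinvX (i : Fin n) : Rel q n (fxinv F i * fx F i) 1
  | XX (i j : Fin n) : Rel q n (fx F i * fx F j) (fx F j * fx F i)
  | XiXi (i j : Fin n) : Rel q n (fxinv F i * fxinv F j) (fxinv F j * fxinv F i)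
  | XXi (i j : Fin n) (h : i ≠ j) : Rel q n (fx F i * fxinv F j) (fxinv F j * fx F i)
  | CC (i : Fin n) : Rel q n (fc F i * fc F i) 1
  | Canti (i j : Fin n) (h : i ≠ j) : Rel q n (fc F i * fc F j) (-(fc F j * fc F i))
  | CX (i : Fin n) : Rel q n (fc F i * fx F i) (fxinv F i * fc F i)
  | CXi (i : Fin n) : Rel q n (fc F i * fxinv F i) (fx F i * fc F i)
  | CXo (i j : Fin n) (h : i ≠ j) : Rel q n (fc F i * fx F j) (fx F j * fc F i)
  | CXio (i j : Fin n) (h : i ≠ j) : Rel q n (fc F i * fxinv F j) (fxinv F j * fc F i)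
  | Tquad (i : Fin (n - 1)) : Rel q n (ft F i * ft F i) ((q - q⁻¹) • ft F i + 1)
  | Tbraid (i j : Fin (n - 1)) (h : (j : ℕ) = (i : ℕ) + 1) :
      Rel q n (ft F i * ft F j * ft F i) (ft F j * ft F i * ft F j)
  | TTfar (i j : Fin (n - 1)) (h : (i : ℕ) + 1 < (j : ℕ)) :
      Rel q n (ft F i * ft F j) (ft F j * ft F i)
  | TC (i : Fin (n - 1)) : Rel q n (ft F i * fc F (lo i)) (fc F (hi i) * ft F i)
  | TCo (i : Fin (n - 1)) (j : Fin n) (h1 : j ≠ lo i) (h2 : j ≠ hi i) :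
      Rel q n (ft F i * fc F j) (fc F j * ft F i)
  | TXo (i : Fin (n - 1)) (j : Fin n) (h1 : j ≠ lo i) (h2 : j ≠ hi i) :
      Rel q n (ft F i * fx F j) (fx F j * ft F i)
  | TXio (i : Fin (n - 1)) (j : Fin n) (h1 : j ≠ lo i) (h2 : j ≠ hi i) :
      Rel q n (ft F i * fxinv F j) (fxinv F j * ft F i)
  | cross (i : Fin (n - 1)) :
      Rel q n ((ft F i + (q - q⁻¹) • (fc F (lo i) * fc F (hi i))) * fx F (lo i) * ft F i)
        (fx F (hi i))

/-- The affine Hecke–Clifford superalgebra `H_n` over `F` with parameter `q`. -/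
abbrev H (q : F) (n : ℕ) : Type := RingQuot (Rel F q n)

noncomputable def X (q : F) {n : ℕ} (i : Fin n) : H F q n :=
  RingQuot.mkAlgHom F (Rel F q n) (fx F i)

noncomputable def Xinv (q : F) {n : ℕ} (i : Fin n) : H F q n :=
  RingQuot.mkAlgHom F (Rel F q n) (fxinv F i)

noncomputable def C (q : F) {n : ℕ} (i : Fin n) : H F q n :=
  RingQuot.mkAlgHom F (Rel F q n) (fc F i)

noncomputable def T (q : F) {n : ℕ} (i : Fin (n - 1)) : H F q n :=
  RingQuot.mkAlgHom F (Rel F q n) (ft F i)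

/-- `q` is either a primitive root of unity of odd order (including `q = 1`)
or not a root of unity at all (and `q ≠ 0`). -/
def GoodParam (q : F) : Prop :=
  q ≠ 0 ∧ ((∃ m : ℕ, Odd m ∧ IsPrimitiveRoot q m) ∨ ∀ m : ℕ, 0 < m → q ^ m ≠ 1)

/-- `X_i^a` for an integer exponent `a ∈ ℤ`. -/
noncomputable def XZ (q : F) {n : ℕ} (i : Fin n) (a : ℤ) : H F q n :=
  if 0 ≤ a then X F q i ^ a.toNat else Xinv F q i ^ (-a).toNat

/-- The monomial `X^α = X_1^{α_1} ⋯ X_n^{α_n}` for `α ∈ ℤ^n`. -/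
noncomputable def Xmon (q : F) {n : ℕ} (α : Fin n → ℤ) : H F q n :=
  ((List.finRange n).map fun i => XZ F q i (α i)).prod

/-- The monomial `C^β = C_1^{β_1} ⋯ C_n^{β_n}` for `β ∈ {0,1}^n`. -/
noncomputable def Cmon (q : F) {n : ℕ} (β : Fin n → Bool) : H F q n :=
  ((List.finRange n).map fun i => if β i then C F q i else 1).prod

/-- The basic transposition `s_i = (i, i+1)` of `S_n`. -/
def s {n : ℕ} (i : Fin (n - 1)) : Equiv.Perm (Fin n) := Equiv.swap (lo i) (hi i)

/-- The Coxeter length (number of inversions) of a permutation of `Fin n`. -/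
def len {n : ℕ} (w : Equiv.Perm (Fin n)) : ℕ :=
  ((Finset.univ : Finset (Fin n × Fin n)).filter fun p => p.1 < p.2 ∧ w p.2 < w p.1).card

/-- `Tw` is the family of standard basis elements `T_w`, `w ∈ S_n`: it satisfies
`T_1 = 1`, `T_{s_i} = T_i`, and `T_{s_i w} = T_i T_w` whenever `ℓ(s_i w) = ℓ(w) + 1`.
These conditions determine the family uniquely. -/
def IsTFam (q : F) {n : ℕ} (Tw : Equiv.Perm (Fin n) → H F q n) : Prop :=
  Tw 1 = 1 ∧ (∀ i : Fin (n - 1), Tw (s i) = T F q i) ∧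
    ∀ (i : Fin (n - 1)) (w : Equiv.Perm (Fin n)),
      len (s i * w) = len w + 1 → Tw (s i * w) = T F q i * Tw w

/-- `h` is the quantum characteristic of `q`:  the smallest positive integer with
`q^{1-h} + q^{3-h} + ⋯ + q^{h-1} = 0`. -/
def qcharEq (q : F) (h : ℕ) : Prop :=
  0 < h ∧ (∑ k ∈ Finset.range h, q ^ (1 - (h : ℤ) + 2 * (k : ℤ))) = 0 ∧
    ∀ h' : ℕ, 0 < h' → h' < h →
      (∑ k ∈ Finset.range h', q ^ (1 - (h' : ℤ) + 2 * (k : ℤ))) ≠ 0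

/-- `i ∈ I = {0, 1, …, ℓ}` where `ℓ = (h-1)/2` (no condition if the quantum
characteristic is infinite). -/
def memI (q : F) (i : ℕ) : Prop := ∀ h : ℕ, qcharEq F q h → 2 * i + 1 ≤ h

/-- `q(i) = 2(q^{2i+1} + q^{-2i-1})/(q + q⁻¹)`. -/
noncomputable def qres (q : F) (i : ℕ) : F :=
  2 * (q ^ (2 * i + 1) + q⁻¹ ^ (2 * i + 1)) / (q + q⁻¹)

/-- Index of the block containing position `k` (0-based), for a composition given as a
list of parts. -/
def blk : List ℕ → ℕ → ℕ
  | [], _ => 0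
  | a :: rest, k => if k < a then 0 else blk rest (k - a) + 1

/-- Membership in the Young subgroup `S_μ ⊆ S_n`. -/
def InYoung {n : ℕ} (μ : List ℕ) (w : Equiv.Perm (Fin n)) : Prop :=
  ∀ k : Fin n, blk μ (w k).val = blk μ k.val

/-- `μ` is a composition of `n`. -/
def IsComposition (μ : List ℕ) (n : ℕ) : Prop := (∀ a ∈ μ, 0 < a) ∧ μ.sum = n

/-- The parabolic subalgebra generated by all `X_i^{±1}`, `C_i`, and the `T_j` with
`j` in a set `J` of admissible indices. -/
def parabolicJ (q : F) {n : ℕ} (J : Set (Fin (n - 1))) : Subalgebra F (H F q n) :=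
  Algebra.adjoin F
    ((Set.range fun i : Fin n => X F q i) ∪ (Set.range fun i : Fin n => Xinv F q i) ∪
      (Set.range fun i : Fin n => C F q i) ∪ {h | ∃ j ∈ J, h = T F q j})

/-- The parabolic subalgebra `H_μ` for a composition `μ`. -/
def parabolicC (q : F) {n : ℕ} (μ : List ℕ) : Subalgebra F (H F q n) :=
  parabolicJ F q {j | InYoung μ (s j)}

/-- The classical parabolic subalgebra `H^cl_μ`, generated by the `T_j` with `s_j ∈ S_μ`. -/
def clparC (q : F) {n : ℕ} (μ : List ℕ) : Subalgebra F (H F q n) :=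
  Algebra.adjoin F {h | ∃ j : Fin (n - 1), InYoung μ (s j) ∧ h = T F q j}

/-- The finite Hecke–Clifford subalgebra `H^fn_n`, generated by all `C_i` and `T_j`. -/
def Hfin (q : F) (n : ℕ) : Subalgebra F (H F q n) :=
  Algebra.adjoin F
    ((Set.range fun i : Fin n => C F q i) ∪ {h | ∃ j : Fin (n - 1), h = T F q j})

/-- `x` is a minimal length `(S_μ, S_ν)`-double coset representative. -/
def IsMinDC {n : ℕ} (μ ν : List ℕ) (x : Equiv.Perm (Fin n)) : Prop :=
  ∀ u v : Equiv.Perm (Fin n), InYoung μ u → InYoung ν v → len x ≤ len (u * x * v)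

/-- `w ∈ S_μ x S_ν`. -/
def InDC {n : ℕ} (μ ν : List ℕ) (x w : Equiv.Perm (Fin n)) : Prop :=
  ∃ u v : Equiv.Perm (Fin n), InYoung μ u ∧ InYoung ν v ∧ w = u * x * v

/-- A covering step in the Bruhat order: multiplication by a reflection increasing length. -/
def BruhatStep {n : ℕ} (v w : Equiv.Perm (Fin n)) : Prop :=
  ∃ a b : Fin n, a ≠ b ∧ w = Equiv.swap a b * v ∧ len v < len w

/-- The Bruhat order on `S_n`. -/
def BruhatLE {n : ℕ} : Equiv.Perm (Fin n) → Equiv.Perm (Fin n) → Prop :=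
  Relation.ReflTransGen BruhatStep

/-- The space of `A`-equivariant linear maps between two representations of the
`F`-algebra `A`. -/
def eqvHoms {A : Type} [Ring A] [Algebra F A] {M N : Type}
    [AddCommGroup M] [Module F M] [AddCommGroup N] [Module F N]
    (ρM : A →ₐ[F] Module.End F M) (ρN : A →ₐ[F] Module.End F N) :
    Submodule F (M →ₗ[F] N) where
  carrier := {f | ∀ (x : A) (m : M), f (ρM x m) = ρN x (f m)}
  add_mem' := by
    intro f g hf hg x m
    simp only [LinearMap.add_apply, hf x m, hg x m, map_add]
  zero_mem' := by
    intro x m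
    simp only [LinearMap.zero_apply, map_zero]
  smul_mem' := by
    intro c f hf x m
    simp only [LinearMap.smul_apply, hf x m, map_smul]

/-- `(E, ρE, ι)` is the module induced along the algebra morphism `φ : B →ₐ A` from
the `B`-representation `(M, ρ)`, i.e. `E = A ⊗_B M`, characterized by its universal
property. -/
def IsInducedAlong {A B : Type} [Ring A] [Ring B] [Algebra F A] [Algebra F B]
    (φ : B →ₐ[F] A) {M : Type} [AddCommGroup M] [Module F M]
    (ρ : B →ₐ[F] Module.End F M) {E : Type} [AddCommGroup E] [Module F E]
    (ρE : A →ₐ[F] Module.End F E) (ι : M →ₗ[F] E) : Prop :=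
  (∀ (b : B) (m : M), ι (ρ b m) = ρE (φ b) (ι m)) ∧
    ∀ (P : Type) [AddCommGroup P] [Module F P],
      ∀ (ρP : A →ₐ[F] Module.End F P) (f : M →ₗ[F] P),
        (∀ (b : B) (m : M), f (ρ b m) = ρP (φ b) (f m)) →
        ∃! g : E →ₗ[F] P,
          (∀ (x : A) (e : E), g (ρE x e) = ρP x (g e)) ∧ ∀ m : M, g (ι m) = f m

/-- `δ` is the grading automorphism of the superalgebra `H_n`
(identity on even generators, `-1` on the odd generators `C_i`). -/
def IsGradingAut (q : F) {n : ℕ} (δ : H F q n →ₐ[F] H F q n) : Prop :=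
  (∀ i : Fin n, δ (X F q i) = X F q i) ∧ (∀ i : Fin n, δ (Xinv F q i) = Xinv F q i) ∧
    (∀ i : Fin n, δ (C F q i) = -C F q i) ∧ ∀ i : Fin (n - 1), δ (T F q i) = T F q i

/-- `τ` is the antiautomorphism of `H_n` with `τ(T_i) = T_i + ξ C_i C_{i+1}`,
`τ(C_j) = C_j`, `τ(X_j) = X_j`. -/
def IsTauAntiAut (q : F) {n : ℕ} (τ : H F q n →ₗ[F] H F q n) : Prop :=
  Function.Bijective τ ∧ (∀ a b : H F q n, τ (a * b) = τ b * τ a) ∧ τ 1 = 1 ∧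
    (∀ i : Fin (n - 1),
      τ (T F q i) = T F q i + (q - q⁻¹) • (C F q (lo i) * C F q (hi i))) ∧
    (∀ j : Fin n, τ (C F q j) = C F q j) ∧ (∀ j : Fin n, τ (X F q j) = X F q j) ∧
    ∀ j : Fin n, τ (Xinv F q j) = Xinv F q j

/-- `ρ'` is the representation of the subalgebra `B` obtained from the
`H_ν`-representation `ρν` by twisting with the isomorphism `φ_{x⁻¹}`
(determined by `X_i ↦ X_{x⁻¹ i}`, `C_i ↦ C_{x⁻¹ i}`, `T_w ↦ T_{x⁻¹ w x}`). -/
def IsTwistedRep (q : F) {n : ℕ} (ν : List ℕ) (x : Equiv.Perm (Fin n))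
    (B : Subalgebra F (H F q n)) {M : Type} [AddCommGroup M] [Module F M]
    (ρν : ↥(parabolicC F q (n := n) ν) →ₐ[F] Module.End F M)
    (ρ' : ↥B →ₐ[F] Module.End F M) : Prop :=
  (∀ (i : Fin n) (a : ↥B) (b : ↥(parabolicC F q (n := n) ν)),
      (a : H F q n) = X F q i → (b : H F q n) = X F q (x⁻¹ i) → ρ' a = ρν b) ∧
  (∀ (i : Fin n) (a : ↥B) (b : ↥(parabolicC F q (n := n) ν)),
      (a : H F q n) = Xinv F q i → (b : H F q n) = Xinv F q (x⁻¹ i) → ρ' a = ρν b) ∧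
  (∀ (i : Fin n) (a : ↥B) (b : ↥(parabolicC F q (n := n) ν)),
      (a : H F q n) = C F q i → (b : H F q n) = C F q (x⁻¹ i) → ρ' a = ρν b) ∧
  ∀ (j j' : Fin (n - 1)) (a : ↥B) (b : ↥(parabolicC F q (n := n) ν)),
      lo j' = x⁻¹ (lo j) → (a : H F q n) = T F q j → (b : H F q n) = T F q j' → ρ' a = ρν b

/-- The element `f = a_d X_1^d + ⋯ + a_1 X_1 + a_0` of `H_n`. -/
noncomputable def felem (q : F) (n d : ℕ) (aa : ℕ → F) : H F q n :=
  if h : 0 < n then ∑ i ∈ Finset.range (d + 1), aa i • X F q (⟨0, h⟩ : Fin n) ^ i else 0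

/-- The conditions on the coefficients of `f`: degree `d ≥ 1`, monic, and
`a_i = a_0 a_{d-i}`. -/
def GoodPoly (d : ℕ) (aa : ℕ → F) : Prop :=
  1 ≤ d ∧ aa d = 1 ∧ (∀ i ≤ d, aa i = aa 0 * aa (d - i)) ∧ ∀ i : ℕ, d < i → aa i = 0

/-- The relation generating the two-sided ideal `I_f` of `H_n`. -/
inductive CycRel (q : F) (n d : ℕ) (aa : ℕ → F) : H F q n → H F q n → Prop
  | rel : CycRel q n d aa (felem F q n d aa) 0

/-- The cyclotomic Hecke–Clifford superalgebra `H_n^f = H_n / I_f`. -/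
abbrev Hf (q : F) (n d : ℕ) (aa : ℕ → F) : Type := RingQuot (CycRel F q n d aa)

/-- The canonical quotient map `H_n → H_n^f`. -/
noncomputable def cyc (q : F) (n d : ℕ) (aa : ℕ → F) : H F q n →ₐ[F] Hf F q n d aa :=
  RingQuot.mkAlgHom F (CycRel F q n d aa)

noncomputable def Xf (q : F) (n d : ℕ) (aa : ℕ → F) (i : Fin n) : Hf F q n d aa :=
  cyc F q n d aa (X F q i)
noncomputable def Xinvf (q : F) (n d : ℕ) (aa : ℕ → F) (i : Fin n) : Hf F q n d aa :=
  cyc F q n d aa (Xinv F q i)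
noncomputable def Cf (q : F) (n d : ℕ) (aa : ℕ → F) (i : Fin n) : Hf F q n d aa :=
  cyc F q n d aa (C F q i)
noncomputable def Tf (q : F) (n d : ℕ) (aa : ℕ → F) (i : Fin (n - 1)) : Hf F q n d aa :=
  cyc F q n d aa (T F q i)

/-- `e` is the canonical embedding `H_k^f → H_N^f` (shifting all indices by `sh`;
for `sh = 0` this is the standard identification of `H_k^f` with a subalgebra of
`H_N^f`). -/
def IsCycEmb (q : F) (k N d : ℕ) (aa : ℕ → F) (sh : ℕ)
    (e : Hf F q k d aa →ₐ[F] Hf F q N d aa) : Prop :=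
  (∀ (i : Fin k) (i' : Fin N), (i' : ℕ) = sh + (i : ℕ) →
      e (Xf F q k d aa i) = Xf F q N d aa i') ∧
  (∀ (i : Fin k) (i' : Fin N), (i' : ℕ) = sh + (i : ℕ) →
      e (Xinvf F q k d aa i) = Xinvf F q N d aa i') ∧
  (∀ (i : Fin k) (i' : Fin N), (i' : ℕ) = sh + (i : ℕ) →
      e (Cf F q k d aa i) = Cf F q N d aa i') ∧
  ∀ (j : Fin (k - 1)) (j' : Fin (N - 1)), (j' : ℕ) = sh + (j : ℕ) →
      e (Tf F q k d aa j) = Tf F q N d aa j'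

/-- `δ` is the grading automorphism of the superalgebra `H_n^f`. -/
def IsCycGrading (q : F) (n d : ℕ) (aa : ℕ → F)
    (δ : Hf F q n d aa →ₐ[F] Hf F q n d aa) : Prop :=
  (∀ i : Fin n, δ (Xf F q n d aa i) = Xf F q n d aa i) ∧
  (∀ i : Fin n, δ (Xinvf F q n d aa i) = Xinvf F q n d aa i) ∧
  (∀ i : Fin n, δ (Cf F q n d aa i) = -Cf F q n d aa i) ∧
  ∀ j : Fin (n - 1), δ (Tf F q n d aa j) = Tf F q n d aa j

/-- The elements `f_1 = f`, `f_{i+1} = (T_i + ξ C_i C_{i+1}) f_i T_i` of `H_n`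
(0-based indexing: `fseq k = f_{k+1}`). -/
noncomputable def fseq (q : F) (n d : ℕ) (aa : ℕ → F) : ℕ → H F q n
  | 0 => felem F q n d aa
  | k + 1 =>
    if h : k < n - 1 then
      (T F q (⟨k, h⟩ : Fin (n - 1)) +
          (q - q⁻¹) • (C F q (lo (⟨k, h⟩ : Fin (n - 1))) *
            C F q (hi (⟨k, h⟩ : Fin (n - 1))))) *
        fseq q n d aa k * T F q (⟨k, h⟩ : Fin (n - 1))
    else 0

/-- `f_Z = f_{z_1} ⋯ f_{z_u}` for `Z = {z_1 < ⋯ < z_u} ⊆ {1,…,n}` (0-based). -/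
noncomputable def fZ (q : F) (n d : ℕ) (aa : ℕ → F) (Z : Finset (Fin n)) : H F q n :=
  ((Z.sort (· ≤ ·)).map fun z => fseq F q n d aa (z : ℕ)).prod

/-- `ρT` is the outer tensor product representation `MA ⊠ MB` of the parabolic
subalgebra `H_μ ⊆ H_NN` (for `μ = (mA, mB)`, `NN = mA + mB`): generators with index
in the first block act on the first factor, generators with index in the second
block act on the second factor, with the super sign rule
`(a ⊗ b)(x ⊗ y) = (-1)^{|b||x|} (ax ⊗ by)` expressed via the parity operator `JA`
of the first factor (which enters the action of the odd generators `C`). -/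
def IsOuter (F : Type) [Field F] (q : F) (NN mA mB : ℕ) (μ : List ℕ)
    {MA MB : Type} [AddCommGroup MA] [Module F MA] [AddCommGroup MB] [Module F MB]
    (ρA : H F q mA →ₐ[F] Module.End F MA) (ρB : H F q mB →ₐ[F] Module.End F MB)
    (JA : Module.End F MA)
    (ρT : ↥(parabolicC F q (n := NN) μ) →ₐ[F]
      Module.End F (TensorProduct F MA MB)) : Prop :=
  (∀ (ii : Fin NN) (i' : Fin mA) (a : ↥(parabolicC F q (n := NN) μ)),
    (ii : ℕ) = (i' : ℕ) → (a : H F q NN) = X F q ii →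
      ρT a = TensorProduct.map (ρA (X F q i')) LinearMap.id) ∧
  (∀ (ii : Fin NN) (i' : Fin mA) (a : ↥(parabolicC F q (n := NN) μ)),
    (ii : ℕ) = (i' : ℕ) → (a : H F q NN) = Xinv F q ii →
      ρT a = TensorProduct.map (ρA (Xinv F q i')) LinearMap.id) ∧
  (∀ (ii : Fin NN) (i' : Fin mA) (a : ↥(parabolicC F q (n := NN) μ)),
    (ii : ℕ) = (i' : ℕ) → (a : H F q NN) = C F q ii →
      ρT a = TensorProduct.map (ρA (C F q i')) LinearMap.id) ∧
  (∀ (jj : Fin (NN - 1)) (j' : Fin (mA - 1)) (a : ↥(parabolicC F q (n := NN) μ)),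
    (jj : ℕ) = (j' : ℕ) → (a : H F q NN) = T F q jj →
      ρT a = TensorProduct.map (ρA (T F q j')) LinearMap.id) ∧
  (∀ (ii : Fin NN) (i' : Fin mB) (a : ↥(parabolicC F q (n := NN) μ)),
    (ii : ℕ) = mA + (i' : ℕ) → (a : H F q NN) = X F q ii →
      ρT a = TensorProduct.map LinearMap.id (ρB (X F q i'))) ∧
  (∀ (ii : Fin NN) (i' : Fin mB) (a : ↥(parabolicC F q (n := NN) μ)),
    (ii : ℕ) = mA + (i' : ℕ) → (a : H F q NN) = Xinv F q ii →
      ρT a = TensorProduct.map LinearMap.id (ρB (Xinv F q i'))) ∧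
  (∀ (ii : Fin NN) (i' : Fin mB) (a : ↥(parabolicC F q (n := NN) μ)),
    (ii : ℕ) = mA + (i' : ℕ) → (a : H F q NN) = C F q ii →
      ρT a = TensorProduct.map JA (ρB (C F q i'))) ∧
  ∀ (jj : Fin (NN - 1)) (j' : Fin (mB - 1)) (a : ↥(parabolicC F q (n := NN) μ)),
    (jj : ℕ) = mA + (j' : ℕ) → (a : H F q NN) = T F q jj →
      ρT a = TensorProduct.map LinearMap.id (ρB (T F q j'))

/-!
The relations of `H_n` say that `r T_i = T_i s_i(r) + ∂_i(r)` for `r` in the subalgebra `L`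
generated by the `X_j^{±1}` and `C_j`, where `s_i` permutes the generators and `∂_i` is a twisted
derivation. Hence for every module `V` over the finite Hecke algebra, `Hom_F(L, V)` is an
`H_n`-module, in which `T_i` sends `f` to `T_i ∘ f ∘ s_i + f ∘ ∂_i`. Taking for `V` the `W`-valued
functions on the minimal coset representatives (shuffles) of a Young subgroup shows that `ind W` is
the direct sum of the `T_w ⊗ W`, without any appeal to a basis theorem for `H_n`.

The coefficient of the longest shuffle is a linear map from `ind (M ⊠ N)` to `M ⊗ N`, equivariant
up to conjugation by that shuffle. Composed with the evaluation pairing it gives an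
`H_{(k,m)}`-equivariant map `N^τ ⊠ M^τ → (ind (M ⊠ N))^τ`, hence an `H_{m+k}`-equivariant map
`ind (N^τ ⊠ M^τ) → (ind (M ⊠ N))^τ`. It is block triangular with respect to the length of shuffles,
with the perfect evaluation pairing along the diagonal, and the dimensions agree, so it is an
isomorphism. The pairing exchanges the two factors, which forces a Koszul sign
`(-1)^{|x||y|} = (1 + a + b - a b) / 2`, where `a` and `b` are the parity operators; this is where
`2 ≠ 0` enters.
-/

/-! ### Laurent–Clifford algebras -/

/-- Generators of the Laurent–Clifford algebra. -/
inductive LaurentClifford.Gen (I : Type*) : Type _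
  | x : I → Gen I
  | c : I → Gen I

open FreeAlgebra LaurentClifford.Gen in
/-- Relations of the Laurent–Clifford algebra. No generators are needed for the inverses of the
`x i`: the last relation says that `c i * x i * c i` is inverse to `x i`. -/
inductive LaurentClifford.Rel (R : Type*) [CommRing R] (I : Type*) :
    FreeAlgebra R (Gen I) → FreeAlgebra R (Gen I) → Prop
  | c_mul_self (i : I) : Rel R I (ι R (c i) * ι R (c i)) 1
  | c_anticomm (i j : I) (h : i ≠ j) : Rel R I (ι R (c i) * ι R (c j)) (-(ι R (c j) * ι R (c i)))
  | x_comm (i j : I) : Rel R I (ι R (x i) * ι R (x j)) (ι R (x j) * ι R (x i))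
  | x_c_comm (i j : I) (h : i ≠ j) : Rel R I (ι R (x j) * ι R (c i)) (ι R (c i) * ι R (x j))
  | c_mul_x_sq (i : I) : Rel R I (ι R (c i) * ι R (x i) * (ι R (c i) * ι R (x i))) 1

/-- The Laurent–Clifford algebra on the index set `I`: the subalgebra of the affine
Hecke–Clifford superalgebra generated by the `X_i` and `C_i`, presented abstractly. -/
def LaurentClifford (R : Type*) [CommRing R] (I : Type*) : Type _ :=
  RingQuot (LaurentClifford.Rel R I)

namespace LaurentClifford

noncomputable instance (R : Type*) [CommRing R] (I : Type*) : Ring (LaurentClifford R I) :=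
  inferInstanceAs (Ring (RingQuot (Rel R I)))

noncomputable instance (R : Type*) [CommRing R] (I : Type*) : Algebra R (LaurentClifford R I) :=
  inferInstanceAs (Algebra R (RingQuot (Rel R I)))

variable {R : Type*} [CommRing R] {I : Type*}

/-- The quotient map from the free algebra. -/
noncomputable def mk : FreeAlgebra R (Gen I) →ₐ[R] LaurentClifford R I :=
  RingQuot.mkAlgHom R (Rel R I)

/-- The Laurent polynomial generator `X_i`. -/
noncomputable def x (i : I) : LaurentClifford R I := mk (FreeAlgebra.ι R (.x i))

/-- The Clifford generator `C_i`. -/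
noncomputable def c (i : I) : LaurentClifford R I := mk (FreeAlgebra.ι R (.c i))

/-- The inverse of the Laurent polynomial generator `X_i`. -/
noncomputable def xInv (i : I) : LaurentClifford R I := c i * x i * c i

local notation "L" => LaurentClifford R I

theorem mk_eq_mk_of_rel {p r : FreeAlgebra R (Gen I)} (h : Rel R I p r) : mk p = mk r :=
  RingQuot.mkAlgHom_rel R h

theorem c_mul_self (i : I) : (c i : L) * c i = 1 := by
  simpa [c] using mk_eq_mk_of_rel (Rel.c_mul_self (R := R) i)

theorem c_anticomm {i j : I} (h : i ≠ j) : (c i : L) * c j = -(c j * c i) := by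
  simpa [c] using mk_eq_mk_of_rel (Rel.c_anticomm (R := R) i j h)

theorem x_comm (i j : I) : (x i : L) * x j = x j * x i := by
  simpa [x] using mk_eq_mk_of_rel (Rel.x_comm (R := R) i j)

theorem x_c_comm {i j : I} (h : i ≠ j) : (x j : L) * c i = c i * x j := by
  simpa [c, x] using mk_eq_mk_of_rel (Rel.x_c_comm (R := R) i j h)

theorem c_mul_x_sq (i : I) : (c i : L) * x i * (c i * x i) = 1 := by
  simpa [c, x] using mk_eq_mk_of_rel (Rel.c_mul_x_sq (R := R) i)

theorem c_mul_self_assoc (i : I) (z : L) : c i * (c i * z) = z := by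
  rw [← mul_assoc, c_mul_self, one_mul]

theorem c_anticomm_assoc {i j : I} (h : i ≠ j) (z : L) : c i * (c j * z) = -(c j * (c i * z)) := by
  rw [← mul_assoc, c_anticomm h, neg_mul, mul_assoc]

theorem x_comm_assoc (i j : I) (z : L) : x i * (x j * z) = x j * (x i * z) := by
  rw [← mul_assoc, x_comm, mul_assoc]

theorem x_c_comm_assoc {i j : I} (h : i ≠ j) (z : L) : x j * (c i * z) = c i * (x j * z) := by
  rw [← mul_assoc, x_c_comm h, mul_assoc]

theorem x_mul_c_self (i : I) : (x i : L) * c i = c i * xInv i := by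
  simp only [xInv, mul_assoc, c_mul_self_assoc]

theorem x_mul_c_self_assoc (i : I) (z : L) : x i * (c i * z) = c i * (xInv i * z) := by
  rw [← mul_assoc, x_mul_c_self, mul_assoc]

theorem xInv_mul_x (i : I) : (xInv i : L) * x i = 1 := by
  simpa only [xInv, mul_assoc] using c_mul_x_sq (R := R) i

theorem xInv_c_comm_assoc {i j : I} (h : i ≠ j) (z : L) :
    xInv j * (c i * z) = c i * (xInv j * z) := by
  simp only [xInv, mul_assoc, c_anticomm_assoc h.symm, x_c_comm_assoc h, mul_neg, neg_neg]

theorem xInv_x_comm {i j : I} (h : i ≠ j) : (xInv i : L) * x j = x j * xInv i := by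
  simp only [xInv, mul_assoc, x_c_comm_assoc h, x_comm_assoc i j, ← x_c_comm h]

@[elab_as_elim]
theorem induction {motive : L → Prop} (algebraMap : ∀ r : R, motive (algebraMap R _ r))
    (x : ∀ i, motive (x i)) (c : ∀ i, motive (c i))
    (mul : ∀ p r, motive p → motive r → motive (p * r))
    (add : ∀ p r, motive p → motive r → motive (p + r)) (r : L) : motive r := by
  obtain ⟨r, rfl⟩ : ∃ r', mk r' = r := RingQuot.mkAlgHom_surjective R (Rel R I) r
  induction r using FreeAlgebra.induction with
  | grade0 r => simpa using algebraMap r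
  | grade1 g =>
    cases g with
    | x i => exact x i
    | c i => exact c i
  | mul p r hp hr => simpa using mul _ _ hp hr
  | add p r hp hr => simpa using add _ _ hp hr

section lift

variable {A : Type*} [Ring A] [Algebra R A] (u v : I → A)
    (hcc : ∀ i, v i * v i = 1) (hanti : ∀ i j, i ≠ j → v i * v j = -(v j * v i))
    (hxx : ∀ i j, u i * u j = u j * u i) (hxc : ∀ i j, i ≠ j → u j * v i = v i * u j)
    (hcxcx : ∀ i, v i * u i * (v i * u i) = 1)

/-- The universal property of the Laurent–Clifford algebra: the homomorphism given by the images
`u i` of `x i` and `v i` of `c i`. -/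
noncomputable def lift : L →ₐ[R] A :=
  RingQuot.liftAlgHom R (s := Rel R I) ⟨FreeAlgebra.lift R fun | .x i => u i | .c i => v i, by
    intro p r h
    induction h with
    | c_mul_self i => simpa using hcc i
    | c_anticomm i j h => simpa using hanti i j h
    | x_comm i j => simpa using hxx i j
    | x_c_comm i j h => simpa using hxc i j h
    | c_mul_x_sq i => simpa using hcxcx i⟩

@[simp]
theorem lift_x (i : I) : lift (R := R) u v hcc hanti hxx hxc hcxcx (x i) = u i :=
  (RingQuot.liftAlgHom_mkAlgHom_apply R _ _ _).trans (by simp)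

@[simp]
theorem lift_c (i : I) : lift (R := R) u v hcc hanti hxx hxc hcxcx (c i) = v i :=
  (RingQuot.liftAlgHom_mkAlgHom_apply R _ _ _).trans (by simp)

end lift

/-- The automorphism of the Laurent–Clifford algebra permuting the indices by `e`. -/
noncomputable def perm (e : Equiv.Perm I) : L →ₐ[R] L :=
  lift (fun i => x (e i)) (fun i => c (e i)) (fun i => c_mul_self (e i))
    (fun _ _ h => c_anticomm (e.injective.ne h)) (fun i j => x_comm (e i) (e j))
    (fun _ _ h => x_c_comm (e.injective.ne h)) (fun i => c_mul_x_sq (e i))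

@[simp]
theorem perm_x (e : Equiv.Perm I) (i : I) : perm e (x i : L) = x (e i) := by simp [perm]

@[simp]
theorem perm_c (e : Equiv.Perm I) (i : I) : perm e (c i : L) = c (e i) := by simp [perm]

theorem perm_one (r : L) : perm 1 r = r := by
  induction r using induction with
  | algebraMap a => simp
  | x i => simp
  | c i => simp
  | mul p r hp hr => rw [map_mul, hp, hr]
  | add p r hp hr => rw [map_add, hp, hr]

theorem perm_perm (e f : Equiv.Perm I) (r : L) : perm e (perm f r) = perm (e * f) r := by
  induction r using induction with
  | algebraMap a => simp
  | x i => simp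
  | c i => simp
  | mul p r hp hr => simp only [map_mul, hp, hr]
  | add p r hp hr => simp only [map_add, hp, hr]

/-! ### Skew derivations -/

/-- Values `dx i` and `dc i` on the generators that are compatible with the relations under the
skew Leibniz rule `∂ (p * r) = ∂ p * σ r + p * ∂ r`. -/
structure IsSkewDerivationData (σ : LaurentClifford R I →ₐ[R] LaurentClifford R I)
    (dx dc : I → LaurentClifford R I) : Prop where
  c_mul_self (i : I) : dc i * σ (c i) + c i * dc i = 0
  c_anticomm (i j : I) (h : i ≠ j) :
    dc i * σ (c j) + c i * dc j = -(dc j * σ (c i) + c j * dc i)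
  x_comm (i j : I) : dx i * σ (x j) + x i * dx j = dx j * σ (x i) + x j * dx i
  x_c_comm (i j : I) (h : i ≠ j) :
    dx j * σ (c i) + x j * dc i = dc i * σ (x j) + c i * dx j
  c_mul_x_sq (i : I) :
    (dc i * σ (x i) + c i * dx i) * (σ (c i) * σ (x i)) +
      c i * x i * (dc i * σ (x i) + c i * dx i) = 0

section skewDerivation

variable {S : Type*} [Ring S]

theorem lower_mul_lower (p q r p' q' r' : S) :
    !![p, 0; q, r] * !![p', 0; q', r'] = !![p * p', 0; q * p' + r * q', r * r'] := by
  simp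

theorem lower_congr {p q r p' q' r' : S} (hp : p = p') (hq : q = q') (hr : r = r') :
    !![p, 0; q, r] = !![p', 0; q', r'] := by
  rw [hp, hq, hr]

theorem neg_lower (p q r : S) : -!![p, 0; q, r] = !![-p, 0; -q, -r] := by
  ext i j; fin_cases i <;> fin_cases j <;> simp

variable {σ : LaurentClifford R I →ₐ[R] LaurentClifford R I} {dx dc : I → LaurentClifford R I}
  (h : IsSkewDerivationData σ dx dc)

/-- The homomorphism `r ↦ [[σ r, 0], [∂ r, r]]` encoding a skew derivation `∂`. -/
noncomputable def skewMatrix : L →ₐ[R] Matrix (Fin 2) (Fin 2) L :=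
  lift (fun i => !![σ (x i), 0; dx i, x i]) (fun i => !![σ (c i), 0; dc i, c i])
    (fun i => by
      rw [lower_mul_lower, Matrix.one_fin_two]
      exact lower_congr (by rw [← map_mul, c_mul_self, map_one]) (h.c_mul_self i) (c_mul_self i))
    (fun i j hij => by
      rw [lower_mul_lower, lower_mul_lower, neg_lower]
      exact lower_congr (by rw [← map_mul, c_anticomm hij, map_neg, map_mul])
        (h.c_anticomm i j hij) (c_anticomm hij))
    (fun i j => by
      rw [lower_mul_lower, lower_mul_lower]
      exact lower_congr (by rw [← map_mul, x_comm, map_mul]) (h.x_comm i j) (x_comm i j))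
    (fun i j hij => by
      rw [lower_mul_lower, lower_mul_lower]
      exact lower_congr (by rw [← map_mul, x_c_comm hij, map_mul]) (h.x_c_comm i j hij)
        (x_c_comm hij))
    (fun i => by
      rw [lower_mul_lower, lower_mul_lower, Matrix.one_fin_two]
      exact lower_congr (by rw [← map_mul, ← map_mul, c_mul_x_sq, map_one])
        (h.c_mul_x_sq i) (c_mul_x_sq i))

/-- The `σ`-skew derivation with prescribed values `dx i` and `dc i` on the generators. -/
noncomputable def skewDerivation : L →ₗ[R] L :=
  Matrix.entryLinearMap R L 1 0 ∘ₗ (skewMatrix h).toLinearMap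

theorem skewMatrix_apply (r : L) : skewMatrix h r = !![σ r, 0; skewDerivation h r, r] := by
  have entries : skewMatrix h r 0 0 = σ r ∧ skewMatrix h r 0 1 = 0 ∧ skewMatrix h r 1 1 = r := by
    induction r using induction with
    | algebraMap r => simp [Matrix.algebraMap_matrix_apply]
    | x i => simp [skewMatrix]
    | c i => simp [skewMatrix]
    | mul p r hp hr => simp [Matrix.mul_apply, Fin.sum_univ_two, hp, hr]
    | add p r hp hr => simp [hp, hr]
  ext i j
  fin_cases i <;> fin_cases j <;> simp [skewDerivation, entries]

theorem skewDerivation_mul (p r : L) :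
    skewDerivation h (p * r) = skewDerivation h p * σ r + p * skewDerivation h r := by
  simpa [skewMatrix_apply, lower_mul_lower] using congrFun₂ (map_mul (skewMatrix h) p r) 1 0

theorem skewDerivation_algebraMap (r : R) : skewDerivation h (algebraMap R L r) = 0 := by
  simp [skewDerivation, Matrix.algebraMap_matrix_apply]

theorem skewDerivation_x (i : I) : skewDerivation h (x i) = dx i := by
  simp [skewDerivation, skewMatrix]

theorem skewDerivation_c (i : I) : skewDerivation h (c i) = dc i := by
  simp [skewDerivation, skewMatrix]

end skewDerivation

/-! ### The skew derivation of a Hecke generator -/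

section twistedDerivation

variable [DecidableEq I] (ξ : R) (a b : I)

/-- The correction term when `x j` is moved past the Hecke generator exchanging `a` and `b`. -/
noncomputable def twistX (j : I) : L :=
  if j = a then ξ • ((c a * c b - 1) * x b)
  else if j = b then ξ • (c a * c b * x a + x b)
  else 0

/-- The correction term when `c j` is moved past the Hecke generator exchanging `a` and `b`. -/
noncomputable def twistC (j : I) : L :=
  if j = a then ξ • (c a - c b) else 0

theorem twistX_left : twistX ξ a b a = ξ • ((c a * c b - 1) * x b : L) := if_pos rfl

theorem twistC_left : twistC ξ a b a = ξ • (c a - c b : L) := if_pos rfl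

variable {a b}

theorem twistX_right (hab : a ≠ b) : twistX ξ a b b = ξ • (c a * c b * x a + x b : L) := by
  simp [twistX, hab.symm]

theorem twistX_of_ne {j : I} (ha : j ≠ a) (hb : j ≠ b) : twistX ξ a b j = (0 : L) := by
  simp [twistX, ha, hb]

theorem twistC_of_ne {j : I} (ha : j ≠ a) : twistC ξ a b j = (0 : L) := if_neg ha

omit [DecidableEq I] in
@[elab_as_elim]
theorem forall_ne_of_symm {P : I → I → Prop} (a b : I) (symm : ∀ i j, P i j → P j i)
    (left_right : P a b) (left_other : ∀ j, j ≠ a → j ≠ b → P a j)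
    (right_other : ∀ j, j ≠ a → j ≠ b → P b j)
    (other_other : ∀ i j, i ≠ a → i ≠ b → j ≠ a → j ≠ b → i ≠ j → P i j) (i j : I) (h : i ≠ j) :
    P i j := by
  by_cases ia : i = a <;> by_cases ib : i = b <;> by_cases ja : j = a <;> by_cases jb : j = b <;>
    grind

theorem twistC_anticomm (hab : a ≠ b) {i j : I} (h : i ≠ j) :
    twistC ξ a b i * perm (Equiv.swap a b) (c j : L) + c i * twistC ξ a b j =
      -(twistC ξ a b j * perm (Equiv.swap a b) (c i) + c j * twistC ξ a b i) := by
  refine forall_ne_of_symm a b ?_ ?_ ?_ ?_ ?_ i j h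
  · exact fun i j h => by rw [h, neg_neg]
  · simp only [twistC_left, twistC_of_ne ξ hab.symm, perm_c, Equiv.swap_apply_left,
      Equiv.swap_apply_right, smul_mul_assoc, mul_smul_comm, sub_mul, mul_sub, c_mul_self,
      c_anticomm hab.symm, mul_zero, zero_mul]
    module
  · intro j ha hb
    simp only [twistC_left, twistC_of_ne ξ ha, perm_c,
      Equiv.swap_apply_of_ne_of_ne ha hb, smul_mul_assoc, mul_smul_comm, sub_mul, mul_sub,
      c_anticomm ha, c_anticomm hb, mul_zero, zero_mul]
    module
  · intro j ha _
    simp [twistC_of_ne ξ ha, twistC_of_ne ξ hab.symm]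
  · intro i j ha _ ha' _ _
    simp [twistC_of_ne ξ ha, twistC_of_ne ξ ha']

theorem twistX_comm (hab : a ≠ b) (i j : I) :
    twistX ξ a b i * perm (Equiv.swap a b) (x j : L) + x i * twistX ξ a b j =
      twistX ξ a b j * perm (Equiv.swap a b) (x i) + x j * twistX ξ a b i := by
  rcases eq_or_ne i j with rfl | h
  · rfl
  refine forall_ne_of_symm a b ?_ ?_ ?_ ?_ ?_ i j h
  · exact fun i j h => h.symm
  · simp only [twistX_left, twistX_right ξ hab, perm_x, Equiv.swap_apply_left,
      Equiv.swap_apply_right, smul_mul_assoc, mul_smul_comm, sub_mul, mul_sub, add_mul, mul_add,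
      mul_assoc, x_c_comm_assoc hab, x_mul_c_self_assoc, xInv_mul_x, x_comm b a, one_mul,
      mul_one, xInv_c_comm_assoc hab.symm]
    module
  · intro j ha hb
    simp only [twistX_left, twistX_of_ne ξ ha hb, perm_x, Equiv.swap_apply_of_ne_of_ne ha hb,
      smul_mul_assoc, mul_smul_comm, sub_mul, mul_sub, mul_assoc,
      x_c_comm_assoc ha.symm, x_c_comm_assoc hb.symm, x_comm j b, one_mul, mul_zero, zero_mul]
    module
  · intro j ha hb
    simp only [twistX_right ξ hab, twistX_of_ne ξ ha hb, perm_x,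
      Equiv.swap_apply_of_ne_of_ne ha hb, smul_mul_assoc, mul_smul_comm, add_mul, mul_add,
      mul_assoc, x_c_comm_assoc ha.symm, x_c_comm_assoc hb.symm, x_comm j b, x_comm j a,
      mul_zero, zero_mul]
    module
  · intro i j ha hb ha' hb' _
    simp [twistX_of_ne ξ ha hb, twistX_of_ne ξ ha' hb']

theorem twistX_twistC_comm_left (hab : a ≠ b) {j : I} (ja : j ≠ a) :
    twistX ξ a b j * perm (Equiv.swap a b) (c a : L) + x j * twistC ξ a b a =
      twistC ξ a b a * perm (Equiv.swap a b) (x j) + c a * twistX ξ a b j := by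
  rcases eq_or_ne j b with rfl | jb
  · simp only [twistX_right ξ hab, twistC_left, perm_x, perm_c, Equiv.swap_apply_left,
      Equiv.swap_apply_right, smul_mul_assoc, mul_smul_comm, sub_mul, mul_sub, add_mul, mul_add,
      mul_assoc, c_mul_self_assoc, x_c_comm hab, x_c_comm hab.symm, x_mul_c_self]
    module
  · simp only [twistX_of_ne ξ ja jb, twistC_left, perm_x, Equiv.swap_apply_of_ne_of_ne ja jb,
      smul_mul_assoc, mul_smul_comm, sub_mul, mul_sub, x_c_comm ja.symm, x_c_comm jb.symm,
      mul_zero, zero_mul]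
    module

theorem twistX_twistC_comm_of_ne (hab : a ≠ b) {i j : I} (ia : i ≠ a) (h : i ≠ j) :
    twistX ξ a b j * perm (Equiv.swap a b) (c i : L) + x j * twistC ξ a b i =
      twistC ξ a b i * perm (Equiv.swap a b) (x j) + c i * twistX ξ a b j := by
  simp only [twistC_of_ne ξ ia, mul_zero, zero_mul, add_zero, zero_add]
  rcases eq_or_ne i b with rfl | ib <;> rcases eq_or_ne j a with rfl | ja
  · simp only [twistX_left, perm_c, Equiv.swap_apply_right, smul_mul_assoc, mul_smul_comm,
      sub_mul, mul_sub, mul_assoc, c_mul_self_assoc, c_anticomm_assoc ia, x_c_comm hab, one_mul,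
      mul_neg]
    module
  · simp [twistX_of_ne ξ ja h.symm]
  · simp only [twistX_left, perm_c, Equiv.swap_apply_of_ne_of_ne ia ib, smul_mul_assoc,
      mul_smul_comm, sub_mul, mul_sub, mul_assoc, c_anticomm_assoc ia, c_anticomm_assoc ib,
      x_c_comm ib, one_mul, mul_neg, neg_neg]
  · rcases eq_or_ne j b with rfl | jb
    · simp only [twistX_right ξ hab, perm_c, Equiv.swap_apply_of_ne_of_ne ia ib, smul_mul_assoc,
        mul_smul_comm, add_mul, mul_add, mul_assoc, c_anticomm_assoc ia, c_anticomm_assoc ib,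
        x_c_comm ib, x_c_comm ia, mul_neg, neg_neg]
    · simp [twistX_of_ne ξ ja jb]

theorem twistC_twistX_sq (hab : a ≠ b) (i : I) :
    (twistC ξ a b i * perm (Equiv.swap a b) (x i) + c i * twistX ξ a b i) *
        (perm (Equiv.swap a b) (c i) * perm (Equiv.swap a b) (x i)) +
      c i * x i * (twistC ξ a b i * perm (Equiv.swap a b) (x i) + c i * twistX ξ a b i) =
        (0 : L) := by
  rcases eq_or_ne i a with rfl | ha
  · simp only [twistX_left, twistC_left, perm_x, perm_c, Equiv.swap_apply_left, smul_mul_assoc,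
      mul_smul_comm, sub_mul, mul_sub, add_mul, mul_add, mul_assoc, c_mul_self,
      c_mul_self_assoc, x_c_comm_assoc hab.symm, x_mul_c_self_assoc, xInv_mul_x, one_mul,
      mul_one, xInv_x_comm hab]
    module
  rcases eq_or_ne i b with rfl | hb
  · simp only [twistX_right ξ hab, twistC_of_ne ξ ha, perm_x, perm_c, Equiv.swap_apply_right,
      smul_mul_assoc, mul_smul_comm, add_mul, mul_add, mul_assoc, c_mul_self, c_mul_self_assoc,
      c_anticomm_assoc ha, x_c_comm_assoc hab, x_mul_c_self_assoc, xInv_mul_x, mul_one,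
      mul_neg, neg_mul, x_comm i a, zero_mul, zero_add]
    module
  · simp [twistX_of_ne ξ ha hb, twistC_of_ne ξ ha]

theorem isSkewDerivationData_twist (hab : a ≠ b) :
    IsSkewDerivationData (perm (Equiv.swap a b)) (twistX ξ a b) (twistC ξ a b : I → L) where
  c_mul_self i := by
    rcases eq_or_ne i a with rfl | ha
    · simp only [twistC_left, perm_c, Equiv.swap_apply_left, smul_mul_assoc, mul_smul_comm,
        sub_mul, mul_sub, c_mul_self]
      module
    · simp [twistC_of_ne ξ ha]
  c_anticomm _ _ := twistC_anticomm ξ hab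
  x_comm := twistX_comm ξ hab
  x_c_comm i j h := by
    rcases eq_or_ne i a with rfl | ia
    · exact twistX_twistC_comm_left ξ hab h.symm
    · exact twistX_twistC_comm_of_ne ξ hab ia h
  c_mul_x_sq := twistC_twistX_sq ξ hab

/-- The skew derivation `∂` attached to the exchange `s` of `a` and `b`: it governs the commutation
rule `r * T = T * s r + ∂ r` of the affine Hecke–Clifford superalgebra. -/
noncomputable def twistedDerivation (hab : a ≠ b) : L →ₗ[R] L :=
  skewDerivation (isSkewDerivationData_twist ξ hab)

variable (hab : a ≠ b)

theorem twistedDerivation_mul (p r : L) :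
    twistedDerivation ξ hab (p * r) =
      twistedDerivation ξ hab p * perm (Equiv.swap a b) r + p * twistedDerivation ξ hab r :=
  skewDerivation_mul _ p r

theorem twistedDerivation_algebraMap (r : R) :
    twistedDerivation ξ hab (algebraMap R L r) = 0 :=
  skewDerivation_algebraMap _ r

theorem twistedDerivation_one : twistedDerivation ξ hab (1 : L) = 0 := by
  simpa using twistedDerivation_algebraMap ξ hab 1

theorem twistedDerivation_x_left :
    twistedDerivation ξ hab (x a : L) = ξ • ((c a * c b - 1) * x b) :=
  (skewDerivation_x _ a).trans (twistX_left ξ a b)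

theorem twistedDerivation_x_right :
    twistedDerivation ξ hab (x b : L) = ξ • (c a * c b * x a + x b) :=
  (skewDerivation_x _ b).trans (twistX_right ξ hab)

theorem twistedDerivation_x_of_ne {j : I} (ha : j ≠ a) (hb : j ≠ b) :
    twistedDerivation ξ hab (x j : L) = 0 :=
  (skewDerivation_x _ j).trans (twistX_of_ne ξ ha hb)

theorem twistedDerivation_c_left : twistedDerivation ξ hab (c a : L) = ξ • (c a - c b) :=
  (skewDerivation_c _ a).trans (twistC_left ξ a b)

theorem twistedDerivation_c_of_ne {j : I} (ha : j ≠ a) : twistedDerivation ξ hab (c j : L) = 0 :=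
  (skewDerivation_c _ j).trans (twistC_of_ne ξ ha)

end twistedDerivation

end LaurentClifford

namespace LaurentClifford

/-! ### Compatibility of the skew derivations with the Hecke relations -/

section compat

variable {R M : Type*} [CommRing R] [AddCommGroup M] [Module R M]

/-- The conditions on `g` under which the rule `g * T = T * σ g + δ g` is compatible with the
quadratic relation of `T`. -/
structure QuadCompat (ξ : R) (σ δ : M → M) (g : M) : Prop where
  involutive : σ (σ g) = g
  skew : δ (σ g) + σ (δ g) = ξ • (σ g - g)
  square : δ (δ g) = ξ • δ g

/-- The conditions on `g` under which the rules for two generators with exchanges `σ`, `τ` and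
skew derivations `δ`, `ε` are compatible with the commutation of these generators. -/
structure FarCompat (σ δ τ ε : M → M) (g : M) : Prop where
  perm_perm : τ (σ g) = σ (τ g)
  der_perm : ε (σ g) = σ (ε g)
  perm_der : τ (δ g) = δ (τ g)
  der_der : ε (δ g) = δ (ε g)

/-- The conditions on `g` under which the rules for two generators with exchanges `σ`, `τ` and
skew derivations `δ`, `ε` are compatible with the braid relation; they are obtained by comparing
coefficients of the products of at most three generators. -/
structure BraidCompat (ξ : R) (σ δ τ ε : M → M) (g : M) : Prop where
  perm_perm_perm : σ (τ (σ g)) = τ (σ (τ g))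
  der_perm_perm : δ (τ (σ g)) = τ (σ (ε g))
  perm_perm_der : σ (τ (δ g)) = ε (σ (τ g))
  left : ξ • σ (ε (σ g)) + δ (ε (σ g)) + σ (ε (δ g)) = ε (σ (ε g))
  right : ξ • τ (δ (τ g)) + ε (δ (τ g)) + τ (δ (ε g)) = δ (τ (δ g))
  der_der_der : σ (ε (σ g)) + δ (ε (δ g)) = τ (δ (τ g)) + ε (δ (ε g))

end compat

section twisted

variable {R : Type*} [CommRing R] {I : Type*} [DecidableEq I] (ξ : R) {a b d e : I} (hab : a ≠ b)

local notation "σ" => (perm (R := R) (Equiv.swap a b))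
local notation "δ" => (twistedDerivation ξ hab)

theorem quadCompat_c (j : I) : QuadCompat ξ σ δ (c j) := by
  rcases eq_or_ne j a with rfl | ja
  · constructor <;>
      simp only [perm_c, Equiv.swap_apply_left, Equiv.swap_apply_right, twistedDerivation_c_left,
        twistedDerivation_c_of_ne ξ hab hab.symm, map_smul, map_sub] <;> module
  rcases eq_or_ne j b with rfl | jb
  · constructor <;>
      simp only [perm_c, Equiv.swap_apply_left, Equiv.swap_apply_right, twistedDerivation_c_left,
        twistedDerivation_c_of_ne ξ hab hab.symm, map_zero] <;> module
  · constructor <;>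
      simp [Equiv.swap_apply_of_ne_of_ne ja jb, twistedDerivation_c_of_ne ξ hab ja]

theorem quadCompat_x (j : I) : QuadCompat ξ σ δ (x j) := by
  by_cases h : j = a ∨ j = b
  · rcases h with rfl | rfl <;> constructor <;>
      simp only [perm_x, perm_c, Equiv.swap_apply_left, Equiv.swap_apply_right,
        twistedDerivation_x_left, twistedDerivation_x_right, twistedDerivation_c_left,
        twistedDerivation_c_of_ne ξ hab hab.symm, twistedDerivation_mul,
        map_smul, map_add, map_sub, map_mul, smul_mul_assoc, mul_smul_comm, sub_mul,
        mul_sub, mul_add, one_mul, mul_zero, zero_mul, mul_assoc, c_mul_self_assoc,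
        c_anticomm_assoc hab.symm, mul_neg] <;> module
  · obtain ⟨ja, jb⟩ := not_or.mp h
    constructor <;>
      simp [Equiv.swap_apply_of_ne_of_ne ja jb, twistedDerivation_x_of_ne ξ hab ja jb]

end twisted

section far

variable {R : Type*} [CommRing R] {I : Type*} [DecidableEq I] (ξ : R) {a b a' b' : I}
  (hab : a ≠ b) (hab' : a' ≠ b')

local notation "σ" => (perm (R := R) (Equiv.swap a b))
local notation "δ" => (twistedDerivation ξ hab)
local notation "τ" => (perm (R := R) (Equiv.swap a' b'))
local notation "ε" => (twistedDerivation ξ hab')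

variable (haa : a ≠ a') (hab₁ : a ≠ b') (hba : b ≠ a') (hbb : b ≠ b')
include haa hab₁ hba hbb

theorem farCompat_c (j : I) : FarCompat σ δ τ ε (c j) := by
  by_cases ja : j = a <;> by_cases jb : j = b <;> by_cases ja' : j = a' <;>
    by_cases jb' : j = b' <;> constructor <;>
    simp_all [Equiv.swap_apply_of_ne_of_ne, twistedDerivation_c_left, twistedDerivation_c_of_ne,
      haa.symm, hab₁.symm, hba.symm, hbb.symm]

theorem farCompat_x (j : I) : FarCompat σ δ τ ε (x j) := by
  by_cases ja : j = a <;> by_cases jb : j = b <;> by_cases ja' : j = a' <;>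
    by_cases jb' : j = b' <;> constructor <;>
    simp_all [Equiv.swap_apply_of_ne_of_ne, twistedDerivation_c_of_ne, twistedDerivation_x_left,
      twistedDerivation_x_right, twistedDerivation_x_of_ne, twistedDerivation_mul,
      twistedDerivation_one, haa.symm, hab₁.symm, hba.symm, hbb.symm]

end far

section braid

variable {R : Type*} [CommRing R] {I : Type*} [DecidableEq I] (ξ : R) {a b d : I}
  (hab : a ≠ b) (hbd : b ≠ d) (had : a ≠ d)

local notation "σ" => (perm (R := R) (Equiv.swap a b))
local notation "δ" => (twistedDerivation ξ hab)
local notation "τ" => (perm (R := R) (Equiv.swap b d))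
local notation "ε" => (twistedDerivation ξ hbd)

include had

theorem braidCompat_c (j : I) : BraidCompat ξ σ δ τ ε (c j) := by
  by_cases h : j = a ∨ j = b ∨ j = d
  · rcases h with rfl | rfl | rfl <;> constructor <;>
      simp only [perm_c, Equiv.swap_apply_left, Equiv.swap_apply_right,
        Equiv.swap_apply_of_ne_of_ne hab had, Equiv.swap_apply_of_ne_of_ne had.symm hbd.symm,
        twistedDerivation_c_left, twistedDerivation_c_of_ne ξ hab hab.symm,
        twistedDerivation_c_of_ne ξ hbd hbd.symm, twistedDerivation_c_of_ne ξ hab had.symm,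
        twistedDerivation_c_of_ne ξ hbd hab, map_smul, map_sub, map_zero] <;> module
  · simp only [not_or] at h
    constructor <;>
      simp [h, Equiv.swap_apply_of_ne_of_ne, twistedDerivation_c_of_ne]

theorem braidCompat_x (j : I) : BraidCompat ξ σ δ τ ε (x j) := by
  by_cases h : j = a ∨ j = b ∨ j = d
  · rcases h with rfl | rfl | rfl <;> constructor <;>
      simp only [perm_c, perm_x, Equiv.swap_apply_left, Equiv.swap_apply_right,
        Equiv.swap_apply_of_ne_of_ne hab had, Equiv.swap_apply_of_ne_of_ne had.symm hbd.symm,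
        twistedDerivation_c_left, twistedDerivation_c_of_ne ξ hab hab.symm,
        twistedDerivation_c_of_ne ξ hbd hbd.symm, twistedDerivation_c_of_ne ξ hab had.symm,
        twistedDerivation_c_of_ne ξ hbd hab, twistedDerivation_x_left, twistedDerivation_x_right,
        twistedDerivation_x_of_ne ξ hbd hab had,
        twistedDerivation_x_of_ne ξ hab had.symm hbd.symm, twistedDerivation_mul,
        map_smul, map_add, map_sub, map_mul, map_zero, map_neg,
        smul_mul_assoc, mul_smul_comm, sub_mul, mul_sub, mul_add, one_mul, mul_zero, zero_mul,
        mul_assoc, c_mul_self_assoc, c_anticomm_assoc hab.symm, c_anticomm_assoc hbd.symm,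
        c_anticomm_assoc had.symm, mul_neg, neg_neg] <;> module
  · simp only [not_or] at h
    constructor <;>
      simp [h, Equiv.swap_apply_of_ne_of_ne, twistedDerivation_x_of_ne]

end braid

end LaurentClifford

/-! ### Hecke–Clifford pairs -/

namespace LaurentClifford

variable {R : Type*} [CommRing R] {I : Type*}

local notation "L" => LaurentClifford R I

theorem c_mul_x (i : I) : (c i : L) * x i = xInv i * c i := by
  rw [xInv, mul_assoc _ (c i), c_mul_self, mul_one]

theorem c_mul_xInv (i : I) : (c i : L) * xInv i = x i * c i := by
  rw [x_mul_c_self]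

theorem x_mul_xInv (i : I) : (x i : L) * xInv i = 1 := by
  calc (x i : L) * xInv i
    _ = c i * (xInv i * x i) * c i := by simp only [xInv, mul_assoc, c_mul_self_assoc]
    _ = 1 := by rw [xInv_mul_x, mul_one, c_mul_self]

theorem xInv_c_comm {i j : I} (h : i ≠ j) : (xInv j : L) * c i = c i * xInv j := by
  simpa using xInv_c_comm_assoc (R := R) h 1

theorem xInv_comm (i j : I) : (xInv i : L) * xInv j = xInv j * xInv i := by
  rcases eq_or_ne i j with rfl | h
  · rfl
  · calc (xInv i : L) * xInv j
      _ = c i * (x i * (xInv j * c i)) := by rw [xInv_c_comm h, xInv]; simp only [mul_assoc]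
      _ = c i * (xInv j * (x i * c i)) := by
        rw [← mul_assoc (x i), ← xInv_x_comm h.symm, mul_assoc]
      _ = xInv j * xInv i := by rw [← xInv_c_comm_assoc h, xInv.eq_def i, mul_assoc (c i)]

end LaurentClifford

theorem lo_ne_hi {n : ℕ} (i : Fin (n - 1)) : lo i ≠ hi i := by
  simp [lo, hi, Fin.ext_iff]

theorem ne_of_far {n : ℕ} {i j : Fin (n - 1)} (hij : (i : ℕ) + 1 < j) :
    lo i ≠ lo j ∧ lo i ≠ hi j ∧ hi i ≠ lo j ∧ hi i ≠ hi j := by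
  simp only [lo, hi, ne_eq, Fin.ext_iff]
  omega

section rankOne

variable {R A : Type*} [CommRing R] [Ring A] [Algebra R A] {ξ : R} {t c d : A}

theorem hecke_mul_left_cancel (hq : t * t = ξ • t + 1) {a b : A} (h : t * a = t * b) : a = b := by
  have inv : ∀ z, t * (t * z) - ξ • (t * z) = z := fun z => by
    rw [← mul_assoc, hq, add_mul, one_mul, smul_mul_assoc, add_sub_cancel_left]
  rw [← inv a, h, inv]

theorem clifford_mul_hecke (hq : t * t = ξ • t + 1) (htc : t * c = d * t) :
    c * t = t * d + ξ • (c - d) := by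
  apply hecke_mul_left_cancel hq
  calc t * (c * t)
    _ = ξ • (t * c) + d := by rw [← mul_assoc, htc, mul_assoc, hq, mul_add, mul_one, mul_smul_comm]
    _ = t * t * d + ξ • (t * c - t * d) := by
      rw [hq, add_mul, one_mul, smul_mul_assoc]; module
    _ = t * (t * d + ξ • (c - d)) := by rw [mul_add, mul_smul_comm, mul_sub, mul_assoc]

theorem clifford_mul_clifford_mul_hecke (hq : t * t = ξ • t + 1) (hc : c * c = 1)
    (hdc : d * c = -(c * d)) (htc : t * c = d * t) :
    c * d * t = -(t * (c * d)) + ξ • (1 + c * d) := by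
  rw [mul_assoc, ← htc, ← mul_assoc, clifford_mul_hecke hq htc, add_mul, mul_assoc, hdc,
    smul_mul_assoc, sub_mul, hc, hdc, mul_neg, sub_neg_eq_add]

variable {x y : A} (hq : t * t = ξ • t + 1) (hc : c * c = 1) (hd : d * d = 1)
  (hdc : d * c = -(c * d)) (htc : t * c = d * t)
include hq hc hd hdc htc

theorem hecke_add_clifford_mul_inv :
    (t + ξ • (c * d)) * (t + ξ • (c * d - 1)) = 1 ∧
      (t + ξ • (c * d - 1)) * (t + ξ • (c * d)) = 1 := by
  have hcdt := clifford_mul_clifford_mul_hecke hq hc hdc htc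
  have hcdcd : c * d * (c * d) = -1 := by
    rw [mul_assoc, ← mul_assoc d, hdc, neg_mul, mul_assoc, hd, mul_one, mul_neg, hc]
  constructor <;>
    simp only [add_mul, mul_add, sub_mul, mul_sub, smul_mul_assoc, mul_smul_comm, mul_one, one_mul,
      hq, hcdt, hcdcd] <;>
    module

/-- The cross relation is a commutation rule because `T + ξ C C'` is invertible. -/
theorem cross_iff_mul_hecke :
    (t + ξ • (c * d)) * x * t = y ↔ x * t = t * y + ξ • ((c * d - 1) * y) := by
  obtain ⟨h₁, h₂⟩ := hecke_add_clifford_mul_inv hq hc hd hdc htc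
  have hy : (t + ξ • (c * d - 1)) * y = t * y + ξ • ((c * d - 1) * y) := by
    rw [add_mul, smul_mul_assoc]
  rw [mul_assoc, ← hy]
  constructor
  · rintro rfl
    rw [← mul_assoc, h₂, one_mul]
  · intro h
    rw [h, ← mul_assoc, h₁, one_mul]

omit hc hd hdc htc in
theorem mul_hecke_of_cross (h : (t + ξ • (c * d)) * x * t = y) :
    y * t = t * x + ξ • (c * d * x + y) := by
  calc y * t
    _ = (t + ξ • (c * d)) * x * (t * t) := by rw [← h, mul_assoc _ t t]
    _ = ξ • y + (t + ξ • (c * d)) * x := by rw [hq, mul_add, mul_one, mul_smul_comm, h]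
    _ = t * x + ξ • (c * d * x + y) := by rw [add_mul, smul_mul_assoc]; module

end rankOne

/-- A family satisfying the defining relations of the finite Hecke algebra of type `A_{n-1}`, with
quadratic relation `t² = ξ t + 1`. -/
structure IsHeckeFamily {R A : Type*} [CommRing R] [Ring A] [Algebra R A] (ξ : R) {n : ℕ}
    (t : Fin (n - 1) → A) : Prop where
  quad : ∀ i, t i * t i = ξ • t i + 1
  braid : ∀ i j : Fin (n - 1), (j : ℕ) = i + 1 → t i * t j * t i = t j * t i * t j
  far : ∀ i j : Fin (n - 1), (i : ℕ) + 1 < j → t i * t j = t j * t i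

/-- The automorphism of the Laurent–Clifford algebra induced by the `i`-th basic transposition. -/
noncomputable abbrev nodePerm {R : Type*} [CommRing R] {n : ℕ} (i : Fin (n - 1)) :
    LaurentClifford R (Fin n) →ₐ[R] LaurentClifford R (Fin n) :=
  LaurentClifford.perm (Equiv.swap (lo i) (hi i))

/-- The skew derivation attached to the `i`-th Hecke generator. -/
noncomputable abbrev nodeDerivation {R : Type*} [CommRing R] (ξ : R) {n : ℕ} (i : Fin (n - 1)) :
    LaurentClifford R (Fin n) →ₗ[R] LaurentClifford R (Fin n) :=
  LaurentClifford.twistedDerivation ξ (lo_ne_hi i)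

/-- A homomorphism from the Laurent–Clifford algebra and a Hecke family which together define a
homomorphism from the affine Hecke–Clifford superalgebra (see `IsHeckeCliffordPair.lift`). -/
structure IsHeckeCliffordPair {R A : Type*} [CommRing R] [Ring A] [Algebra R A] (ξ : R) {n : ℕ}
    (π : LaurentClifford R (Fin n) →ₐ[R] A) (t : Fin (n - 1) → A) : Prop
    extends IsHeckeFamily ξ t where
  move : ∀ i r, π r * t i = t i * π (nodePerm i r) + π (nodeDerivation ξ i r)

namespace IsHeckeCliffordPair

open LaurentClifford

section

variable {R A B : Type*} [CommRing R] [Ring A] [Algebra R A] [Ring B] [Algebra R B] {ξ : R} {n : ℕ}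
  {π : LaurentClifford R (Fin n) →ₐ[R] A} {t : Fin (n - 1) → A}

theorem map (h : IsHeckeCliffordPair ξ π t) (φ : A →ₐ[R] B) :
    IsHeckeCliffordPair ξ (φ.comp π) (fun i => φ (t i)) where
  quad i := by rw [← map_mul, h.quad, map_add, map_smul, map_one]
  braid i j hij := by simp only [← map_mul, h.braid i j hij]
  far i j hij := by simp only [← map_mul, h.far i j hij]
  move i r := by simp only [AlgHom.comp_apply, ← map_mul, ← map_add, h.move i r]

variable (h : IsHeckeCliffordPair ξ π t) (i : Fin (n - 1))
include h

theorem mul_c_lo : t i * π (c (lo i)) = π (c (hi i)) * t i := by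
  simp [h.move, twistedDerivation_c_of_ne ξ (lo_ne_hi i) (lo_ne_hi i).symm]

theorem mul_c_of_ne {j : Fin n} (hlo : j ≠ lo i) (hhi : j ≠ hi i) :
    t i * π (c j) = π (c j) * t i := by
  simp [h.move, Equiv.swap_apply_of_ne_of_ne hlo hhi, twistedDerivation_c_of_ne ξ _ hlo]

theorem mul_x_of_ne {j : Fin n} (hlo : j ≠ lo i) (hhi : j ≠ hi i) :
    t i * π (x j) = π (x j) * t i := by
  simp [h.move, Equiv.swap_apply_of_ne_of_ne hlo hhi, twistedDerivation_x_of_ne ξ _ hlo hhi]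

theorem mul_xInv_of_ne {j : Fin n} (hlo : j ≠ lo i) (hhi : j ≠ hi i) :
    t i * π (xInv j) = π (xInv j) * t i := by
  simp only [xInv, map_mul]
  rw [← mul_assoc, ← mul_assoc, h.mul_c_of_ne i hlo hhi, mul_assoc (π (c j)),
    h.mul_x_of_ne i hlo hhi, mul_assoc, mul_assoc, h.mul_c_of_ne i hlo hhi]
  simp only [mul_assoc]

theorem cross :
    (t i + ξ • (π (c (lo i)) * π (c (hi i)))) * π (x (lo i)) * t i = π (x (hi i)) := by
  refine (cross_iff_mul_hecke (h.quad i) ?_ ?_ ?_ (h.mul_c_lo i)).mpr ?_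
  · rw [← map_mul, c_mul_self, map_one]
  · rw [← map_mul, c_mul_self, map_one]
  · rw [← map_mul, c_anticomm (lo_ne_hi i).symm, map_neg, map_mul]
  · simpa [twistedDerivation_x_left] using h.move i (x (lo i))

end

section lift

variable {F} {A : Type*} [Ring A] [Algebra F A] {q : F} {n : ℕ}
  {π : LaurentClifford F (Fin n) →ₐ[F] A} {t : Fin (n - 1) → A}

/-- The homomorphism from `H_n` determined by a Hecke–Clifford pair. -/
noncomputable def lift (h : IsHeckeCliffordPair (q - q⁻¹) π t) : H F q n →ₐ[F] A :=
  RingQuot.liftAlgHom F (s := Rel F q n) ⟨FreeAlgebra.lift F fun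
    | .X i => π (x i)
    | .Xinv i => π (xInv i)
    | .C i => π (c i)
    | .T i => t i, by
    have rel {p r : LaurentClifford F (Fin n)} (hpr : p = r) : π p = π r := congrArg π hpr
    intro a b hr
    induction hr with
    | XXinv i => simpa [fx, fxinv] using rel (x_mul_xInv i)
    | XinvX i => simpa [fx, fxinv] using rel (xInv_mul_x i)
    | XX i j => simpa [fx] using rel (x_comm i j)
    | XiXi i j => simpa [fxinv] using rel (xInv_comm i j)
    | XXi i j hij => simpa [fx, fxinv] using rel (xInv_x_comm hij.symm).symm
    | CC i => simpa [fc] using rel (c_mul_self i)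
    | Canti i j hij => simpa [fc] using rel (c_anticomm hij)
    | CX i => simpa [fc, fx, fxinv] using rel (c_mul_x i)
    | CXi i => simpa [fc, fx, fxinv] using rel (c_mul_xInv i)
    | CXo i j hij => simpa [fc, fx] using rel (x_c_comm hij).symm
    | CXio i j hij => simpa [fc, fxinv] using rel (xInv_c_comm hij).symm
    | Tquad i => simpa [ft] using h.quad i
    | Tbraid i j hij => simpa [ft] using h.braid i j hij
    | TTfar i j hij => simpa [ft] using h.far i j hij
    | TC i => simpa [ft, fc] using h.mul_c_lo i
    | TCo i j h1 h2 => simpa [ft, fc] using h.mul_c_of_ne i h1 h2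
    | TXo i j h1 h2 => simpa [ft, fx] using h.mul_x_of_ne i h1 h2
    | TXio i j h1 h2 => simpa [ft, fxinv] using h.mul_xInv_of_ne i h1 h2
    | cross i => simpa [ft, fc, fx] using h.cross i⟩

variable (h : IsHeckeCliffordPair (q - q⁻¹) π t)

@[simp]
theorem lift_X (i : Fin n) : h.lift (X F q i) = π (x i) :=
  (RingQuot.liftAlgHom_mkAlgHom_apply F _ _ _).trans (by simp [fx])

@[simp]
theorem lift_C (i : Fin n) : h.lift (C F q i) = π (c i) :=
  (RingQuot.liftAlgHom_mkAlgHom_apply F _ _ _).trans (by simp [fc])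

@[simp]
theorem lift_T (i : Fin (n - 1)) : h.lift (T F q i) = t i :=
  (RingQuot.liftAlgHom_mkAlgHom_apply F _ _ _).trans (by simp [ft])

end lift

end IsHeckeCliffordPair

/-! ### The affine Hecke–Clifford superalgebra -/

namespace H

variable {F} (q : F) {n : ℕ}

theorem mk_eq_mk_of_rel {a b : FA F n} (h : Rel F q n a b) :
    RingQuot.mkAlgHom F (Rel F q n) a = RingQuot.mkAlgHom F (Rel F q n) b :=
  RingQuot.mkAlgHom_rel F h

theorem C_mul_self (i : Fin n) : C F q i * C F q i = 1 := by
  simpa [C] using mk_eq_mk_of_rel q (Rel.CC i)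

theorem C_anticomm {i j : Fin n} (h : i ≠ j) : C F q i * C F q j = -(C F q j * C F q i) := by
  simpa only [C, map_mul, map_neg] using mk_eq_mk_of_rel q (Rel.Canti i j h)

theorem C_mul_X (i : Fin n) : C F q i * X F q i = Xinv F q i * C F q i := by
  simpa [C, X, Xinv] using mk_eq_mk_of_rel q (Rel.CX i)

theorem Xinv_eq (i : Fin n) : Xinv F q i = C F q i * X F q i * C F q i := by
  rw [C_mul_X, mul_assoc, C_mul_self, mul_one]

theorem C_mul_X_sq (i : Fin n) : C F q i * X F q i * (C F q i * X F q i) = 1 := by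
  have inv : Xinv F q i * X F q i = 1 := by
    simpa [X, Xinv] using mk_eq_mk_of_rel q (Rel.XinvX i)
  rw [← mul_assoc, ← Xinv_eq, inv]

theorem T_quad (i : Fin (n - 1)) : T F q i * T F q i = (q - q⁻¹) • T F q i + 1 := by
  simpa only [T, map_mul, map_add, map_smul, map_one] using mk_eq_mk_of_rel q (Rel.Tquad i)

theorem T_mul_C_lo (i : Fin (n - 1)) : T F q i * C F q (lo i) = C F q (hi i) * T F q i := by
  simpa [T, C] using mk_eq_mk_of_rel q (Rel.TC i)

theorem T_mul_C_of_ne {i : Fin (n - 1)} {j : Fin n} (hlo : j ≠ lo i) (hhi : j ≠ hi i) :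
    T F q i * C F q j = C F q j * T F q i := by
  simpa [T, C] using mk_eq_mk_of_rel q (Rel.TCo i j hlo hhi)

theorem T_mul_X_of_ne {i : Fin (n - 1)} {j : Fin n} (hlo : j ≠ lo i) (hhi : j ≠ hi i) :
    T F q i * X F q j = X F q j * T F q i := by
  simpa [T, X] using mk_eq_mk_of_rel q (Rel.TXo i j hlo hhi)

theorem cross (i : Fin (n - 1)) :
    (T F q i + (q - q⁻¹) • (C F q (lo i) * C F q (hi i))) * X F q (lo i) * T F q i =
      X F q (hi i) := by
  simpa only [T, C, X, map_mul, map_add, map_smul] using mk_eq_mk_of_rel q (Rel.cross i)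

theorem X_lo_mul_T (i : Fin (n - 1)) :
    X F q (lo i) * T F q i = T F q i * X F q (hi i) +
      (q - q⁻¹) • ((C F q (lo i) * C F q (hi i) - 1) * X F q (hi i)) :=
  (cross_iff_mul_hecke (T_quad q i) (C_mul_self q _) (C_mul_self q _)
    (C_anticomm q (lo_ne_hi i).symm) (T_mul_C_lo q i)).mp (cross q i)

/-- The canonical homomorphism from the Laurent–Clifford algebra to `H_n`. -/
noncomputable def ofLaurentClifford : LaurentClifford F (Fin n) →ₐ[F] H F q n :=
  LaurentClifford.lift (X F q) (C F q) (C_mul_self q) (fun _ _ h => C_anticomm q h)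
    (fun i j => by simpa [X] using mk_eq_mk_of_rel q (Rel.XX i j))
    (fun i j h => by simpa [C, X] using (mk_eq_mk_of_rel q (Rel.CXo i j h)).symm) (C_mul_X_sq q)

@[simp]
theorem ofLaurentClifford_x (i : Fin n) : ofLaurentClifford q (LaurentClifford.x i) = X F q i :=
  LaurentClifford.lift_x ..

@[simp]
theorem ofLaurentClifford_c (i : Fin n) : ofLaurentClifford q (LaurentClifford.c i) = C F q i :=
  LaurentClifford.lift_c ..

open LaurentClifford in
theorem ofLaurentClifford_mul_T (i : Fin (n - 1)) (r : LaurentClifford F (Fin n)) :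
    ofLaurentClifford q r * T F q i = T F q i * ofLaurentClifford q (nodePerm i r) +
      ofLaurentClifford q (nodeDerivation (q - q⁻¹) i r) := by
  induction r using LaurentClifford.induction with
  | algebraMap r => simp [twistedDerivation_algebraMap, Algebra.commutes]
  | x j =>
    rcases eq_or_ne j (lo i) with rfl | hlo
    · simpa [twistedDerivation_x_left] using X_lo_mul_T q i
    rcases eq_or_ne j (hi i) with rfl | hhi
    · simpa [twistedDerivation_x_right] using mul_hecke_of_cross (T_quad q i) (cross q i)
    · simpa [Equiv.swap_apply_of_ne_of_ne hlo hhi, twistedDerivation_x_of_ne _ _ hlo hhi]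
        using (T_mul_X_of_ne q hlo hhi).symm
  | c j =>
    rcases eq_or_ne j (lo i) with rfl | hlo
    · simpa [twistedDerivation_c_left] using clifford_mul_hecke (T_quad q i) (T_mul_C_lo q i)
    rcases eq_or_ne j (hi i) with rfl | hhi
    · simpa [twistedDerivation_c_of_ne _ _ hlo] using (T_mul_C_lo q i).symm
    · simpa [Equiv.swap_apply_of_ne_of_ne hlo hhi, twistedDerivation_c_of_ne _ _ hlo]
        using (T_mul_C_of_ne q hlo hhi).symm
  | mul p r hp hr =>
    rw [map_mul, mul_assoc, hr, mul_add, ← mul_assoc, hp, twistedDerivation_mul, map_mul]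
    simp only [map_mul, map_add, add_mul, mul_assoc, add_assoc]
  | add p r hp hr =>
    simp only [map_add, add_mul, mul_add, hp, hr]
    abel

theorem isHeckeCliffordPair :
    IsHeckeCliffordPair (q - q⁻¹) (ofLaurentClifford q (n := n)) (T F q) where
  quad := T_quad q
  braid i j h := by simpa [T] using mk_eq_mk_of_rel q (Rel.Tbraid i j h)
  far i j h := by simpa [T] using mk_eq_mk_of_rel q (Rel.TTfar i j h)
  move := ofLaurentClifford_mul_T q

end H

/-! ### Modules coinduced from the finite Hecke algebra -/

namespace LaurentClifford

section commutation

variable {R M A : Type*} [CommRing R] [Ring M] [Algebra R M] [Ring A] [Algebra R A] {ξ : R}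
  {σ τ : M →ₐ[R] M} {δ ε : M →ₗ[R] M} {π : M →ₐ[R] A} {t u : A}

theorem mul_mul_of_move (ht : ∀ g, π g * t = t * π (σ g) + π (δ g)) (g : M) (z : A) :
    π g * (t * z) = t * (π (σ g) * z) + π (δ g) * z := by
  rw [← mul_assoc, ht, add_mul, mul_assoc]

theorem QuadCompat.mul_quad (ht : ∀ g, π g * t = t * π (σ g) + π (δ g)) {g : M}
    (h : QuadCompat ξ σ δ g) :
    π g * (t * t - (ξ • t + 1)) = (t * t - (ξ • t + 1)) * π g := by
  have skew := congrArg (fun r => t * π r) h.skew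
  have square := congrArg π h.square
  simp only [map_add, map_smul, map_sub, mul_add, mul_smul_comm, mul_sub] at skew square
  simp only [mul_sub, sub_mul, mul_add, add_mul, mul_one, one_mul, smul_mul_assoc, mul_smul_comm,
    mul_assoc, ht, mul_mul_of_move ht, h.involutive]
  linear_combination (norm := module) skew + square

theorem FarCompat.mul_far (ht : ∀ g, π g * t = t * π (σ g) + π (δ g))
    (hu : ∀ g, π g * u = u * π (τ g) + π (ε g)) {g : M} (h : FarCompat σ δ τ ε g) :
    π g * (t * u - u * t) = (t * u - u * t) * π (σ (τ g)) := by
  simp only [mul_sub, sub_mul, mul_add, mul_assoc, ht, hu, mul_mul_of_move ht, mul_mul_of_move hu,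
    h.perm_perm, h.der_perm, h.perm_der, h.der_der]
  module

theorem BraidCompat.mul_braid (ht : ∀ g, π g * t = t * π (σ g) + π (δ g))
    (hu : ∀ g, π g * u = u * π (τ g) + π (ε g)) (htt : t * t = ξ • t + 1) (huu : u * u = ξ • u + 1)
    {g : M} (h : BraidCompat ξ σ δ τ ε g) :
    π g * (t * u * t - u * t * u) = (t * u * t - u * t * u) * π (τ (σ (τ g))) := by
  have quad {v : A} (hv : v * v = ξ • v + 1) (z : A) : v * (v * z) = ξ • (v * z) + z := by
    rw [← mul_assoc, hv, add_mul, one_mul, smul_mul_assoc]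
  have left := congrArg (fun r => t * π r) h.left
  have right := congrArg (fun r => u * π r) h.right
  have const := congrArg π h.der_der_der
  simp only [map_add, map_smul, mul_add, mul_smul_comm] at left right const
  simp only [mul_sub, sub_mul, mul_add, mul_assoc, ht, hu, mul_mul_of_move ht, mul_mul_of_move hu,
    quad htt, quad huu, h.perm_perm_perm, h.der_perm_perm, h.perm_perm_der]
  linear_combination (norm := module) left - right + const

end commutation

end LaurentClifford

namespace Coinduced

open LaurentClifford

variable {R V : Type*} [CommRing R] [AddCommGroup V] [Module R V] {n : ℕ}

/-- The action of the Laurent–Clifford algebra by right translation on the coinduced module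
`Hom(LaurentClifford R (Fin n), V)`. -/
noncomputable def rightMul :
    LaurentClifford R (Fin n) →ₐ[R] Module.End R (LaurentClifford R (Fin n) →ₗ[R] V) :=
  AlgHom.ofLinearMap
    { toFun := fun r => LinearMap.lcomp R V (LinearMap.mulRight R r)
      map_add' := fun r r' => by ext f p; simp [mul_add]
      map_smul' := fun a r => by ext f p; simp }
    (by ext f p; simp) (fun r r' => by ext f p; simp [mul_assoc])

@[simp]
theorem rightMul_apply (r p : LaurentClifford R (Fin n)) (f : LaurentClifford R (Fin n) →ₗ[R] V) :
    rightMul r f p = f (p * r) := rfl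

variable (ξ : R) (t : Fin (n - 1) → Module.End R V)

/-- The action of the Hecke generators on the coinduced module. -/
noncomputable def hecke (i : Fin (n - 1)) :
    Module.End R (LaurentClifford R (Fin n) →ₗ[R] V) where
  toFun f := t i ∘ₗ f ∘ₗ (nodePerm i).toLinearMap + f ∘ₗ nodeDerivation ξ i
  map_add' f g := by ext p; simp; abel
  map_smul' a f := by ext p; simp

theorem hecke_apply (i : Fin (n - 1)) (f : LaurentClifford R (Fin n) →ₗ[R] V)
    (p : LaurentClifford R (Fin n)) :
    hecke ξ t i f p = t i (f (nodePerm i p)) + f (nodeDerivation ξ i p) := rfl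

@[simp]
theorem hecke_apply_one (i : Fin (n - 1)) (f : LaurentClifford R (Fin n) →ₗ[R] V) :
    hecke ξ t i f 1 = t i (f 1) := by
  simp [hecke_apply, twistedDerivation_one]

theorem rightMul_mul_hecke (i : Fin (n - 1)) (r : LaurentClifford R (Fin n)) :
    rightMul r * hecke ξ t i =
      hecke ξ t i * rightMul (nodePerm i r) + rightMul (nodeDerivation ξ i r) := by
  ext f p
  simp [hecke_apply, twistedDerivation_mul, add_assoc]

theorem eq_zero_of_apply_one {D : Module.End R (LaurentClifford R (Fin n) →ₗ[R] V)}
    (h1 : ∀ f, D f 1 = 0) (hx : ∀ i, ∃ g, rightMul (x i) * D = D * rightMul g)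
    (hc : ∀ i, ∃ g, rightMul (c i) * D = D * rightMul g) : D = 0 := by
  have intertwines (r) : ∃ g, rightMul r * D = D * rightMul g := by
    induction r using LaurentClifford.induction with
    | algebraMap a => exact ⟨algebraMap R _ a, by simp [Algebra.commutes]⟩
    | x i => exact hx i
    | c i => exact hc i
    | mul a b ha hb =>
      obtain ⟨a', ha⟩ := ha
      obtain ⟨b', hb⟩ := hb
      exact ⟨a' * b', by rw [map_mul, map_mul, mul_assoc, hb, ← mul_assoc, ha, mul_assoc]⟩
    | add a b ha hb =>
      obtain ⟨a', ha⟩ := ha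
      obtain ⟨b', hb⟩ := hb
      exact ⟨a' + b', by rw [map_add, map_add, add_mul, mul_add, ha, hb]⟩
  ext f r
  obtain ⟨g, hg⟩ := intertwines r
  calc D f r
    _ = (rightMul r * D : Module.End R _) f 1 := by simp
    _ = 0 := by rw [hg, Module.End.mul_apply, h1]

variable {ξ t}

theorem hecke_quad (ht : IsHeckeFamily ξ t) (i : Fin (n - 1)) :
    hecke ξ t i * hecke ξ t i = ξ • hecke ξ t i + 1 := by
  rw [← sub_eq_zero]
  refine eq_zero_of_apply_one (fun f => ?_)
    (fun j => ⟨_, QuadCompat.mul_quad (rightMul_mul_hecke ξ t i)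
      (quadCompat_x ξ (lo_ne_hi i) j)⟩)
    (fun j => ⟨_, QuadCompat.mul_quad (rightMul_mul_hecke ξ t i)
      (quadCompat_c ξ (lo_ne_hi i) j)⟩)
  have quad := LinearMap.congr_fun (ht.quad i) (f 1)
  rw [Module.End.mul_apply] at quad
  simp [quad]

theorem hecke_far (ht : IsHeckeFamily ξ t) (i j : Fin (n - 1)) (hij : (i : ℕ) + 1 < j) :
    hecke ξ t i * hecke ξ t j = hecke ξ t j * hecke ξ t i := by
  obtain ⟨ll, lh, hl, hh⟩ := ne_of_far hij
  rw [← sub_eq_zero]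
  refine eq_zero_of_apply_one (fun f => ?_)
    (fun k => ⟨_, FarCompat.mul_far (rightMul_mul_hecke ξ t i)
      (rightMul_mul_hecke ξ t j) (farCompat_x ξ _ _ ll lh hl hh k)⟩)
    (fun k => ⟨_, FarCompat.mul_far (rightMul_mul_hecke ξ t i)
      (rightMul_mul_hecke ξ t j) (farCompat_c ξ _ _ ll lh hl hh k)⟩)
  have far := LinearMap.congr_fun (ht.far i j hij) (f 1)
  rw [Module.End.mul_apply, Module.End.mul_apply] at far
  simp [far]

theorem hecke_braid (ht : IsHeckeFamily ξ t) (i j : Fin (n - 1)) (hij : (j : ℕ) = i + 1) :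
    hecke ξ t i * hecke ξ t j * hecke ξ t i = hecke ξ t j * hecke ξ t i * hecke ξ t j := by
  have lo_eq : lo j = hi i := by simp [lo, hi, hij]
  have hi_ne_hi : hi i ≠ hi j := by simp only [hi, ne_eq, Fin.ext_iff]; omega
  have lo_ne_hi' : lo i ≠ hi j := by simp only [lo, hi, ne_eq, Fin.ext_iff]; omega
  have move_j (r) : rightMul r * hecke ξ t j = hecke ξ t j *
      rightMul (perm (Equiv.swap (hi i) (hi j)) r) + rightMul (twistedDerivation ξ hi_ne_hi r) := by
    simpa only [nodePerm, nodeDerivation, lo_eq] using rightMul_mul_hecke ξ t j r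
  rw [← sub_eq_zero]
  refine eq_zero_of_apply_one (fun f => ?_)
    (fun k => ⟨_, BraidCompat.mul_braid (rightMul_mul_hecke ξ t i)
      move_j (hecke_quad ht i) (hecke_quad ht j) (braidCompat_x ξ _ _ lo_ne_hi' k)⟩)
    (fun k => ⟨_, BraidCompat.mul_braid (rightMul_mul_hecke ξ t i)
      move_j (hecke_quad ht i) (hecke_quad ht j) (braidCompat_c ξ _ _ lo_ne_hi' k)⟩)
  have braid := LinearMap.congr_fun (ht.braid i j hij) (f 1)
  simp only [Module.End.mul_apply] at braid
  simp [braid]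

theorem isHeckeCliffordPair (ht : IsHeckeFamily ξ t) :
    IsHeckeCliffordPair ξ (rightMul (V := V)) (hecke ξ t) where
  quad := hecke_quad ht
  braid := hecke_braid ht
  far := hecke_far ht
  move := rightMul_mul_hecke ξ t

end Coinduced

/-! ### Shuffles -/

section nodes

variable {n : ℕ}

theorem s_lo (i : Fin (n - 1)) : s i (lo i) = hi i := Equiv.swap_apply_left ..

theorem s_hi (i : Fin (n - 1)) : s i (hi i) = lo i := Equiv.swap_apply_right ..

theorem s_of_ne {i : Fin (n - 1)} {p : Fin n} (hlo : p ≠ lo i) (hhi : p ≠ hi i) : s i p = p :=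
  Equiv.swap_apply_of_ne_of_ne hlo hhi

theorem s_s (i : Fin (n - 1)) (p : Fin n) : s i (s i p) = p := Equiv.swap_apply_self ..

theorem s_comm {i j : Fin (n - 1)} (hij : (i : ℕ) + 1 < j) (p : Fin n) :
    s i (s j p) = s j (s i p) := by
  obtain ⟨ll, lh, hl, hh⟩ := ne_of_far hij
  exact congrArg (fun σ : Equiv.Perm (Fin n) => σ p) (Equiv.Perm.disjoint_swap_swap
    (by simp [ll, lh, hl, hh, lo_ne_hi])).commute.eq

theorem hi_eq_lo {i j : Fin (n - 1)} (hij : (j : ℕ) = i + 1) : hi i = lo j := by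
  simp [lo, hi, hij]

theorem antitone_of_hi_le_lo {α : Type*} [Preorder α] {f : Fin n → α}
    (h : ∀ i : Fin (n - 1), f (hi i) ≤ f (lo i)) : Antitone f := by
  cases n with
  | zero => exact fun p => p.elim0
  | succ n => exact Fin.antitone_iff_succ_le.mpr h

end nodes

section countTrue

variable {n : ℕ} (S : Fin n → Bool)

/-- The number of positions `p < j` with `S p = true`. -/
def countTrue (j : ℕ) : ℕ := Nat.count (fun p => ∃ h : p < n, S ⟨p, h⟩ = true) j

theorem countTrue_mono : Monotone (countTrue S) := Nat.count_monotone _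

theorem countTrue_le (j : ℕ) : countTrue S j ≤ j := Nat.count_le _

theorem countTrue_le_add_sub {j l : ℕ} (h : j ≤ l) : countTrue S l ≤ countTrue S j + (l - j) := by
  obtain ⟨d, rfl⟩ := Nat.exists_eq_add_of_le h
  rw [countTrue, Nat.count_add, Nat.add_sub_cancel_left]
  exact Nat.add_le_add_left (Nat.count_le _) _

theorem countTrue_succ (p : Fin n) : countTrue S (p + 1) = countTrue S p + (S p).toNat := by
  cases h : S p <;> simp [countTrue, Nat.count_succ, h]

theorem countTrue_lo_succ (i : Fin (n - 1)) :
    countTrue S (i + 1) = countTrue S i + (S (lo i)).toNat := countTrue_succ S (lo i)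

theorem countTrue_hi_succ (i : Fin (n - 1)) :
    countTrue S (i + 2) = countTrue S i + (S (lo i)).toNat + (S (hi i)).toNat := by
  rw [← countTrue_lo_succ]
  exact countTrue_succ S (hi i)

variable {S} in
theorem countTrue_eq_self {j : ℕ} (hj : j ≤ n) (h : ∀ p : Fin n, (p : ℕ) < j → S p = true) :
    countTrue S j = j :=
  Nat.count_iff_forall.mpr fun p hp => ⟨hp.trans_le hj, h ⟨p, _⟩ hp⟩

variable {S} in
theorem countTrue_eq_of_le {a j : ℕ} (haj : a ≤ j)
    (h : ∀ p : Fin n, a ≤ (p : ℕ) → S p = false) : countTrue S j = countTrue S a := by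
  obtain ⟨d, rfl⟩ := Nat.exists_eq_add_of_le haj
  refine (Nat.count_add _ _ _).trans (Nat.add_eq_left.mpr (Nat.count_iff_forall_not.mpr ?_))
  rintro p - ⟨hp, hSp⟩
  simp [h ⟨a + p, hp⟩ (Nat.le_add_right a p)] at hSp

theorem countTrue_not {j : ℕ} (hj : j ≤ n) : countTrue (fun p => !S p) j = j - countTrue S j := by
  induction j with
  | zero => simp [countTrue]
  | succ j ih =>
    have := countTrue_le S j
    have succ := countTrue_succ S ⟨j, hj⟩
    have succ_not := countTrue_succ (fun p => !S p) ⟨j, hj⟩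
    have ih := ih (by omega)
    cases h : S ⟨j, hj⟩ <;> simp only [h, Bool.toNat_false, Bool.toNat_true, Bool.not_false,
      Bool.not_true] at succ succ_not <;> omega

theorem countTrue_decide_lt {m j : ℕ} (hj : j ≤ n) :
    countTrue (fun p : Fin n => decide ((p : ℕ) < m)) j = min j m := by
  rcases le_total j m with h | h
  · rw [countTrue_eq_self hj fun p hp => by simp; omega, min_eq_left h]
  · rw [countTrue_eq_of_le h fun p hp => by simpa using hp,
      countTrue_eq_self (h.trans hj) fun p hp => by simpa using hp, min_eq_right h]

variable (i : Fin (n - 1))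

theorem countTrue_comp_s_of_le {j : ℕ} (hj : j ≤ i) : countTrue (S ∘ s i) j = countTrue S j := by
  induction j with
  | zero => simp [countTrue]
  | succ j ih =>
    have hjn : j < n := by omega
    have fixed : s i ⟨j, hjn⟩ = ⟨j, hjn⟩ := s_of_ne
      (by simp only [lo, ne_eq, Fin.ext_iff]; omega) (by simp only [hi, ne_eq, Fin.ext_iff]; omega)
    have succ := countTrue_succ S ⟨j, hjn⟩
    have succ_comp := countTrue_succ (S ∘ s i) ⟨j, hjn⟩
    rw [Function.comp_apply, fixed] at succ_comp
    have ih := ih (by omega)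
    simp only at succ succ_comp
    omega

theorem countTrue_comp_s_succ :
    countTrue (S ∘ s i) (i + 1) = countTrue S i + (S (hi i)).toNat := by
  rw [countTrue_lo_succ, countTrue_comp_s_of_le S i le_rfl, Function.comp_apply, s_lo]

theorem countTrue_comp_s {j : ℕ} (hj : j ≠ i + 1) : countTrue (S ∘ s i) j = countTrue S j := by
  rcases Nat.lt_or_ge j (i + 1) with h | h
  · exact countTrue_comp_s_of_le S i (by omega)
  obtain ⟨d, rfl⟩ : ∃ d, j = i + 2 + d := ⟨j - (i + 2), by omega⟩
  refine (Nat.count_add _ _ _).trans (.trans ?_ (Nat.count_add _ _ _).symm)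
  congr 1
  · change countTrue _ _ = countTrue _ _
    rw [countTrue_hi_succ, countTrue_hi_succ, countTrue_comp_s_of_le S i le_rfl]
    simp only [Function.comp_apply, s_lo, s_hi]
    omega
  · congr 1
    funext p
    refine propext (exists_congr fun hp => ?_)
    rw [Function.comp_apply, s_of_ne]
    · simp only [lo, ne_eq, Fin.ext_iff]; omega
    · simp only [hi, ne_eq, Fin.ext_iff]; omega

end countTrue

/-- Shuffles of `m` positions of `Fin n`, marked `true`, with the remaining ones. They encode the
minimal left coset representatives of `S_m × S_{n-m}` in `S_n`. -/
abbrev Shuffle (n m : ℕ) : Type := {S : Fin n → Bool // countTrue S n = m}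

namespace Shuffle

variable {n m k : ℕ} (S : Shuffle n m)

section act

variable (i : Fin (n - 1))

/-- The shuffle obtained by exchanging two consecutive positions. -/
def act : Shuffle n m :=
  ⟨S.1 ∘ s i, by rw [countTrue_comp_s _ _ (by omega), S.2]⟩

@[simp]
theorem act_lo : (S.act i).1 (lo i) = S.1 (hi i) := by simp [act, s_lo]

@[simp]
theorem act_hi : (S.act i).1 (hi i) = S.1 (lo i) := by simp [act, s_hi]

variable {i} in
theorem act_of_ne {p : Fin n} (hlo : p ≠ lo i) (hhi : p ≠ hi i) : (S.act i).1 p = S.1 p := by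
  simp [act, s_of_ne hlo hhi]

variable {S i} in
theorem act_of_eq (h : S.1 (lo i) = S.1 (hi i)) : S.act i = S := by
  ext p
  rcases eq_or_ne p (lo i) with rfl | hlo
  · rw [act_lo, h]
  rcases eq_or_ne p (hi i) with rfl | hhi
  · rw [act_hi, h]
  · exact S.act_of_ne hlo hhi

@[simp]
theorem act_act : (S.act i).act i = S := by
  ext p
  simp [act, s_s]

theorem act_comm {i j : Fin (n - 1)} (hij : (i : ℕ) + 1 < j) :
    (S.act i).act j = (S.act j).act i := by
  ext p
  simp [act, s_comm hij]

end act

theorem marked_le (S : Shuffle n m) : m ≤ n := S.2 ▸ countTrue_le _ _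

/-- The Coxeter length of the coset representative attached to a shuffle. -/
def length : ℕ := ∑ j ∈ Finset.range n, (j - countTrue S.1 j)

variable {S} in
theorem length_act_of_asc {i : Fin (n - 1)} (hlo : S.1 (lo i) = true) (hhi : S.1 (hi i) = false) :
    (S.act i).length = S.length + 1 := by
  have mem : (i : ℕ) + 1 ∈ Finset.range n := by rw [Finset.mem_range]; omega
  have off : ∀ j ∈ (Finset.range n).erase (i + 1),
      j - countTrue (S.act i).1 j = j - countTrue S.1 j := fun j hj => by
    rw [act, countTrue_comp_s _ _ (Finset.ne_of_mem_erase hj)]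
  unfold length
  rw [← Finset.add_sum_erase _ _ mem, ← Finset.add_sum_erase _ _ mem, Finset.sum_congr rfl off,
    act, countTrue_comp_s_succ, countTrue_lo_succ, hlo, hhi, Bool.toNat_false, Bool.toNat_true]
  have := countTrue_le S.1 i
  omega

variable {S} in
theorem length_act_of_desc {i : Fin (n - 1)} (hlo : S.1 (lo i) = false) (hhi : S.1 (hi i) = true) :
    (S.act i).length + 1 = S.length := by
  rw [← length_act_of_asc (S := S.act i) (i := i) (by simpa using hhi) (by simpa using hlo),
    act_act]

/-! ### Positions under a shuffle -/

/-- The image of `p` under the permutation moving the marked positions, in order, to the front. -/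
def position (p : Fin n) : ℕ :=
  if S.1 p then countTrue S.1 p else m + (p - countTrue S.1 p)

section position

variable {S} {p r : Fin n}

theorem position_of_true (h : S.1 p = true) : S.position p = countTrue S.1 p := by
  simp [position, h]

theorem position_of_false (h : S.1 p = false) : S.position p = m + (p - countTrue S.1 p) := by
  simp [position, h]

theorem position_lt_of_true (h : S.1 p = true) : S.position p < m := by
  have succ := countTrue_succ S.1 p
  have mono := countTrue_mono S.1 (show (p : ℕ) + 1 ≤ n from p.isLt)
  rw [S.2, succ, h] at mono
  rwa [position_of_true h]

theorem le_position_of_false (h : S.1 p = false) : m ≤ S.position p := by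
  rw [position_of_false h]
  exact Nat.le_add_right _ _

theorem position_lt_position (hpr : p < r) (h : S.1 p = S.1 r) : S.position p < S.position r := by
  have succ := countTrue_succ S.1 p
  have mono := countTrue_mono S.1 (show (p : ℕ) + 1 ≤ r from hpr)
  have grow := countTrue_le_add_sub S.1 (show (p : ℕ) + 1 ≤ r from hpr)
  have := countTrue_le S.1 p
  cases hp : S.1 p with
  | true =>
    rw [position_of_true hp, position_of_true (h ▸ hp)]
    rw [hp, Bool.toNat_true] at succ
    omega
  | false =>
    rw [position_of_false hp, position_of_false (h ▸ hp)]
    rw [hp, Bool.toNat_false] at succ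
    omega

variable (S p) in
theorem position_lt : S.position p < n := by
  cases hp : S.1 p with
  | true => exact (position_lt_of_true hp).trans_le S.marked_le
  | false =>
    have succ := countTrue_succ S.1 p
    have grow := countTrue_le_add_sub S.1 (show (p : ℕ) + 1 ≤ n from p.isLt)
    have := countTrue_le S.1 p
    have := S.marked_le
    rw [S.2, succ, hp, Bool.toNat_false] at grow
    rw [position_of_false hp]
    omega

variable (S p) in
/-- `Shuffle.position`, as an element of `Fin n`. -/
def positionFin : Fin n := ⟨S.position p, S.position_lt p⟩

variable {i : Fin (n - 1)}

theorem position_hi (h : S.1 (lo i) = S.1 (hi i)) : S.position (hi i) = S.position (lo i) + 1 := by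
  have succ := countTrue_lo_succ S.1 i
  have := countTrue_le S.1 i
  cases hlo : S.1 (lo i) with
  | true =>
    rw [position_of_true hlo, position_of_true (h ▸ hlo)]
    rwa [hlo] at succ
  | false =>
    rw [position_of_false hlo, position_of_false (h ▸ hlo)]
    rw [hlo, Bool.toNat_false] at succ
    simp only [lo, hi] at succ ⊢
    omega

theorem position_lo_succ_lt (h : S.1 (lo i) = S.1 (hi i)) : S.position (lo i) + 1 < n :=
  position_hi h ▸ S.position_lt (hi i)

theorem position_lo_succ_ne (h : S.1 (lo i) = S.1 (hi i)) : S.position (lo i) + 1 ≠ m := by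
  cases hlo : S.1 (lo i) with
  | true => exact position_hi h ▸ (position_lt_of_true (h ▸ hlo)).ne
  | false =>
    have := le_position_of_false hlo
    omega

theorem position_far {j : Fin (n - 1)} (hij : (i : ℕ) + 1 < j) (hi' : S.1 (lo i) = S.1 (hi i))
    (hj : S.1 (lo j) = S.1 (hi j)) :
    S.position (lo i) + 1 < S.position (lo j) ∨ S.position (lo j) + 1 < S.position (lo i) := by
  rw [← position_hi hi', ← position_hi hj]
  by_cases hblock : S.1 (hi i) = S.1 (lo j)
  · exact .inl (position_lt_position hij hblock)
  cases hhi : S.1 (hi i) with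
  | true =>
    have hlo : S.1 (lo j) = false := by simpa [hhi] using hblock
    exact .inl ((position_lt_of_true hhi).trans_le (le_position_of_false hlo))
  | false =>
    have hlo : S.1 (lo j) = true := by simpa [hhi] using hblock
    exact .inr ((position_lt_of_true (hj ▸ hlo)).trans_le (le_position_of_false (hi' ▸ hhi)))

theorem position_act (h : S.1 (lo i) ≠ S.1 (hi i)) (p : Fin n) :
    (S.act i).position p = S.position (s i p) := by
  have count_lo : countTrue (S.act i).1 i = countTrue S.1 i := countTrue_comp_s _ _ (by omega)
  have count_hi : countTrue (S.act i).1 (i + 1) = _ := countTrue_comp_s_succ _ _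
  have succ := countTrue_lo_succ S.1 i
  have := countTrue_le S.1 i
  have val_lo : ((lo i : Fin n) : ℕ) = i := rfl
  have val_hi : ((hi i : Fin n) : ℕ) = i + 1 := rfl
  rcases eq_or_ne p (lo i) with rfl | hlo
  · rw [s_lo]
    unfold position
    rw [act_lo, val_lo, val_hi, count_lo, succ]
    cases hl : S.1 (lo i) <;> cases hh : S.1 (hi i) <;> simp_all
  rcases eq_or_ne p (hi i) with rfl | hhi
  · rw [s_hi]
    unfold position
    rw [act_hi, val_lo, val_hi, count_hi]
    cases hl : S.1 (lo i) <;> cases hh : S.1 (hi i) <;> simp_all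
  · have count_p : countTrue (S.act i).1 p = countTrue S.1 p :=
      countTrue_comp_s _ _ fun hp => hhi (Fin.ext hp)
    rw [s_of_ne hlo hhi]
    unfold position
    rw [act_of_ne S hlo hhi, count_p]

theorem position_act_lo (h : S.1 (lo i) ≠ S.1 (hi i)) :
    (S.act i).position (lo i) = S.position (hi i) := by rw [position_act h, s_lo]

theorem position_act_hi (h : S.1 (lo i) ≠ S.1 (hi i)) :
    (S.act i).position (hi i) = S.position (lo i) := by rw [position_act h, s_hi]

theorem position_act_of_ne (h : S.1 (lo i) ≠ S.1 (hi i)) (hlo : p ≠ lo i) (hhi : p ≠ hi i) :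
    (S.act i).position p = S.position p := by rw [position_act h, s_of_ne hlo hhi]

theorem positionFin_act (h : S.1 (lo i) ≠ S.1 (hi i)) (p : Fin n) :
    (S.act i).positionFin p = S.positionFin (s i p) := Fin.ext (position_act h p)

end position

/-! ### The shortest and the longest shuffle -/

/-- The shortest shuffle. -/
def base (hm : m ≤ n) : Shuffle n m :=
  ⟨fun p => decide ((p : ℕ) < m), by rw [countTrue_decide_lt le_rfl, min_eq_right hm]⟩

theorem base_apply (hm : m ≤ n) (p : Fin n) : (base hm).1 p = decide ((p : ℕ) < m) := rfl

theorem base_not_desc (hm : m ≤ n) (i : Fin (n - 1)) :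
    ¬((base hm).1 (lo i) = false ∧ (base hm).1 (hi i) = true) := by
  simp only [base_apply, lo, hi, decide_eq_false_iff_not, decide_eq_true_eq]
  omega

theorem position_base (hm : m ≤ n) (p : Fin n) : (base hm).position p = p := by
  have count : countTrue (base hm).1 p = min (p : ℕ) m := countTrue_decide_lt p.isLt.le
  rw [position, count, base_apply]
  split_ifs with h <;> simp only [decide_eq_true_eq] at h <;> omega

theorem positionFin_base (hm : m ≤ n) (p : Fin n) : (base hm).positionFin p = p :=
  Fin.ext (position_base hm p)

theorem eq_base_of_antitone (h : Antitone S.1) : S = base S.marked_le := by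
  ext p
  rw [base_apply]
  cases hp : S.1 p with
  | true =>
    have count : countTrue S.1 (p + 1) = p + 1 :=
      countTrue_eq_self p.isLt fun r hr => Bool.eq_true_of_true_le
        (hp ▸ h (Nat.lt_succ_iff.mp hr : r ≤ p))
    have := countTrue_mono S.1 (show (p : ℕ) + 1 ≤ n from p.isLt)
    rw [S.2, count] at this
    simpa using this
  | false =>
    have count : countTrue S.1 n = countTrue S.1 p :=
      countTrue_eq_of_le p.isLt.le fun r hr => Bool.eq_false_of_le_false
        (hp ▸ h (hr : p ≤ r))
    have := countTrue_le S.1 p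
    rw [← count, S.2] at this
    simpa using this

variable {S} in
theorem exists_desc (h : S ≠ base S.marked_le) :
    ∃ i : Fin (n - 1), S.1 (lo i) = false ∧ S.1 (hi i) = true := by
  contrapose! h
  refine S.eq_base_of_antitone (antitone_of_hi_le_lo fun i => ?_)
  cases hlo : S.1 (lo i) with
  | true => exact Bool.le_true _
  | false => rw [Bool.eq_false_of_not_eq_true (h i hlo)]

/-- Induction on the length, along descents. -/
@[elab_as_elim]
theorem descInduction {P : Shuffle n m → Prop} (base : ∀ hm, P (base hm))
    (desc : ∀ (S : Shuffle n m) (i : Fin (n - 1)), S.1 (lo i) = false → S.1 (hi i) = true →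
      (∀ S' : Shuffle n m, S'.length < S.length → P S') → P S) (S : Shuffle n m) : P S := by
  induction hL : S.length using Nat.strong_induction_on generalizing S with
  | h L ih =>
    by_cases hS : S = Shuffle.base S.marked_le
    · exact hS ▸ base S.marked_le
    · obtain ⟨i, hlo, hhi⟩ := exists_desc hS
      exact desc S i hlo hhi fun S' hS' => ih _ (hL ▸ hS') S' rfl

/-- The shuffle with the marked and the unmarked positions exchanged. -/
def compl (hn : n = m + k) : Shuffle n k :=
  ⟨fun p => !S.1 p, by rw [countTrue_not _ le_rfl, S.2]; omega⟩

@[simp]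
theorem compl_apply (hn : n = m + k) (p : Fin n) : (S.compl hn).1 p = !S.1 p := rfl

theorem compl_act (hn : n = m + k) (i : Fin (n - 1)) :
    (S.act i).compl hn = (S.compl hn).act i := rfl

/-- Complementation of shuffles. -/
def complEquiv (hn : n = m + k) : Shuffle n m ≃ Shuffle n k where
  toFun S := S.compl hn
  invFun S := S.compl (hn.trans (Nat.add_comm m k))
  left_inv S := by ext p; simp
  right_inv S := by ext p; simp

theorem position_compl_base (hn : n = k + m) (hk : k ≤ n) (p : Fin n) :
    ((base hk).compl hn).position p = if (p : ℕ) < k then m + p else p - k := by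
  have count : countTrue ((base hk).compl hn).1 p = p - min (p : ℕ) k := by
    rw [← countTrue_decide_lt (m := k) p.isLt.le]
    exact countTrue_not _ p.isLt.le
  rw [position, count, compl_apply, base_apply]
  by_cases h : (p : ℕ) < k
  · simp [h, h.le]
  · simp [h, not_lt.mp h]

theorem length_compl_le (hn : n = k + m) (hk : k ≤ n) (S : Shuffle n k) :
    (S.compl hn).length ≤ ((base hk).compl hn).length := by
  induction S using descInduction with
  | base hk' => rfl
  | desc S i hlo hhi ih =>
    have shorter := ih (S.act i) (by rw [← length_act_of_desc hlo hhi]; omega)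
    rw [compl_act, length_act_of_asc (by simpa) (by simpa)] at shorter
    omega

theorem length_le (hn : n = k + m) (hk : k ≤ n) (S : Shuffle n m) :
    S.length ≤ ((base hk).compl hn).length := by
  obtain ⟨S, rfl⟩ := (complEquiv hn).surjective S
  exact length_compl_le hn hk S

end Shuffle

/-! ### Induction of Hecke modules from a Young subalgebra -/

/-- Operators indexed by the nodes `j ≠ m - 1` of `A_{n-1}`, satisfying the relations of the finite
Hecke algebra of `S_m × S_{n-m}`. The index is a natural number, and the values of `t` at other
numbers are irrelevant. -/
structure IsYoungHeckeFamily {R A : Type*} [CommRing R] [Ring A] [Algebra R A] (ξ : R) (n m : ℕ)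
    (t : ℕ → A) : Prop where
  quad : ∀ j, j + 1 < n → j + 1 ≠ m → t j * t j = ξ • t j + 1
  braid : ∀ j, j + 2 < n → j + 1 ≠ m → j + 2 ≠ m →
    t j * t (j + 1) * t j = t (j + 1) * t j * t (j + 1)
  far : ∀ i j, i + 1 < j → j + 1 < n → i + 1 ≠ m → j + 1 ≠ m → t i * t j = t j * t i

namespace IsYoungHeckeFamily

variable {R A B : Type*} [CommRing R] [Ring A] [Algebra R A] [Ring B] [Algebra R B] {ξ : R}
  {n m : ℕ} {t : ℕ → A}

theorem map (h : IsYoungHeckeFamily ξ n m t) (φ : A →ₐ[R] B) :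
    IsYoungHeckeFamily ξ n m (fun j => φ (t j)) where
  quad j h₁ h₂ := by rw [← map_mul, h.quad j h₁ h₂, map_add, map_smul, map_one]
  braid j h₁ h₂ h₃ := by simp only [← map_mul, h.braid j h₁ h₂ h₃]
  far i j h₁ h₂ h₃ h₄ := by simp only [← map_mul, h.far i j h₁ h₂ h₃ h₄]

end IsYoungHeckeFamily

namespace Shuffle

variable {R W : Type*} [CommRing R] [AddCommGroup W] [Module R W] {n m : ℕ}

section hecke

variable (ξ : R) (t : ℕ → Module.End R W)

/-- The action of the Hecke generators on the module of functions on shuffles, which is the module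
induced from the Young subalgebra acting on `W` through `t`. -/
def hecke (i : Fin (n - 1)) : Module.End R (Shuffle n m → W) where
  toFun v S := if S.1 (lo i) = S.1 (hi i) then t (S.position (lo i)) (v S)
    else if S.1 (lo i) then v (S.act i) else v (S.act i) + ξ • v S
  map_add' v w := by
    funext S
    simp only [Pi.add_apply]
    split_ifs <;> simp
    abel
  map_smul' a v := by
    funext S
    simp only [Pi.smul_apply, RingHom.id_apply]
    split_ifs <;> simp [smul_comm a ξ]

theorem hecke_apply (i : Fin (n - 1)) (v : Shuffle n m → W) (S : Shuffle n m) :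
    hecke ξ t i v S = if S.1 (lo i) = S.1 (hi i) then t (S.position (lo i)) (v S)
      else if S.1 (lo i) then v (S.act i) else v (S.act i) + ξ • v S := rfl

end hecke

variable {ξ : R} {t : ℕ → Module.End R W} (ht : IsYoungHeckeFamily ξ n m t)
include ht

theorem quad_position (S : Shuffle n m) {i : Fin (n - 1)} (h : S.1 (lo i) = S.1 (hi i)) (w : W) :
    t (S.position (lo i)) (t (S.position (lo i)) w) = ξ • t (S.position (lo i)) w + w :=
  LinearMap.congr_fun (ht.quad _ (position_lo_succ_lt h) (position_lo_succ_ne h)) w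

theorem far_position (S : Shuffle n m) {i j : Fin (n - 1)} (hij : (i : ℕ) + 1 < j)
    (hi' : S.1 (lo i) = S.1 (hi i)) (hj : S.1 (lo j) = S.1 (hi j)) (w : W) :
    t (S.position (lo i)) (t (S.position (lo j)) w) =
      t (S.position (lo j)) (t (S.position (lo i)) w) := by
  rcases position_far hij hi' hj with h | h
  · exact LinearMap.congr_fun (ht.far _ _ h (position_lo_succ_lt hj) (position_lo_succ_ne hi')
      (position_lo_succ_ne hj)) w
  · exact (LinearMap.congr_fun (ht.far _ _ h (position_lo_succ_lt hi') (position_lo_succ_ne hj)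
      (position_lo_succ_ne hi')) w).symm

theorem braid_position (S : Shuffle n m) {i j : Fin (n - 1)} (hij : (j : ℕ) = i + 1)
    (hi' : S.1 (lo i) = S.1 (hi i)) (hj : S.1 (lo j) = S.1 (hi j)) (w : W) :
    t (S.position (lo i)) (t (S.position (lo j)) (t (S.position (lo i)) w)) =
      t (S.position (lo j)) (t (S.position (lo i)) (t (S.position (lo j)) w)) := by
  have next : S.position (lo j) = S.position (lo i) + 1 := by
    rw [← hi_eq_lo hij, position_hi hi']
  have lt := position_lo_succ_lt hj
  have ne := position_lo_succ_ne hj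
  rw [next] at lt ne ⊢
  exact LinearMap.congr_fun (ht.braid _ lt (position_lo_succ_ne hi') ne) w

theorem hecke_quad (i : Fin (n - 1)) :
    hecke (m := m) ξ t i * hecke ξ t i = ξ • hecke ξ t i + 1 := by
  refine LinearMap.ext fun v => funext fun S => ?_
  simp only [Module.End.mul_apply, LinearMap.add_apply, LinearMap.smul_apply,
    Module.End.one_apply, Pi.add_apply, Pi.smul_apply]
  by_cases h : S.1 (lo i) = S.1 (hi i)
  · simp [hecke_apply, h, quad_position ht S h]
  · cases hlo : S.1 (lo i) <;> cases hhi : S.1 (hi i) <;> simp_all [hecke_apply] <;> abel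

theorem hecke_far (i j : Fin (n - 1)) (hij : (i : ℕ) + 1 < j) :
    hecke (m := m) ξ t i * hecke ξ t j = hecke ξ t j * hecke ξ t i := by
  obtain ⟨ll, lh, hl, hh⟩ := ne_of_far hij
  refine LinearMap.ext fun v => funext fun S => ?_
  simp only [Module.End.mul_apply]
  have position_i (h : S.1 (lo j) ≠ S.1 (hi j)) := position_act_of_ne h ll lh
  have position_j (h : S.1 (lo i) ≠ S.1 (hi i)) := position_act_of_ne h ll.symm hl.symm
  by_cases hi' : S.1 (lo i) = S.1 (hi i) <;> by_cases hj : S.1 (lo j) = S.1 (hi j)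
  · simpa only [hecke_apply, hi', hj, if_true] using far_position ht S hij hi' hj (v S)
  all_goals
    simp only [hecke_apply, hi', hj, if_true, if_false, act_of_ne _ ll.symm hl.symm,
      act_of_ne _ lh.symm hh.symm, act_of_ne _ ll lh, act_of_ne _ hl hh,
      position_i, position_j, act_comm S hij, ne_eq, not_false_eq_true]
    split_ifs <;> simp only [map_add, map_smul, smul_add] <;> first | rfl | module

theorem hecke_braid (i j : Fin (n - 1)) (hij : (j : ℕ) = i + 1) :
    hecke (m := m) ξ t i * hecke ξ t j * hecke ξ t i =
      hecke ξ t j * hecke ξ t i * hecke ξ t j := by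
  have mid := hi_eq_lo hij
  have nhl : hi j ≠ lo i := by simp only [lo, hi, ne_eq, Fin.ext_iff]; omega
  have nhh : hi j ≠ hi i := by simp only [hi, ne_eq, Fin.ext_iff]; omega
  have nll : lo i ≠ lo j := mid ▸ lo_ne_hi i
  have act_i_last (S : Shuffle n m) := S.act_of_ne nhl nhh
  have act_j_first (S : Shuffle n m) := S.act_of_ne nll nhl.symm
  have act_i_mid (S : Shuffle n m) : (S.act i).1 (lo j) = S.1 (lo i) := mid ▸ S.act_hi i
  have act_i_first (S : Shuffle n m) : (S.act i).1 (lo i) = S.1 (lo j) := mid ▸ S.act_lo i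
  have position_j_first {S : Shuffle n m} (h : S.1 (lo j) ≠ S.1 (hi j)) :=
    position_act_of_ne h nll nhl.symm
  have position_i_mid {S : Shuffle n m} (h : S.1 (lo i) ≠ S.1 (lo j)) :
      (S.act i).position (lo j) = S.position (lo i) := mid ▸ position_act_hi (mid ▸ h)
  have position_i_first {S : Shuffle n m} (h : S.1 (lo i) ≠ S.1 (lo j)) :
      (S.act i).position (lo i) = S.position (lo j) := mid ▸ position_act_lo (mid ▸ h)
  refine LinearMap.ext fun v => funext fun S => ?_
  simp only [Module.End.mul_apply]
  cases hli : S.1 (lo i) <;> cases hlj : S.1 (lo j) <;> cases hhj : S.1 (hi j) <;>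
    simp only [hecke_apply, mid, hli, hlj, hhj, ↓reduceIte, Bool.false_eq_true, Bool.true_eq_false,
      ne_eq, not_false_eq_true, act_act, act_lo, act_hi, act_i_last, act_j_first, act_i_mid,
      act_i_first, position_j_first, position_i_mid, position_i_first, map_add, map_smul, smul_add]
  case false.false.false | true.true.true =>
    exact braid_position ht S hij (by simp [mid, hli, hlj]) (by simp [hlj, hhj]) (v S)
  case false.false.true =>
    rw [quad_position ht S (by simp [mid, hli, hlj])]
    module
  case false.true.true =>
    rw [quad_position ht S (by simp [hlj, hhj])]
    module

theorem isHeckeFamily_hecke : IsHeckeFamily ξ (hecke (n := n) (m := m) ξ t) where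
  quad := hecke_quad ht
  braid := hecke_braid ht
  far := hecke_far ht

end Shuffle

/-! ### Hecke elements of shuffles -/

namespace Shuffle

variable {n m : ℕ}

section adjacent

variable {S : Shuffle n m} {i d : Fin (n - 1)} (h : S.1 (lo i) = S.1 (hi i))
  (hlo : S.1 (lo d) = false) (hhi : S.1 (hi d) = true)
include h hlo hhi

theorem act_act_of_desc_right (hid : (d : ℕ) = i + 1) :
    ((S.act d).1 (lo i) = false ∧ (S.act d).1 (hi i) = true) ∧
      ((S.act d).act i).1 (lo d) = ((S.act d).act i).1 (hi d) ∧
      ((S.act d).act i).position (lo d) = S.position (lo i) := by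
  have mid := hi_eq_lo hid
  have ll : lo i ≠ lo d := mid ▸ lo_ne_hi i
  have lh : lo i ≠ hi d := by simp only [lo, hi, ne_eq, Fin.ext_iff]; omega
  have hh : hi d ≠ hi i := mid ▸ (lo_ne_hi d).symm
  have first : (S.act d).1 (lo i) = false := by rw [S.act_of_ne ll lh, h, mid, hlo]
  have second : (S.act d).1 (hi i) = true := by rw [mid, act_lo, hhi]
  refine ⟨⟨first, second⟩, ?_, ?_⟩
  · rw [← mid, act_hi, first, act_of_ne _ lh.symm hh, act_hi, hlo]
  · rw [← mid, position_act_hi (by simp [first, second]),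
      position_act_of_ne (by simp [hlo, hhi]) ll lh]

theorem act_act_of_desc_left (hid : (i : ℕ) = d + 1) :
    ((S.act d).1 (lo i) = false ∧ (S.act d).1 (hi i) = true) ∧
      ((S.act d).act i).1 (lo d) = ((S.act d).act i).1 (hi d) ∧
      ((S.act d).act i).position (lo d) = S.position (lo i) := by
  have mid := hi_eq_lo hid
  have ll : lo d ≠ lo i := mid ▸ lo_ne_hi d
  have hl : hi i ≠ lo d := by simp only [lo, hi, ne_eq, Fin.ext_iff]; omega
  have hh : hi i ≠ hi d := mid ▸ (lo_ne_hi i).symm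
  have first : (S.act d).1 (lo i) = false := by rw [← mid, act_hi, hlo]
  have second : (S.act d).1 (hi i) = true := by rw [S.act_of_ne hl hh, ← h, ← mid, hhi]
  refine ⟨⟨first, second⟩, ?_, ?_⟩
  · rw [act_of_ne _ ll hl.symm, act_lo, mid, act_lo, second, ← mid, hhi]
  · rw [position_act_of_ne (by simp [first, second]) ll hl.symm,
      position_act_lo (by simp [hlo, hhi]), mid]

end adjacent

open Classical in
/-- The product of the `T i` along a reduced word of the coset representative of `S`. -/
noncomputable def heckeElt {A : Type*} [Monoid A] (T : Fin (n - 1) → A) (S : Shuffle n m) : A :=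
  if h : ∃ i : Fin (n - 1), S.1 (lo i) = false ∧ S.1 (hi i) = true then
    T h.choose * heckeElt T (S.act h.choose)
  else 1
termination_by S.length
decreasing_by
  have := length_act_of_desc h.choose_spec.1 h.choose_spec.2
  omega

theorem heckeElt_base {A : Type*} [Monoid A] (T : Fin (n - 1) → A) (hm : m ≤ n) :
    (base hm).heckeElt T = 1 := by
  rw [heckeElt, dif_neg (not_exists.mpr (base_not_desc hm))]

variable {R A : Type*} [CommRing R] [Ring A] [Algebra R A] {ξ : R} {T : Fin (n - 1) → A}
  (hT : IsHeckeFamily ξ T)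
include hT

theorem heckeElt_of_desc (S : Shuffle n m) : ∀ i : Fin (n - 1), S.1 (lo i) = false →
    S.1 (hi i) = true → S.heckeElt T = T i * (S.act i).heckeElt T := by
  induction S using descInduction with
  | base hm => exact fun i hlo hhi => absurd ⟨hlo, hhi⟩ (base_not_desc hm i)
  | desc S _ _ _ ih =>
    have far {i j : Fin (n - 1)} (hij : (i : ℕ) + 1 < j) (hlo : S.1 (lo i) = false)
        (hhi : S.1 (hi i) = true) (hlo' : S.1 (lo j) = false) (hhi' : S.1 (hi j) = true) :
        T j * (S.act j).heckeElt T = T i * (S.act i).heckeElt T := by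
      obtain ⟨ll, lh, hl, hh⟩ := ne_of_far hij
      have hi_len := length_act_of_desc hlo hhi
      have hj_len := length_act_of_desc hlo' hhi'
      rw [ih (S.act j) (by omega) i (by rw [S.act_of_ne ll lh, hlo])
          (by rw [S.act_of_ne hl hh, hhi]),
        ih (S.act i) (by omega) j (by rw [S.act_of_ne ll.symm hl.symm, hlo'])
          (by rw [S.act_of_ne lh.symm hh.symm, hhi']), S.act_comm hij, ← mul_assoc,
        ← mul_assoc, hT.far i j hij]
    intro i hlo hhi
    have hex : ∃ i : Fin (n - 1), S.1 (lo i) = false ∧ S.1 (hi i) = true := ⟨i, hlo, hhi⟩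
    rw [heckeElt, dif_pos hex]
    obtain ⟨hlo', hhi'⟩ := hex.choose_spec
    generalize hex.choose = j at hlo' hhi'
    have not_adjacent {i j : Fin (n - 1)} (hhi : S.1 (hi i) = true)
        (hlo : S.1 (lo j) = false) : (j : ℕ) ≠ i + 1 := fun hij => by
      simp [hi_eq_lo hij, hlo] at hhi
    have hij := not_adjacent hhi hlo'
    have hji := not_adjacent hhi' hlo
    rcases lt_trichotomy (i : ℕ) j with h | h | h
    · exact far (by omega) hlo hhi hlo' hhi'
    · rw [Fin.ext h]
    · exact (far (by omega) hlo' hhi' hlo hhi).symm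

theorem mul_heckeElt_of_asc {S : Shuffle n m} {i : Fin (n - 1)} (hlo : S.1 (lo i) = true)
    (hhi : S.1 (hi i) = false) : T i * S.heckeElt T = (S.act i).heckeElt T := by
  rw [heckeElt_of_desc hT (S.act i) i (by simpa) (by simpa), act_act]

theorem mul_heckeElt_of_desc {S : Shuffle n m} {i : Fin (n - 1)} (hlo : S.1 (lo i) = false)
    (hhi : S.1 (hi i) = true) :
    T i * S.heckeElt T = ξ • S.heckeElt T + (S.act i).heckeElt T := by
  rw [heckeElt_of_desc hT S i hlo hhi, ← mul_assoc, hT.quad, add_mul, smul_mul_assoc, one_mul]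

theorem mul_heckeElt_of_eq (S : Shuffle n m) : ∀ i j : Fin (n - 1), S.1 (lo i) = S.1 (hi i) →
    (j : ℕ) = S.position (lo i) → T i * S.heckeElt T = S.heckeElt T * T j := by
  induction S using descInduction with
  | base hm =>
    intro i j _ hj
    rw [heckeElt_base, one_mul, mul_one, Fin.ext (hj.trans (position_base hm _) : (j : ℕ) = i)]
  | desc S d hlo hhi ih =>
    intro i j h hj
    have hd : S.1 (lo d) ≠ S.1 (hi d) := by simp [hlo, hhi]
    have len := length_act_of_desc hlo hhi
    have far (ll : lo i ≠ lo d) (lh : lo i ≠ hi d) (hl : hi i ≠ lo d) (hh : hi i ≠ hi d)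
        (hc : T i * T d = T d * T i) : T i * S.heckeElt T = S.heckeElt T * T j := by
      rw [heckeElt_of_desc hT S d hlo hhi, ← mul_assoc, hc, mul_assoc, mul_assoc,
        ih (S.act d) (by omega) i j (by rw [S.act_of_ne ll lh, S.act_of_ne hl hh, h])
          (by rw [position_act_of_ne hd ll lh, hj])]
    have adjacent (hc : T i * T d * T i = T d * T i * T d)
        (hS : ((S.act d).1 (lo i) = false ∧ (S.act d).1 (hi i) = true) ∧
          ((S.act d).act i).1 (lo d) = ((S.act d).act i).1 (hi d) ∧
          ((S.act d).act i).position (lo d) = S.position (lo i)) :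
        T i * S.heckeElt T = S.heckeElt T * T j := by
      obtain ⟨⟨hlo', hhi'⟩, heq, hpos⟩ := hS
      have len' := length_act_of_desc hlo' hhi'
      rw [heckeElt_of_desc hT S d hlo hhi, heckeElt_of_desc hT (S.act d) i hlo' hhi',
        ← mul_assoc, ← mul_assoc, hc, mul_assoc,
        ih _ (by omega) d j heq (hj.trans hpos.symm), mul_assoc, mul_assoc, mul_assoc]
    rcases Nat.lt_trichotomy i d with hid | hid | hid
    · rcases Nat.lt_or_ge (i + 1) d with hfar | hnear
      · obtain ⟨ll, lh, hl, hh⟩ := ne_of_far hfar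
        exact far ll lh hl hh (hT.far i d hfar)
      · have hid' : (d : ℕ) = i + 1 := by omega
        exact adjacent (hT.braid i d hid') (act_act_of_desc_right h hlo hhi hid')
    · exact absurd (Fin.ext hid ▸ h) hd
    · rcases Nat.lt_or_ge (d + 1) i with hfar | hnear
      · obtain ⟨ll, lh, hl, hh⟩ := ne_of_far hfar
        exact far ll.symm hl.symm lh.symm hh.symm (hT.far d i hfar).symm
      · have hid' : (i : ℕ) = d + 1 := by omega
        exact adjacent (hT.braid d i hid').symm (act_act_of_desc_left h hlo hhi hid')

end Shuffle

/-! ### Modules generated by a module over a Young subalgebra -/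

namespace Shuffle

variable {n m : ℕ} (S : Shuffle n m)

theorem positionFin_bijective : Function.Bijective S.positionFin := by
  induction S using descInduction with
  | base hm =>
    rw [show (base hm).positionFin = id from funext (positionFin_base hm)]
    exact Function.bijective_id
  | desc S i hlo hhi ih =>
    have h : S.positionFin = (S.act i).positionFin ∘ s i := funext fun p => by
      rw [Function.comp_apply, positionFin_act (by simp [hlo, hhi]), s_s]
    have := length_act_of_desc hlo hhi
    rw [h]
    exact (ih _ (by omega)).comp (s i).bijective

/-- The permutation of the places which sorts a shuffle, preserving the order within the marked
places and within the unmarked ones. -/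
noncomputable def positionPerm : Equiv.Perm (Fin n) :=
  Equiv.ofBijective S.positionFin S.positionFin_bijective

theorem positionPerm_base (hm : m ≤ n) : (base hm).positionPerm = 1 :=
  Equiv.ext (positionFin_base hm)

variable {S} in
theorem positionPerm_act_mul {i : Fin (n - 1)} (h : S.1 (lo i) ≠ S.1 (hi i)) :
    (S.act i).positionPerm * s i = S.positionPerm :=
  Equiv.ext fun p => (positionFin_act h (s i p)).trans (congrArg _ (s_s i p))

end Shuffle

/-- The module `E` over a Hecke–Clifford pair is generated by the image of `ι : W → E`, on which
the Young subalgebra of type `(m, n - m)` acts through `πW` and `t`. -/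
structure IsYoungGenerated {R E W : Type*} [CommRing R] [AddCommGroup E] [Module R E]
    [AddCommGroup W] [Module R W] (ξ : R) {n : ℕ} (m : ℕ)
    (πE : LaurentClifford R (Fin n) →ₐ[R] Module.End R E) (tE : Fin (n - 1) → Module.End R E)
    (πW : LaurentClifford R (Fin n) →ₐ[R] Module.End R W) (t : ℕ → Module.End R W)
    (ι : W →ₗ[R] E) : Prop where
  pair : IsHeckeCliffordPair ξ πE tE
  clifford : ∀ r w, πE r (ι w) = ι (πW r w)
  hecke : ∀ (i : Fin (n - 1)) w, (i : ℕ) + 1 ≠ m → tE i (ι w) = ι (t i w)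
  span : ∀ U : Submodule R E, LinearMap.range ι ≤ U → (∀ r, U ≤ U.comap (πE r)) →
    (∀ i, U ≤ U.comap (tE i)) → U = ⊤

section translate

variable {R E W : Type*} [CommRing R] [AddCommGroup E] [Module R E] [AddCommGroup W] [Module R W]
  {n m : ℕ} (tE : Fin (n - 1) → Module.End R E) (ι : W →ₗ[R] E)

/-- The translate of `ι : W → E` by the Hecke element of a shuffle. -/
noncomputable def translate (S : Shuffle n m) : W →ₗ[R] E := S.heckeElt tE ∘ₗ ι

theorem translate_base (hm : m ≤ n) : translate tE ι (Shuffle.base hm) = ι := by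
  rw [translate, Shuffle.heckeElt_base]
  rfl

variable (m) in
/-- The span of the translates by shuffles of length less than `L`. -/
noncomputable def lengthFiltration (L : ℕ) : Submodule R E :=
  ⨆ S : {S : Shuffle n m // S.length < L}, LinearMap.range (translate tE ι S.1)

variable {tE ι} {L L' : ℕ}

theorem translate_mem_lengthFiltration {S : Shuffle n m} (h : S.length < L) (w : W) :
    translate tE ι S w ∈ lengthFiltration m tE ι L :=
  le_iSup (fun S : {S : Shuffle n m // S.length < L} => LinearMap.range (translate tE ι S.1))
    ⟨S, h⟩ ⟨w, rfl⟩

theorem lengthFiltration_le {U : Submodule R E}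
    (h : ∀ S : Shuffle n m, S.length < L → ∀ w, translate tE ι S w ∈ U) :
    lengthFiltration m tE ι L ≤ U :=
  iSup_le fun S => by rintro _ ⟨w, rfl⟩; exact h S.1 S.2 w

theorem lengthFiltration_mono (h : L ≤ L') :
    lengthFiltration m tE ι L ≤ lengthFiltration m tE ι L' :=
  lengthFiltration_le fun _ hS => translate_mem_lengthFiltration (hS.trans_le h)

end translate

namespace IsYoungGenerated

open LaurentClifford

variable {R E W : Type*} [CommRing R] [AddCommGroup E] [Module R E] [AddCommGroup W] [Module R W]
  {ξ : R} {n m : ℕ} {πE : LaurentClifford R (Fin n) →ₐ[R] Module.End R E}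
  {tE : Fin (n - 1) → Module.End R E} {πW : LaurentClifford R (Fin n) →ₐ[R] Module.End R W}
  {t : ℕ → Module.End R W} {ι : W →ₗ[R] E} (h : IsYoungGenerated ξ m πE tE πW t ι)
include h

section hecke

variable {S : Shuffle n m} {i : Fin (n - 1)}

theorem translate_of_desc (hlo : S.1 (lo i) = false) (hhi : S.1 (hi i) = true) (w : W) :
    translate tE ι S w = tE i (translate tE ι (S.act i) w) := by
  rw [translate, Shuffle.heckeElt_of_desc h.pair.toIsHeckeFamily S i hlo hhi]
  rfl

theorem hecke_translate_of_asc (hlo : S.1 (lo i) = true) (hhi : S.1 (hi i) = false) (w : W) :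
    tE i (translate tE ι S w) = translate tE ι (S.act i) w :=
  LinearMap.congr_fun (Shuffle.mul_heckeElt_of_asc h.pair.toIsHeckeFamily hlo hhi) (ι w)

theorem hecke_translate_of_desc (hlo : S.1 (lo i) = false) (hhi : S.1 (hi i) = true) (w : W) :
    tE i (translate tE ι S w) = ξ • translate tE ι S w + translate tE ι (S.act i) w :=
  LinearMap.congr_fun (Shuffle.mul_heckeElt_of_desc h.pair.toIsHeckeFamily hlo hhi) (ι w)

theorem hecke_translate_of_eq (heq : S.1 (lo i) = S.1 (hi i)) (w : W) :
    tE i (translate tE ι S w) = translate tE ι S (t (S.position (lo i)) w) := by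
  have hlt := S.position_lo_succ_lt heq
  have hmul := Shuffle.mul_heckeElt_of_eq h.pair.toIsHeckeFamily S i ⟨S.position (lo i), by omega⟩
    heq rfl
  calc tE i (translate tE ι S w)
    _ = S.heckeElt tE (tE ⟨S.position (lo i), by omega⟩ (ι w)) := LinearMap.congr_fun hmul (ι w)
    _ = translate tE ι S (t (S.position (lo i)) w) := by
      rw [h.hecke _ _ (S.position_lo_succ_ne heq)]
      rfl

theorem hecke_translate_mem (hS : ¬ (S.1 (lo i) = true ∧ S.1 (hi i) = false)) (w : W) :
    tE i (translate tE ι S w) ∈ lengthFiltration m tE ι (S.length + 1) := by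
  by_cases heq : S.1 (lo i) = S.1 (hi i)
  · rw [h.hecke_translate_of_eq heq]
    exact translate_mem_lengthFiltration (Nat.lt_succ_self _) _
  · obtain ⟨hlo, hhi⟩ : S.1 (lo i) = false ∧ S.1 (hi i) = true := by
      revert hS heq; cases S.1 (lo i) <;> cases S.1 (hi i) <;> simp
    have := Shuffle.length_act_of_desc hlo hhi
    rw [h.hecke_translate_of_desc hlo hhi]
    exact add_mem (Submodule.smul_mem _ _ (translate_mem_lengthFiltration (by omega) _))
      (translate_mem_lengthFiltration (by omega) _)

variable (i) in
theorem hecke_mem {L : ℕ} {e : E} (he : e ∈ lengthFiltration m tE ι L) :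
    tE i e ∈ lengthFiltration m tE ι (L + 1) := by
  suffices lengthFiltration m tE ι L ≤ (lengthFiltration m tE ι (L + 1)).comap (tE i) from this he
  refine lengthFiltration_le fun S hS w => ?_
  by_cases hasc : S.1 (lo i) = true ∧ S.1 (hi i) = false
  · have := Shuffle.length_act_of_asc hasc.1 hasc.2
    rw [Submodule.mem_comap, h.hecke_translate_of_asc hasc.1 hasc.2]
    exact translate_mem_lengthFiltration (by omega) _
  · exact lengthFiltration_mono (by omega) (h.hecke_translate_mem hasc w)

end hecke

omit h in
theorem clifford_mem_of_leading {L : ℕ} {r : LaurentClifford R (Fin n)}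
    (hlead : ∀ S : Shuffle n m, S.length < L → ∀ w, πE r (translate tE ι S w) -
      translate tE ι S (πW (perm S.positionPerm r) w) ∈ lengthFiltration m tE ι S.length)
    {e : E} (he : e ∈ lengthFiltration m tE ι L) : πE r e ∈ lengthFiltration m tE ι L := by
  suffices lengthFiltration m tE ι L ≤ (lengthFiltration m tE ι L).comap (πE r) from this he
  refine lengthFiltration_le fun S hS w => ?_
  have := add_mem (lengthFiltration_mono hS.le (hlead S hS w))
    (translate_mem_lengthFiltration hS (πW (perm S.positionPerm r) w))
  rwa [sub_add_cancel] at this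

theorem clifford_translate_sub_mem (S : Shuffle n m) : ∀ r w, πE r (translate tE ι S w) -
    translate tE ι S (πW (perm S.positionPerm r) w) ∈ lengthFiltration m tE ι S.length := by
  induction S using Shuffle.descInduction with
  | base hm =>
    intro r w
    rw [translate_base, Shuffle.positionPerm_base, perm_one, h.clifford, sub_self]
    exact zero_mem _
  | desc S i hlo hhi ih =>
    intro r w
    have len := Shuffle.length_act_of_desc hlo hhi
    have leading := h.hecke_mem i (ih (S.act i) (by omega) (nodePerm i r) w)
    have lower : πE (nodeDerivation ξ i r) (translate tE ι (S.act i) w) ∈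
        lengthFiltration m tE ι S.length :=
      clifford_mem_of_leading (πW := πW) (fun S' hS' => ih S' hS' _)
        (translate_mem_lengthFiltration (by omega) w)
    have move := LinearMap.congr_fun (h.pair.move i r) (translate tE ι (S.act i) w)
    simp only [Module.End.mul_apply, LinearMap.add_apply] at move
    rw [len, map_sub, perm_perm,
      show Equiv.swap (lo i) (hi i) = s i from rfl, Shuffle.positionPerm_act_mul
        (by simp [hlo, hhi])] at leading
    rw [h.translate_of_desc hlo hhi, h.translate_of_desc hlo hhi, move, add_sub_right_comm]
    exact add_mem leading lower

theorem clifford_mem (r : LaurentClifford R (Fin n)) {L : ℕ} {e : E}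
    (he : e ∈ lengthFiltration m tE ι L) : πE r e ∈ lengthFiltration m tE ι L :=
  clifford_mem_of_leading (fun S _ => h.clifford_translate_sub_mem S r) he

theorem iSup_range_translate (hm : m ≤ n) :
    ⨆ S : Shuffle n m, LinearMap.range (translate tE ι S) = ⊤ := by
  set U := ⨆ S : Shuffle n m, LinearMap.range (translate tE ι S)
  have mem (S : Shuffle n m) : LinearMap.range (translate tE ι S) ≤ U :=
    le_iSup (fun S : Shuffle n m => LinearMap.range (translate tE ι S)) S
  have filtration_le (L : ℕ) : lengthFiltration m tE ι L ≤ U :=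
    lengthFiltration_le fun S _ w => mem S ⟨w, rfl⟩
  have translate_mem (S : Shuffle n m) (w : W) :
      translate tE ι S w ∈ lengthFiltration m tE ι (S.length + 1) :=
    translate_mem_lengthFiltration (Nat.lt_succ_self _) w
  refine h.span U (translate_base tE ι hm ▸ mem _) (fun r => iSup_le fun S => ?_)
    (fun i => iSup_le fun S => ?_)
  · rintro _ ⟨w, rfl⟩
    exact filtration_le _ (h.clifford_mem r (translate_mem S w))
  · rintro _ ⟨w, rfl⟩
    exact filtration_le _ (h.hecke_mem i (translate_mem S w))

theorem ext_translate (hm : m ≤ n) {P : Type*} [AddCommGroup P] [Module R P] {f g : E →ₗ[R] P}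
    (hfg : ∀ (S : Shuffle n m) w, f (translate tE ι S w) = g (translate tE ι S w)) : f = g := by
  have : (⊤ : Submodule R E) ≤ LinearMap.eqLocus f g := by
    rw [← h.iSup_range_translate hm]
    refine iSup_le fun S => ?_
    rintro _ ⟨w, rfl⟩
    exact hfg S w
  exact LinearMap.ext fun e => this trivial

end IsYoungGenerated

section translateSum

variable {R E W : Type*} [CommRing R] [AddCommGroup E] [Module R E] [AddCommGroup W] [Module R W]
  {n m : ℕ} (tE : Fin (n - 1) → Module.End R E) (ι : W →ₗ[R] E)

variable (m) in
/-- The canonical map onto the induced module from the direct sum of its translates. -/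
noncomputable def translateSum : (Shuffle n m → W) →ₗ[R] E :=
  LinearMap.lsum R (fun _ : Shuffle n m => W) R (translate tE ι)

theorem translateSum_apply (v : Shuffle n m → W) :
    translateSum m tE ι v = ∑ S, translate tE ι S (v S) := by
  simp [translateSum, LinearMap.lsum_apply]

theorem translateSum_single (S : Shuffle n m) (w : W) :
    translateSum m tE ι (Pi.single S w) = translate tE ι S w := by
  rw [translateSum, LinearMap.lsum_piSingle]

end translateSum

theorem IsYoungGenerated.translateSum_surjective {R E W : Type*} [CommRing R] [AddCommGroup E]
    [Module R E] [AddCommGroup W] [Module R W] {ξ : R} {n m : ℕ}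
    {πE : LaurentClifford R (Fin n) →ₐ[R] Module.End R E} {tE : Fin (n - 1) → Module.End R E}
    {πW : LaurentClifford R (Fin n) →ₐ[R] Module.End R W} {t : ℕ → Module.End R W} {ι : W →ₗ[R] E}
    (h : IsYoungGenerated ξ m πE tE πW t ι) (hm : m ≤ n) :
    Function.Surjective (translateSum m tE ι) := by
  rw [← LinearMap.range_eq_top, eq_top_iff, ← h.iSup_range_translate hm]
  refine iSup_le fun S => ?_
  rintro _ ⟨w, rfl⟩
  exact ⟨Pi.single S w, translateSum_single tE ι S w⟩

namespace Shuffle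

variable {R W : Type*} [CommRing R] [AddCommGroup W] {n m : ℕ}

theorem single_act (S S' : Shuffle n m) (i : Fin (n - 1)) (w : W) :
    (Pi.single (S.act i) w : Shuffle n m → W) (S'.act i) = (Pi.single S w : _ → W) S' := by
  have : S'.act i = S.act i ↔ S' = S :=
    ⟨fun h => by rw [← S'.act_act i, h, S.act_act], fun h => by rw [h]⟩
  simp [Pi.single_apply, this]

theorem hecke_single_act_of_desc [Module R W] (ξ : R) (t : ℕ → Module.End R W)
    {S : Shuffle n m} {i : Fin (n - 1)} (hlo : S.1 (lo i) = false) (hhi : S.1 (hi i) = true)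
    (w : W) : hecke ξ t i (Pi.single (S.act i) w) = Pi.single S w := by
  funext S'
  rw [hecke_apply, single_act]
  by_cases hS' : S' = S.act i
  · have ne : S.act i ≠ S := fun e => by simpa [hlo, hhi] using congrArg (fun S => S.1 (lo i)) e
    simp [hS', hlo, hhi, Pi.single_eq_of_ne ne]
  · rw [Pi.single_eq_of_ne hS', map_zero, smul_zero, add_zero, ite_self]
    split_ifs with heq
    · rw [Pi.single_eq_of_ne]
      rintro rfl
      simp [hlo, hhi] at heq
    · rfl

end Shuffle

/-- The map `G` expresses the elements of a module generated from the Young subalgebra by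
coordinates indexed by shuffles. -/
structure IsShuffleCoordinates {R E W : Type*} [CommRing R] [AddCommGroup E] [Module R E]
    [AddCommGroup W] [Module R W] (ξ : R) {n m : ℕ} (hm : m ≤ n)
    (πE : LaurentClifford R (Fin n) →ₐ[R] Module.End R E) (tE : Fin (n - 1) → Module.End R E)
    (πW : LaurentClifford R (Fin n) →ₐ[R] Module.End R W) (t : ℕ → Module.End R W)
    (ι : W →ₗ[R] E) (G : E →ₗ[R] (Shuffle n m → W)) : Prop
    extends IsYoungGenerated ξ m πE tE πW t ι where
  map_hecke : ∀ i e, G (tE i e) = Shuffle.hecke ξ t i (G e)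
  map_ι : ∀ w, G (ι w) = Pi.single (Shuffle.base hm) w

namespace IsShuffleCoordinates

open LaurentClifford

variable {R E W : Type*} [CommRing R] [AddCommGroup E] [Module R E] [AddCommGroup W] [Module R W]
  {ξ : R} {n m k : ℕ} {hm : m ≤ n} {πE : LaurentClifford R (Fin n) →ₐ[R] Module.End R E}
  {tE : Fin (n - 1) → Module.End R E} {πW : LaurentClifford R (Fin n) →ₐ[R] Module.End R W}
  {t : ℕ → Module.End R W} {ι : W →ₗ[R] E} {G : E →ₗ[R] (Shuffle n m → W)}
  (h : IsShuffleCoordinates ξ hm πE tE πW t ι G)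

include h

theorem map_translate (S : Shuffle n m) : ∀ w, G (translate tE ι S w) = Pi.single S w := by
  induction S using Shuffle.descInduction with
  | base hm => exact fun w => by rw [translate_base, h.map_ι]
  | desc S i hlo hhi ih =>
    intro w
    have := Shuffle.length_act_of_desc hlo hhi
    rw [h.translate_of_desc hlo hhi, h.map_hecke, ih _ (by omega),
      Shuffle.hecke_single_act_of_desc ξ t hlo hhi]

theorem bijective : Function.Bijective G := by
  have inverse (v : Shuffle n m → W) : G (translateSum m tE ι v) = v := by
    simp only [translateSum_apply, map_sum, h.map_translate, Finset.univ_sum_single]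
  refine ⟨fun e e' he => ?_, fun v => ⟨_, inverse v⟩⟩
  obtain ⟨v, rfl⟩ := h.translateSum_surjective hm e
  obtain ⟨v', rfl⟩ := h.translateSum_surjective hm e'
  rw [← inverse v, he, inverse]

theorem apply_eq_zero_of_mem {L : ℕ} {e : E} (he : e ∈ lengthFiltration m tE ι L)
    {S : Shuffle n m} (hS : L ≤ S.length) : G e S = 0 := by
  suffices lengthFiltration m tE ι L ≤ LinearMap.ker (LinearMap.proj S ∘ₗ G) from this he
  refine lengthFiltration_le fun S' hS' w => ?_
  have : S ≠ S' := by rintro rfl; omega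
  simp [h.map_translate, this]

variable (hn : n = k + m) (hk : k ≤ n)

/-- Only the leading term of the Clifford action contributes to the coordinate at the longest
shuffle. -/
theorem clifford_apply_top (r : LaurentClifford R (Fin n)) (e : E) :
    G (πE r e) ((Shuffle.base hk).compl hn) =
      πW (perm ((Shuffle.base hk).compl hn).positionPerm r)
        (G e ((Shuffle.base hk).compl hn)) := by
  set top := (Shuffle.base hk).compl hn with htop
  suffices LinearMap.proj top ∘ₗ G ∘ₗ πE r =
      πW (perm top.positionPerm r) ∘ₗ LinearMap.proj top ∘ₗ G from LinearMap.congr_fun this e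
  refine h.ext_translate hm fun S w => ?_
  have leading := h.apply_eq_zero_of_mem (h.clifford_translate_sub_mem S r w) (S.length_le hn hk)
  rw [map_sub, Pi.sub_apply, sub_eq_zero, h.map_translate, ← htop] at leading
  simp only [LinearMap.comp_apply, LinearMap.proj_apply, leading, h.map_translate]
  by_cases hS : top = S
  · simp [← hS]
  · simp [hS]

theorem hecke_apply_top {i : Fin (n - 1)} (hi' : (i : ℕ) + 1 ≠ k) (e : E) :
    G (tE i e) ((Shuffle.base hk).compl hn) =
      t (((Shuffle.base hk).compl hn).position (lo i)) (G e ((Shuffle.base hk).compl hn)) := by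
  rw [h.map_hecke, Shuffle.hecke_apply, if_pos]
  simp only [Shuffle.compl_apply, Shuffle.base_apply, lo, hi]
  congr 1
  rw [decide_eq_decide]
  omega

end IsShuffleCoordinates

/-! ### Duality of induced modules -/

/-- The map `Θ` from a module induced from type `(k, m)` to the dual of the module induced from type
`(m, k)`, which is semilinear for the antiautomorphism `T ↦ T + ξ C C'`, and pairs the generating
submodule `W'` with the coordinate at the longest shuffle through `B`. -/
structure IsInducedPairing {R E W E' W' : Type*} [CommRing R] [AddCommGroup E] [Module R E]
    [AddCommGroup W] [Module R W] [AddCommGroup E'] [Module R E'] [AddCommGroup W'] [Module R W']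
    (ξ : R) {n m k : ℕ} (hn : n = k + m) (hk : k ≤ n)
    (πE : LaurentClifford R (Fin n) →ₐ[R] Module.End R E) (tE : Fin (n - 1) → Module.End R E)
    (G : E →ₗ[R] (Shuffle n m → W)) (tE' : Fin (n - 1) → Module.End R E') (ι' : W' →ₗ[R] E')
    (B : W' →ₗ[R] W →ₗ[R] R) (Θ : E' →ₗ[R] Module.Dual R E) : Prop where
  map_hecke : ∀ i e' e, Θ (tE' i e') e =
    Θ e' (tE i e + ξ • πE (LaurentClifford.c (lo i) * LaurentClifford.c (hi i)) e)
  map_ι : ∀ ω e, Θ (ι' ω) e = B ω (G e ((Shuffle.base hk).compl hn))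

namespace IsInducedPairing

section

variable {R E W E' W' : Type*} [CommRing R] [AddCommGroup E] [Module R E]
  [AddCommGroup W] [Module R W] [AddCommGroup E'] [Module R E'] [AddCommGroup W'] [Module R W']
  {ξ : R} {n m k : ℕ} {hn : n = k + m} {hm : m ≤ n} {hk : k ≤ n}
  {πE : LaurentClifford R (Fin n) →ₐ[R] Module.End R E} {tE : Fin (n - 1) → Module.End R E}
  {πW : LaurentClifford R (Fin n) →ₐ[R] Module.End R W} {t : ℕ → Module.End R W}
  {ι : W →ₗ[R] E} {G : E →ₗ[R] (Shuffle n m → W)}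
  {πE' : LaurentClifford R (Fin n) →ₐ[R] Module.End R E'} {tE' : Fin (n - 1) → Module.End R E'}
  {πW' : LaurentClifford R (Fin n) →ₐ[R] Module.End R W'} {t' : ℕ → Module.End R W'}
  {ι' : W' →ₗ[R] E'} {B : W' →ₗ[R] W →ₗ[R] R} {Θ : E' →ₗ[R] Module.Dual R E}
  (hΘ : IsInducedPairing ξ hn hk πE tE G tE' ι' B Θ)
  (h : IsShuffleCoordinates ξ hm πE tE πW t ι G) (h' : IsYoungGenerated ξ k πE' tE' πW' t' ι')
include hΘ h h'

theorem translate_of_mem (S' : Shuffle n k) : ∀ ω, ∀ e ∈ lengthFiltration m tE ι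
    (S'.compl hn).length, Θ (translate tE' ι' S' ω) e = 0 := by
  induction S' using Shuffle.descInduction with
  | base hk =>
    intro ω e he
    rw [translate_base, hΘ.map_ι, h.apply_eq_zero_of_mem he le_rfl, map_zero]
  | desc S' j hlo hhi ih =>
    intro ω e he
    have len := Shuffle.length_act_of_desc hlo hhi
    have len_compl := Shuffle.length_act_of_asc (S := S'.compl hn) (i := j) (by simp [hlo])
      (by simp [hhi])
    rw [h'.translate_of_desc hlo hhi, hΘ.map_hecke]
    refine ih _ (by omega) ω _ ?_
    rw [Shuffle.compl_act, len_compl]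
    exact add_mem (h.hecke_mem j he)
      (Submodule.smul_mem _ _ (h.clifford_mem _ (lengthFiltration_mono (Nat.le_succ _) he)))

theorem translate_translate (S' : Shuffle n k) : ∀ ω (S : Shuffle n m),
    S.length = (S'.compl hn).length → ∀ w, Θ (translate tE' ι' S' ω) (translate tE ι S w) =
      if S = S'.compl hn then B ω w else 0 := by
  induction S' using Shuffle.descInduction with
  | base hk =>
    intro ω S _ w
    rw [translate_base, hΘ.map_ι, h.map_translate, Pi.single_apply, apply_ite (B ω), map_zero]
    simp only [eq_comm]
  | desc S' j hlo hhi ih =>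
    intro ω S hS w
    have len := Shuffle.length_act_of_desc hlo hhi
    have hlo' : (S'.compl hn).1 (lo j) = true := by simp [hlo]
    have hhi' : (S'.compl hn).1 (hi j) = false := by simp [hhi]
    have len_compl := Shuffle.length_act_of_asc hlo' hhi'
    have lower : ∀ e ∈ lengthFiltration m tE ι (S.length + 1),
        Θ (translate tE' ι' (S'.act j) ω) e = 0 := fun e he =>
      hΘ.translate_of_mem h h' (S'.act j) ω e (by rwa [Shuffle.compl_act, len_compl, ← hS])
    rw [h'.translate_of_desc hlo hhi, hΘ.map_hecke, map_add, lower _ (Submodule.smul_mem _ _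
      (h.clifford_mem _ (translate_mem_lengthFiltration (Nat.lt_succ_self _) w))), add_zero]
    by_cases hasc : S.1 (lo j) = true ∧ S.1 (hi j) = false
    · have len_S := Shuffle.length_act_of_asc hasc.1 hasc.2
      rw [h.hecke_translate_of_asc hasc.1 hasc.2, ih _ (by omega) ω _
        (by rw [Shuffle.compl_act]; omega), Shuffle.compl_act]
      refine if_congr ⟨fun e => ?_, fun e => by rw [e]⟩ rfl rfl
      rw [← S.act_act j, e, Shuffle.act_act]
    · rw [if_neg (by rintro rfl; exact hasc ⟨hlo', hhi'⟩)]
      exact lower _ (h.hecke_translate_mem hasc w)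

/-- The matrix of `Θ` with respect to translates is triangular for the length, with `B` along the
diagonal. -/
theorem translateSum_injective (hB : Function.Injective B) :
    Function.Injective (Θ ∘ₗ translateSum k tE' ι') := by
  rw [injective_iff_map_eq_zero]
  intro v hv
  classical
  by_contra hne
  obtain ⟨S₀, hS₀⟩ := Function.ne_iff.1 hne
  obtain ⟨S', hS', hmin⟩ := Finset.exists_min_image {S' : Shuffle n k | v S' ≠ 0}
    (fun S' => (S'.compl hn).length) ⟨S₀, by simpa using hS₀⟩
  refine (Finset.mem_filter.1 hS').2 (hB (LinearMap.ext fun w => ?_))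
  have diag := LinearMap.congr_fun hv (translate tE ι (S'.compl hn) w)
  rw [LinearMap.comp_apply, translateSum_apply, map_sum, LinearMap.sum_apply,
    Finset.sum_eq_single S' (fun S'' _ hne => ?_) (by simp),
    hΘ.translate_translate h h' S' _ _ rfl, if_pos rfl] at diag
  · rw [diag, map_zero]
    rfl
  · by_cases h0 : v S'' = 0
    · rw [h0, map_zero, map_zero, LinearMap.zero_apply]
    · rcases (hmin S'' (by simpa using h0)).lt_or_eq with hlt | heq
      · exact hΘ.translate_of_mem h h' S'' _ _ (translate_mem_lengthFiltration hlt w)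
      · have compl_ne : S'.compl hn ≠ S''.compl hn := fun e =>
          hne ((Shuffle.complEquiv hn).injective e).symm
        rw [hΘ.translate_translate h h' S'' _ _ heq, if_neg compl_ne]

end

theorem bijective {F E W E' W' : Type*} [Field F] [AddCommGroup E] [Module F E] [AddCommGroup W]
    [Module F W] [AddCommGroup E'] [Module F E'] [AddCommGroup W'] [Module F W']
    [FiniteDimensional F W] [FiniteDimensional F W'] {ξ : F} {n m k : ℕ} {hn : n = k + m}
    {hm : m ≤ n} {hk : k ≤ n} {πE : LaurentClifford F (Fin n) →ₐ[F] Module.End F E}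
    {tE : Fin (n - 1) → Module.End F E} {πW : LaurentClifford F (Fin n) →ₐ[F] Module.End F W}
    {t : ℕ → Module.End F W} {ι : W →ₗ[F] E} {G : E →ₗ[F] (Shuffle n m → W)}
    {πE' : LaurentClifford F (Fin n) →ₐ[F] Module.End F E'} {tE' : Fin (n - 1) → Module.End F E'}
    {πW' : LaurentClifford F (Fin n) →ₐ[F] Module.End F W'} {t' : ℕ → Module.End F W'}
    {ι' : W' →ₗ[F] E'} {B : W' →ₗ[F] W →ₗ[F] F} {Θ : E' →ₗ[F] Module.Dual F E}
    (hΘ : IsInducedPairing ξ hn hk πE tE G tE' ι' B Θ)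
    (h : IsShuffleCoordinates ξ hm πE tE πW t ι G) (h' : IsYoungGenerated ξ k πE' tE' πW' t' ι')
    (hB : Function.Injective B) (hW : Module.finrank F W' = Module.finrank F W) :
    Function.Bijective Θ := by
  have hinj := hΘ.translateSum_injective h h' hB
  have hsum : Function.Bijective (translateSum k tE' ι') :=
    ⟨Function.Injective.of_comp hinj, h'.translateSum_surjective hk⟩
  have injective : Function.Injective Θ := Function.Injective.of_comp_right hinj hsum.surjective
  have eE := LinearEquiv.ofBijective G h.bijective
  have eE' := LinearEquiv.ofBijective _ hsum
  have : FiniteDimensional F E := Module.Finite.equiv eE.symm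
  have : FiniteDimensional F E' := Module.Finite.equiv eE'
  have finrank_eq : Module.finrank F E' = Module.finrank F (Module.Dual F E) := by
    rw [Subspace.dual_finrank_eq, eE.finrank_eq, ← eE'.finrank_eq, Module.finrank_pi_fintype,
      Module.finrank_pi_fintype]
    simp [hW, Fintype.card_congr (Shuffle.complEquiv hn)]
  exact ⟨injective, (LinearMap.injective_iff_surjective_of_finrank_eq_finrank finrank_eq).1
    injective⟩

end IsInducedPairing

/-! ### Parabolic subalgebras and their induced modules -/

theorem H.induction {F : Type} [Field F] {q : F} {n : ℕ} {p : H F q n → Prop}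
    (ofLaurentClifford : ∀ r, p (H.ofLaurentClifford q r)) (T : ∀ i, p (T F q i))
    (mul : ∀ a b, p a → p b → p (a * b)) (add : ∀ a b, p a → p b → p (a + b))
    (a : H F q n) : p a := by
  have X (i) : p (X F q i) := by simpa using ofLaurentClifford (LaurentClifford.x i)
  have C (i) : p (C F q i) := by simpa using ofLaurentClifford (LaurentClifford.c i)
  obtain ⟨r, rfl⟩ := RingQuot.mkAlgHom_surjective F (Rel F q n) a
  induction r using FreeAlgebra.induction with
  | grade0 r => simpa using ofLaurentClifford (algebraMap F _ r)
  | grade1 g =>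
    cases g with
    | X i => exact X i
    | Xinv i =>
      change p (Xinv F q i)
      rw [Xinv_eq]
      exact mul _ _ (mul _ _ (C i) (X i)) (C i)
    | C i => exact C i
    | T i => exact T i
  | mul a b ha hb => exact (map_mul (RingQuot.mkAlgHom F (Rel F q n)) a b).symm ▸ mul _ _ ha hb
  | add a b ha hb => exact (map_add (RingQuot.mkAlgHom F (Rel F q n)) a b).symm ▸ add _ _ ha hb

theorem inYoung_s_iff {n m l : ℕ} (hn : n = m + l) (j : Fin (n - 1)) :
    InYoung [m, l] (s j) ↔ (j : ℕ) + 1 ≠ m := by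
  have blk_eq (p : Fin n) : blk [m, l] p = if (p : ℕ) < m then 0 else 1 := by
    have := p.isLt
    simp only [blk]
    split_ifs <;> omega
  have lo_val : ((lo j : Fin n) : ℕ) = j := rfl
  have hi_val : ((hi j : Fin n) : ℕ) = j + 1 := rfl
  have blk_lo_eq_blk_hi :
      blk [m, l] (lo j : Fin n) = blk [m, l] (hi j : Fin n) ↔ (j : ℕ) + 1 ≠ m := by
    rw [blk_eq, blk_eq, lo_val, hi_val]
    split_ifs <;> simp <;> omega
  rw [← blk_lo_eq_blk_hi]
  refine ⟨fun h => by simpa [s_lo] using (h (lo j)).symm, fun h p => ?_⟩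
  rcases eq_or_ne p (lo j) with rfl | hlo
  · rw [s_lo, h]
  rcases eq_or_ne p (hi j) with rfl | hhi
  · rw [s_hi, h]
  · rw [s_of_ne hlo hhi]

namespace parabolicC

variable {F} (q : F) {n m l : ℕ}

/-- The canonical homomorphism from the Laurent–Clifford algebra to a parabolic subalgebra. -/
noncomputable def ofLaurentClifford (μ : List ℕ) :
    LaurentClifford F (Fin n) →ₐ[F] parabolicC F q (n := n) μ :=
  (H.ofLaurentClifford q).codRestrict _ fun r => by
    induction r using LaurentClifford.induction with
    | algebraMap r =>
      rw [AlgHom.commutes]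
      exact Subalgebra.algebraMap_mem _ r
    | x i =>
      rw [H.ofLaurentClifford_x]
      exact Algebra.subset_adjoin (Or.inl (Or.inl (Or.inl ⟨i, rfl⟩)))
    | c i =>
      rw [H.ofLaurentClifford_c]
      exact Algebra.subset_adjoin (Or.inl (Or.inr ⟨i, rfl⟩))
    | mul a b ha hb =>
      rw [map_mul]
      exact mul_mem ha hb
    | add a b ha hb =>
      rw [map_add]
      exact add_mem ha hb

@[simp]
theorem coe_ofLaurentClifford (μ : List ℕ) (r : LaurentClifford F (Fin n)) :
    (ofLaurentClifford q μ r : H F q n) = H.ofLaurentClifford q r := rfl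

/-- The generator `T_j` of the parabolic subalgebra of type `(m, l)`, and `0` at the numbers `j`
which are not nodes of the Young subgroup. -/
noncomputable def hecke (hn : n = m + l) (j : ℕ) : parabolicC F q (n := n) [m, l] :=
  if h : j < n - 1 ∧ j + 1 ≠ m then
    ⟨T F q ⟨j, h.1⟩, Algebra.subset_adjoin (Or.inr ⟨_, (inYoung_s_iff hn _).2 h.2, rfl⟩)⟩
  else 0

theorem coe_hecke (hn : n = m + l) (j : Fin (n - 1)) (hj : (j : ℕ) + 1 ≠ m) :
    (hecke q hn j : H F q n) = T F q j := by
  rw [hecke, dif_pos ⟨j.isLt, hj⟩]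

theorem isYoungHeckeFamily_hecke (hn : n = m + l) :
    IsYoungHeckeFamily (q - q⁻¹) n m (hecke q hn) := by
  have coe {j : ℕ} (h₁ : j + 1 < n) (h₂ : j + 1 ≠ m) :
      (hecke q hn j : H F q n) = T F q ⟨j, by omega⟩ := coe_hecke q hn ⟨j, by omega⟩ h₂
  constructor
  · intro j h₁ h₂
    ext
    simpa [coe h₁ h₂] using (H.isHeckeCliffordPair q).quad _
  · intro j h₁ h₂ h₃
    ext
    simpa [coe (show j + 1 < n by omega) h₂, coe h₁ h₃] using
      (H.isHeckeCliffordPair q).braid ⟨j, by omega⟩ ⟨j + 1, by omega⟩ rfl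
  · intro i j h₁ h₂ h₃ h₄
    ext
    simpa [coe (show i + 1 < n by omega) h₃, coe h₂ h₄] using
      (H.isHeckeCliffordPair q).far ⟨i, by omega⟩ ⟨j, by omega⟩ h₁

theorem ofLaurentClifford_mul_hecke (hn : n = m + l) (j : Fin (n - 1)) (hj : (j : ℕ) + 1 ≠ m)
    (r : LaurentClifford F (Fin n)) : ofLaurentClifford q [m, l] r * hecke q hn j =
      hecke q hn j * ofLaurentClifford q [m, l] (nodePerm j r) +
        ofLaurentClifford q [m, l] (nodeDerivation (q - q⁻¹) j r) := by
  ext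
  simpa [coe_hecke q hn j hj] using H.ofLaurentClifford_mul_T q j r

open LaurentClifford in
theorem equivariant_of_generators (hn : n = m + l) {W P : Type*} [AddCommGroup W] [Module F W]
    [AddCommGroup P] [Module F P] {ρ : parabolicC F q (n := n) [m, l] →ₐ[F] Module.End F W}
    {ρP : H F q n →ₐ[F] Module.End F P} {f : W →ₗ[F] P}
    (hx : ∀ i w, f (ρ (ofLaurentClifford q _ (x i)) w) = ρP (X F q i) (f w))
    (hc : ∀ i w, f (ρ (ofLaurentClifford q _ (c i)) w) = ρP (C F q i) (f w))
    (hT : ∀ j : Fin (n - 1), (j : ℕ) + 1 ≠ m →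
      ∀ w, f (ρ (hecke q hn j) w) = ρP (T F q j) (f w))
    (b : parabolicC F q (n := n) [m, l]) (w : W) :
    f (ρ b w) = ρP ((parabolicC F q [m, l]).val b) (f w) := by
  obtain ⟨b, hb⟩ := b
  change b ∈ Algebra.adjoin F _ at hb
  induction hb using Algebra.adjoin_induction generalizing w with
  | mem b hb =>
    rcases hb with ((⟨i, rfl⟩ | ⟨i, rfl⟩) | ⟨i, rfl⟩) | ⟨j, hj, rfl⟩
    · have X_coe : (⟨X F q i, Algebra.subset_adjoin (Or.inl (Or.inl (Or.inl ⟨i, rfl⟩)))⟩ :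
          parabolicC F q (n := n) [m, l]) = ofLaurentClifford q _ (x i) :=
        Subtype.ext (by simp)
      rw [X_coe, hx]
      simp
    · have Xinv_coe : (⟨Xinv F q i, Algebra.subset_adjoin (Or.inl (Or.inl (Or.inr ⟨i, rfl⟩)))⟩ :
          parabolicC F q (n := n) [m, l]) = ofLaurentClifford q _ (c i) *
            ofLaurentClifford q _ (x i) * ofLaurentClifford q _ (c i) :=
        Subtype.ext (by simp [H.Xinv_eq])
      simp [Xinv_coe, hx, hc]
    · have C_coe : (⟨C F q i, Algebra.subset_adjoin (Or.inl (Or.inr ⟨i, rfl⟩))⟩ :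
          parabolicC F q (n := n) [m, l]) = ofLaurentClifford q _ (c i) :=
        Subtype.ext (by simp)
      rw [C_coe, hc]
      simp
    · have hj := (inYoung_s_iff hn j).1 hj
      have T_coe : (⟨T F q j, Algebra.subset_adjoin (Or.inr ⟨j, (inYoung_s_iff hn j).2 hj, rfl⟩)⟩ :
          parabolicC F q (n := n) [m, l]) = hecke q hn j :=
        Subtype.ext (coe_hecke q hn j hj).symm
      rw [T_coe, hT j hj]
      simp [coe_hecke q hn j hj]
  | algebraMap r =>
    change f (ρ (algebraMap F _ r) w) = ρP (algebraMap F _ r) (f w)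
    simp [Module.algebraMap_end_apply]
  | add a b ha hb iha ihb =>
    change f (ρ (⟨a, ha⟩ + ⟨b, hb⟩) w) = ρP (a + b) (f w)
    simpa using congrArg₂ (· + ·) (iha w) (ihb w)
  | mul a b ha hb iha ihb =>
    change f (ρ (⟨a, ha⟩ * ⟨b, hb⟩) w) = ρP (a * b) (f w)
    rw [map_mul, map_mul, Module.End.mul_apply, Module.End.mul_apply, iha, ihb]
    rfl

end parabolicC

/-! ### The module induced from a parabolic subalgebra -/

theorem Shuffle.hecke_single_base {R W : Type*} [CommRing R] [AddCommGroup W] [Module R W]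
    {n m : ℕ} (hm : m ≤ n) (ξ : R) (t : ℕ → Module.End R W) {i : Fin (n - 1)}
    (hi' : (i : ℕ) + 1 ≠ m) (w : W) :
    hecke ξ t i (Pi.single (base hm) w) = Pi.single (base hm) (t i w) := by
  have heq : (base hm).1 (lo i) = (base hm).1 (hi i) := by
    simp only [base_apply, lo, hi, decide_eq_decide]
    omega
  funext S
  rw [hecke_apply]
  rcases eq_or_ne S (base hm) with rfl | hS
  · rw [if_pos heq, position_base]
    simp [lo]
  · have act_ne : S.act i ≠ base hm := fun e => hS (by
      rw [← S.act_act i, e, act_of_eq heq])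
    simp [hS, act_ne]

section toCoinduced

open LaurentClifford

variable {F} {q : F} {n m l : ℕ} {W : Type*} [AddCommGroup W] [Module F W]
  (ρ : parabolicC F q (n := n) [m, l] →ₐ[F] Module.End F W)

/-- The map from a module over a parabolic subalgebra to the module coinduced from the finite
Hecke algebra, with values in the functions supported at the base shuffle. -/
noncomputable def toCoinduced (hm : m ≤ n) :
    W →ₗ[F] (LaurentClifford F (Fin n) →ₗ[F] (Shuffle n m → W)) :=
  LinearMap.compRight F (LinearMap.single F (fun _ => W) (Shuffle.base hm)) ∘ₗ
    (ρ.toLinearMap ∘ₗ (parabolicC.ofLaurentClifford q [m, l]).toLinearMap).flip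

theorem toCoinduced_apply (hm : m ≤ n) (w : W) (r : LaurentClifford F (Fin n)) :
    toCoinduced ρ hm w r =
      Pi.single (Shuffle.base hm) (ρ (parabolicC.ofLaurentClifford q _ r) w) := rfl

theorem parabolicC.isHeckeFamily_hecke (hn : n = m + l) : IsHeckeFamily (q - q⁻¹)
    (Shuffle.hecke (n := n) (m := m) (q - q⁻¹) fun j => ρ (hecke q hn j)) :=
  Shuffle.isHeckeFamily_hecke ((isYoungHeckeFamily_hecke q hn).map ρ)

/-- The representation of the affine Hecke–Clifford superalgebra coinduced from functions on
shuffles. -/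
noncomputable def coinducedRep (hn : n = m + l) : H F q n →ₐ[F]
    Module.End F (LaurentClifford F (Fin n) →ₗ[F] (Shuffle n m → W)) :=
  (Coinduced.isHeckeCliffordPair (parabolicC.isHeckeFamily_hecke ρ hn)).lift

theorem toCoinduced_equivariant (hn : n = m + l) (hm : m ≤ n)
    (b : parabolicC F q (n := n) [m, l]) (w : W) :
    toCoinduced ρ hm (ρ b w) =
      coinducedRep ρ hn ((parabolicC F q [m, l]).val b) (toCoinduced ρ hm w) := by
  refine parabolicC.equivariant_of_generators q hn (fun i w => ?_) (fun i w => ?_)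
    (fun j hj w => ?_) b w
  · ext1 r
    simp [coinducedRep, toCoinduced_apply]
  · ext1 r
    simp [coinducedRep, toCoinduced_apply]
  · ext1 r
    rw [coinducedRep, IsHeckeCliffordPair.lift_T, Coinduced.hecke_apply, toCoinduced_apply,
      toCoinduced_apply, toCoinduced_apply, Shuffle.hecke_single_base hm _ _ hj, ← Pi.single_add]
    have move := congrArg (fun b => ρ b w) (parabolicC.ofLaurentClifford_mul_hecke q hn j hj r)
    simp only [map_mul, map_add, LinearMap.add_apply, Module.End.mul_apply] at move
    rw [move]

end toCoinduced

namespace IsInducedAlong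

section

variable {F} {A B : Type} [Ring A] [Algebra F A] [Ring B] [Algebra F B] {φ : B →ₐ[F] A}
  {W E : Type} [AddCommGroup W] [Module F W] [AddCommGroup E] [Module F E]
  {ρ : B →ₐ[F] Module.End F W} {ρE : A →ₐ[F] Module.End F E} {ι : W →ₗ[F] E}

theorem eq_top_of_range_le (h : IsInducedAlong F φ ρ ρE ι) {U : Submodule F E}
    (hι : LinearMap.range ι ≤ U) (hU : ∀ a, U ≤ U.comap (ρE a)) : U = ⊤ := by
  let ρU : A →ₐ[F] Module.End F U := AlgHom.ofLinearMap
    { toFun := fun a => (ρE a).restrict (hU a)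
      map_add' := fun a b => by ext u; simp [LinearMap.restrict_apply]
      map_smul' := fun r a => by ext u; simp [LinearMap.restrict_apply] }
    (by ext u; simp [LinearMap.restrict_apply])
    (fun a b => by ext u; simp [LinearMap.restrict_apply])
  obtain ⟨f, ⟨hfE, hfι⟩, -⟩ := h.2 U ρU (ι.codRestrict U fun w => hι ⟨w, rfl⟩)
    (fun b w => Subtype.ext (h.1 b w))
  have subtype_comp : U.subtype ∘ₗ f = LinearMap.id := (h.2 E ρE ι h.1).unique
    ⟨fun a e => congrArg Subtype.val (hfE a e), fun w => congrArg Subtype.val (hfι w)⟩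
    ⟨fun _ _ => rfl, fun _ => rfl⟩
  refine eq_top_iff.2 fun e _ => ?_
  rw [← LinearMap.id_apply (R := F) e, ← subtype_comp]
  exact (f e).2

end

variable {F} {q : F} {n m l : ℕ} (hn : n = m + l) {W E : Type} [AddCommGroup W] [Module F W]
  [AddCommGroup E] [Module F E] {ρ : parabolicC F q (n := n) [m, l] →ₐ[F] Module.End F W}
  {ρE : H F q n →ₐ[F] Module.End F E} {ι : W →ₗ[F] E}
  (h : IsInducedAlong F (A := H F q n) (B := ↥(parabolicC F q (n := n) [m, l]))
    (parabolicC F q (n := n) [m, l]).val ρ ρE ι)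
include h

theorem isYoungGenerated : IsYoungGenerated (q - q⁻¹) m (ρE.comp (H.ofLaurentClifford q))
    (fun i => ρE (T F q i)) (ρ.comp (parabolicC.ofLaurentClifford q [m, l]))
    (fun j => ρ (parabolicC.hecke q hn j)) ι where
  pair := (H.isHeckeCliffordPair q).map ρE
  clifford r w := (h.1 (parabolicC.ofLaurentClifford q _ r) w).symm
  hecke i w hi' := by rw [h.1, Subalgebra.coe_val, parabolicC.coe_hecke q hn i hi']
  span U hι hx hT := h.eq_top_of_range_le hι fun a => by
    induction a using H.induction with
    | ofLaurentClifford r => exact hx r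
    | T i => exact hT i
    | mul a b ha hb =>
      intro e he
      simpa using ha (hb he)
    | add a b ha hb =>
      intro e he
      rw [Submodule.mem_comap, map_add]
      exact add_mem (ha he) (hb he)

theorem exists_isShuffleCoordinates (hm : m ≤ n) : ∃ G : E →ₗ[F] (Shuffle n m → W),
    IsShuffleCoordinates (q - q⁻¹) hm (ρE.comp (H.ofLaurentClifford q)) (fun i => ρE (T F q i))
      (ρ.comp (parabolicC.ofLaurentClifford q [m, l]))
      (fun j => ρ (parabolicC.hecke q hn j)) ι G := by
  obtain ⟨g, ⟨hgE, hgι⟩, -⟩ := h.2 _ (coinducedRep ρ hn) (toCoinduced ρ hm)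
    (toCoinduced_equivariant ρ hn hm)
  refine ⟨LinearMap.applyₗ 1 ∘ₗ g, h.isYoungGenerated hn, fun i e => ?_, fun w => ?_⟩
  · simp [hgE, coinducedRep]
  · simp [hgι, toCoinduced_apply]

end IsInducedAlong

/-! ### The Koszul pairing -/

section koszulSign

variable {R A : Type*} [CommRing R] [Invertible (2 : R)] [Ring A] [Algebra R A] {a b y : A}

variable (R) in
/-- The operator `½(1 + a + b - ab)`. For the commuting parity operators `a` and `b` of two factors
of a tensor product, it is the Koszul sign `x ⊗ y ↦ (-1)^{|x||y|} x ⊗ y`. -/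
def koszulSign (a b : A) : A := (⅟2 : R) • (1 + a + b - a * b)

theorem koszulSign_comm (hab : Commute a b) : koszulSign R a b = koszulSign R b a := by
  rw [koszulSign, koszulSign, hab.eq, add_right_comm]

theorem koszulSign_mul_self (ha : a * a = 1) (hb : b * b = 1) (hab : Commute a b) :
    koszulSign R a b * koszulSign R a b = 1 := by
  have square : (1 + a + b - a * b) * (1 + a + b - a * b) = (2 * 2 : R) • (1 : A) := by
    have aab : a * (a * b) = b := by rw [← mul_assoc, ha, one_mul]
    have bab : b * (a * b) = a := by rw [hab.eq, ← mul_assoc, hb, one_mul]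
    have aba : a * b * a = b := by rw [hab.eq, mul_assoc, ha, mul_one]
    have abb : a * b * b = a := by rw [mul_assoc, hb, mul_one]
    have abab : a * b * (a * b) = 1 := by rw [mul_assoc, bab, ha]
    simp only [sub_mul, add_mul, mul_add, mul_sub, one_mul, mul_one, ha, hb, ← hab.eq, aab, bab,
      aba, abb, abab]
    module
  rw [koszulSign, smul_mul_smul_comm, square, smul_smul,
    show ⅟2 * ⅟2 * (2 * 2) = (⅟2 * 2) * (⅟2 * 2 : R) by ring, invOf_mul_self, one_mul, one_smul]

theorem commute_koszulSign (ha : Commute a y) (hb : Commute b y) : Commute y (koszulSign R a b) :=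
  ((((Commute.one_right y).add_right ha.symm).add_right hb.symm).sub_right
    (ha.symm.mul_right hb.symm)).smul_right _

theorem mul_koszulSign_of_odd_right (ha : a * a = 1) (hab : Commute a b) (hay : Commute a y)
    (hby : b * y = -(y * b)) : y * koszulSign R a b = koszulSign R a b * (a * y) := by
  have aay : a * (a * y) = y := by rw [← mul_assoc, ha, one_mul]
  have bay : b * (a * y) = -(a * (y * b)) := by
    rw [← mul_assoc, ← hab.eq, mul_assoc, hby, mul_neg]
  have abay : a * b * (a * y) = -(y * b) := by
    rw [mul_assoc, bay, mul_neg, ← mul_assoc a y, ← mul_assoc, aay]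
  have yab : y * (a * b) = a * (y * b) := by rw [← mul_assoc, ← hay.eq, mul_assoc]
  simp only [koszulSign, mul_smul_comm, smul_mul_assoc, mul_add, mul_sub, add_mul, sub_mul,
    mul_one, one_mul, aay, bay, abay, yab, ← hay.eq]
  congr 1
  abel

theorem mul_koszulSign_of_odd_left (hb : b * b = 1) (hab : Commute a b) (hby : Commute b y)
    (hay : a * y = -(y * a)) : b * y * koszulSign R a b = koszulSign R a b * y := by
  rw [mul_assoc, koszulSign_comm hab, mul_koszulSign_of_odd_right hb hab.symm hby hay,
    ← mul_assoc, (commute_koszulSign (Commute.refl b) hab).eq, mul_assoc, ← mul_assoc b b, hb,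
    one_mul]

end koszulSign

section koszulPairing

open TensorProduct

variable {R M N : Type*} [CommRing R] [AddCommGroup M] [Module R M] [AddCommGroup N] [Module R N]

theorem commute_rTensor_lTensor (A : Module.End R M) (B : Module.End R N) :
    Commute (A.rTensor N) (B.lTensor M) :=
  (LinearMap.rTensor_comp_lTensor M A B).trans (LinearMap.lTensor_comp_rTensor M A B).symm

theorem rTensor_mul_self {J : Module.End R M} (hJ : J * J = 1) :
    J.rTensor N * J.rTensor N = 1 := by
  rw [← LinearMap.rTensor_mul, hJ]
  exact LinearMap.rTensor_id N M

theorem lTensor_mul_self {J : Module.End R N} (hJ : J * J = 1) :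
    J.lTensor M * J.lTensor M = 1 := by
  rw [← LinearMap.lTensor_mul, hJ]
  exact LinearMap.lTensor_id M N

theorem dualDistrib_comm_map (A : Module.End R N) (D : Module.End R M)
    (ω : Module.Dual R N ⊗[R] Module.Dual R M) (w : M ⊗[R] N) :
    dualDistrib R M N (TensorProduct.comm R _ _ (map A.dualMap D.dualMap ω)) w =
      dualDistrib R M N (TensorProduct.comm R _ _ ω) (map D A w) := by
  induction ω using TensorProduct.induction_on with
  | zero => simp
  | add u v hu hv => simp only [map_add, LinearMap.add_apply, hu, hv]
  | tmul ν μ =>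
    induction w using TensorProduct.induction_on with
    | zero => simp
    | add u v hu hv => simp only [map_add, hu, hv]
    | tmul x y => simp

variable [Invertible (2 : R)]

/-- The pairing between `N* ⊗ M*` and `M ⊗ N` given by the natural one and the Koszul sign for the
parity operators `JM` and `JN`. -/
noncomputable def koszulPairing (JM : Module.End R M) (JN : Module.End R N) :
    (Module.Dual R N ⊗[R] Module.Dual R M) →ₗ[R] (M ⊗[R] N) →ₗ[R] R :=
  LinearMap.lcomp R R (koszulSign R (JM.rTensor N) (JN.lTensor M)) ∘ₗ dualDistrib R M N ∘ₗ
    (TensorProduct.comm R _ _).toLinearMap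

theorem koszulPairing_apply (JM : Module.End R M) (JN : Module.End R N)
    (ω : Module.Dual R N ⊗[R] Module.Dual R M) (w : M ⊗[R] N) :
    koszulPairing JM JN ω w = dualDistrib R M N (TensorProduct.comm R _ _ ω)
      (koszulSign R (JM.rTensor N) (JN.lTensor M) w) := rfl

variable {JM : Module.End R M} {JN : Module.End R N}

theorem koszulPairing_injective [Module.Free R M] [Module.Finite R M] [Module.Free R N]
    [Module.Finite R N] (hM : JM * JM = 1) (hN : JN * JN = 1) :
    Function.Injective (koszulPairing JM JN) := by
  intro ω ω' h
  suffices dualDistrib R M N (TensorProduct.comm R _ _ ω) =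
      dualDistrib R M N (TensorProduct.comm R _ _ ω') from
    (TensorProduct.comm R _ _).injective ((dualDistribEquiv R M N).injective this)
  refine LinearMap.ext fun w => ?_
  have sign_sign : koszulSign R (JM.rTensor N) (JN.lTensor M)
      (koszulSign R (JM.rTensor N) (JN.lTensor M) w) = w :=
    LinearMap.congr_fun (koszulSign_mul_self (R := R) (rTensor_mul_self hM) (lTensor_mul_self hN)
      (commute_rTensor_lTensor JM JN)) w
  rw [← sign_sign, ← koszulPairing_apply, ← koszulPairing_apply, h]

theorem koszulPairing_map {A : Module.End R N} {D : Module.End R M} {Q : Module.End R (M ⊗[R] N)}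
    (hQ : map D A * koszulSign R (JM.rTensor N) (JN.lTensor M) =
      koszulSign R (JM.rTensor N) (JN.lTensor M) * Q)
    (ω : Module.Dual R N ⊗[R] Module.Dual R M) (w : M ⊗[R] N) :
    koszulPairing JM JN (map A.dualMap D.dualMap ω) w = koszulPairing JM JN ω (Q w) := by
  rw [koszulPairing_apply, koszulPairing_apply, dualDistrib_comm_map]
  exact congrArg _ (LinearMap.congr_fun hQ w)

theorem koszulPairing_even_right {A : Module.End R N} (hA : Commute JN A)
    (ω : Module.Dual R N ⊗[R] Module.Dual R M) (w : M ⊗[R] N) :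
    koszulPairing JM JN (A.dualMap.rTensor _ ω) w = koszulPairing JM JN ω (A.lTensor M w) :=
  koszulPairing_map (D := 1) (commute_koszulSign (commute_rTensor_lTensor JM A)
    (hA.map (Module.End.lTensorAlgHom R N M))).eq ω w

theorem koszulPairing_even_left {D : Module.End R M} (hD : Commute JM D)
    (ω : Module.Dual R N ⊗[R] Module.Dual R M) (w : M ⊗[R] N) :
    koszulPairing JM JN (D.dualMap.lTensor _ ω) w = koszulPairing JM JN ω (D.rTensor N w) :=
  koszulPairing_map (A := 1) (commute_koszulSign (hD.map (Module.End.rTensorAlgHom R M N))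
    (commute_rTensor_lTensor D JN).symm).eq ω w

theorem koszulPairing_odd_right (hM : JM * JM = 1) {A : Module.End R N}
    (hA : JN * A = -(A * JN)) (ω : Module.Dual R N ⊗[R] Module.Dual R M) (w : M ⊗[R] N) :
    koszulPairing JM JN (A.dualMap.rTensor _ ω) w = koszulPairing JM JN ω (map JM A w) := by
  refine koszulPairing_map (D := 1) ?_ ω w
  rw [← LinearMap.rTensor_comp_lTensor M JM]
  refine mul_koszulSign_of_odd_right (y := A.lTensor M) (rTensor_mul_self hM)
    (commute_rTensor_lTensor JM JN) (commute_rTensor_lTensor JM A) ?_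
  rw [← LinearMap.lTensor_mul, hA, LinearMap.lTensor_neg, LinearMap.lTensor_mul]

theorem koszulPairing_odd_left (hN : JN * JN = 1) {D : Module.End R M}
    (hD : JM * D = -(D * JM)) (ω : Module.Dual R N ⊗[R] Module.Dual R M) (w : M ⊗[R] N) :
    koszulPairing JM JN (map JN.dualMap D.dualMap ω) w =
      koszulPairing JM JN ω (D.rTensor N w) := by
  refine koszulPairing_map ?_ ω w
  rw [← LinearMap.lTensor_comp_rTensor]
  refine mul_koszulSign_of_odd_left (y := D.rTensor N) (lTensor_mul_self hN)
    (commute_rTensor_lTensor JM JN) (commute_rTensor_lTensor D JN).symm ?_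
  rw [← LinearMap.rTensor_mul, hD, LinearMap.rTensor_neg, LinearMap.rTensor_mul]

end koszulPairing

/-! ### Graded modules and their outer tensor products -/

section graded

variable {F} {q : F} {n : ℕ} {M : Type*} [AddCommGroup M] [Module F M]

/-- The action of `τ(T_i)`. -/
noncomputable def tauT (ρ : H F q n →ₐ[F] Module.End F M) (i : Fin (n - 1)) : Module.End F M :=
  ρ (T F q i) + (q - q⁻¹) • (ρ (C F q (lo i)) * ρ (C F q (hi i)))

theorem map_tau_T {τ : H F q n →ₗ[F] H F q n} (hτ : IsTauAntiAut F q τ)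
    (ρ : H F q n →ₐ[F] Module.End F M) (i : Fin (n - 1)) : ρ (τ (T F q i)) = tauT ρ i := by
  rw [hτ.2.2.2.1, map_add, map_smul, map_mul, tauT]

/-- The parity operator `J` makes a representation of the affine Hecke–Clifford superalgebra
graded: the even generators preserve the parity and the odd ones reverse it. -/
structure IsParity (ρ : H F q n →ₐ[F] Module.End F M) (J : Module.End F M) : Prop where
  sq : J * J = 1
  X : ∀ i, Commute J (ρ (X F q i))
  C : ∀ i, J * ρ (C F q i) = -(ρ (C F q i) * J)
  T : ∀ i, Commute J (ρ (T F q i))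

namespace IsParity

variable {ρ : H F q n →ₐ[F] Module.End F M} {J : Module.End F M}

theorem of_isGradingAut {δ : H F q n →ₐ[F] H F q n} (hδ : IsGradingAut F q δ) (hJ : J * J = 1)
    (hρ : ∀ h, J * ρ h = ρ (δ h) * J) : IsParity ρ J where
  sq := hJ
  X i := by rw [Commute, SemiconjBy, hρ, hδ.1]
  C i := by rw [hρ, hδ.2.2.1, map_neg, neg_mul]
  T i := by rw [Commute, SemiconjBy, hρ, hδ.2.2.2]

theorem commute_tauT (h : IsParity ρ J) (i : Fin (n - 1)) : Commute J (tauT ρ i) := by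
  have commute_CC : Commute J (ρ (HC.C F q (lo i)) * ρ (HC.C F q (hi i))) := by
    rw [Commute, SemiconjBy, ← mul_assoc, h.C, neg_mul, mul_assoc, h.C, mul_neg, neg_neg,
      mul_assoc]
  exact (h.T i).add_right (commute_CC.smul_right _)

end IsParity

/-- The generators act on the dual space through `τ`. -/
structure IsTauDual (ρ : H F q n →ₐ[F] Module.End F M)
    (ρd : H F q n →ₐ[F] Module.End F (Module.Dual F M)) : Prop where
  X : ∀ i, ρd (X F q i) = (ρ (X F q i)).dualMap
  C : ∀ i, ρd (C F q i) = (ρ (C F q i)).dualMap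
  T : ∀ i, ρd (T F q i) = (tauT ρ i).dualMap

theorem IsTauDual.of_isTauAntiAut {ρ : H F q n →ₐ[F] Module.End F M}
    {ρd : H F q n →ₐ[F] Module.End F (Module.Dual F M)} {τ : H F q n →ₗ[F] H F q n}
    (hτ : IsTauAntiAut F q τ) (hρ : ∀ h φ x, ρd h φ x = φ (ρ (τ h) x)) : IsTauDual ρ ρd where
  X i := by ext φ x; rw [hρ, hτ.2.2.2.2.2.1]; rfl
  C i := by ext φ x; rw [hρ, hτ.2.2.2.2.1]; rfl
  T i := by ext φ x; rw [hρ, map_tau_T hτ]; rfl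

/-- The representation on the dual space of a module twisted by an antiautomorphism `τ`. -/
noncomputable def dualRep {A E : Type*} [Ring A] [Algebra F A] [AddCommGroup E] [Module F E]
    (ρ : A →ₐ[F] Module.End F E) (τ : A →ₗ[F] A) (h1 : τ 1 = 1)
    (hmul : ∀ a b, τ (a * b) = τ b * τ a) : A →ₐ[F] Module.End F (Module.Dual F E) :=
  AlgHom.ofLinearMap (Module.Dual.transpose ∘ₗ ρ.toLinearMap ∘ₗ τ)
    (by ext φ x; simp [h1, Module.Dual.transpose])
    (fun a b => by ext φ x; simp [hmul, Module.Dual.transpose])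

end graded

namespace IsOuter

open TensorProduct LaurentClifford parabolicC

variable {F} {q : F} {n m l : ℕ} {M N : Type} [AddCommGroup M] [Module F M] [AddCommGroup N]
  [Module F N] {ρM : H F q m →ₐ[F] Module.End F M} {ρN : H F q l →ₐ[F] Module.End F N}
  {J : Module.End F M} {ρT : parabolicC F q (n := n) [m, l] →ₐ[F] Module.End F (M ⊗[F] N)}
  (h : IsOuter F q n m l [m, l] ρM ρN J ρT)
include h

theorem x_left {p : Fin n} {i : Fin m} (hp : (p : ℕ) = i) :
    ρT (ofLaurentClifford q _ (x p)) = (ρM (X F q i)).rTensor N :=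
  h.1 p i _ hp (by simp)

theorem c_left {p : Fin n} {i : Fin m} (hp : (p : ℕ) = i) :
    ρT (ofLaurentClifford q _ (c p)) = (ρM (C F q i)).rTensor N :=
  h.2.2.1 p i _ hp (by simp)

theorem hecke_left (hn : n = m + l) {j : ℕ} {i : Fin (m - 1)} (hj : j = i) :
    ρT (hecke q hn j) = (ρM (T F q i)).rTensor N :=
  h.2.2.2.1 ⟨j, by omega⟩ i _ hj (coe_hecke q hn ⟨j, by omega⟩ (by simp only; omega))

theorem x_right {p : Fin n} {i : Fin l} (hp : (p : ℕ) = m + i) :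
    ρT (ofLaurentClifford q _ (x p)) = (ρN (X F q i)).lTensor M :=
  h.2.2.2.2.1 p i _ hp (by simp)

theorem c_right {p : Fin n} {i : Fin l} (hp : (p : ℕ) = m + i) :
    ρT (ofLaurentClifford q _ (c p)) = map J (ρN (C F q i)) :=
  h.2.2.2.2.2.2.1 p i _ hp (by simp)

theorem hecke_right (hn : n = m + l) {j : ℕ} {i : Fin (l - 1)} (hj : j = m + i) :
    ρT (hecke q hn j) = (ρN (T F q i)).lTensor M :=
  h.2.2.2.2.2.2.2 ⟨j, by omega⟩ i _ hj (coe_hecke q hn ⟨j, by omega⟩ (by simp only; omega))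

theorem tauT_left (hn : n = m + l) {j : ℕ} {p p' : Fin n} {i : Fin (m - 1)} (hj : j = i)
    (hp : (p : ℕ) = i) (hp' : (p' : ℕ) = i + 1) :
    ρT (hecke q hn j + (q - q⁻¹) • ofLaurentClifford q _ (c p * c p')) =
      (tauT ρM i).rTensor N := by
  rw [map_add, map_smul, map_mul, map_mul, h.hecke_left hn hj, h.c_left (i := lo i) hp,
    h.c_left (i := hi i) hp', tauT, LinearMap.rTensor_add, LinearMap.rTensor_smul,
    LinearMap.rTensor_mul]

theorem tauT_right (hn : n = m + l) (hJ : J * J = 1) {j : ℕ} {p p' : Fin n} {i : Fin (l - 1)}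
    (hj : j = m + i) (hp : (p : ℕ) = m + i) (hp' : (p' : ℕ) = m + (i + 1)) :
    ρT (hecke q hn j + (q - q⁻¹) • ofLaurentClifford q _ (c p * c p')) =
      (tauT ρN i).lTensor M := by
  rw [map_add, map_smul, map_mul, map_mul, h.hecke_right hn hj, h.c_right (i := lo i) hp,
    h.c_right (i := hi i) hp', ← TensorProduct.map_mul, hJ, tauT, LinearMap.lTensor_add,
    LinearMap.lTensor_smul]
  rfl

end IsOuter

section adjoint

open TensorProduct LaurentClifford parabolicC

variable {F} [Invertible (2 : F)] {q : F} {n m k : ℕ} {M N : Type} [AddCommGroup M] [Module F M]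
  [AddCommGroup N] [Module F N] {ρM : H F q m →ₐ[F] Module.End F M}
  {ρN : H F q k →ₐ[F] Module.End F N} {JM : Module.End F M} {JN : Module.End F N}
  {ρMd : H F q m →ₐ[F] Module.End F (Module.Dual F M)}
  {ρNd : H F q k →ₐ[F] Module.End F (Module.Dual F N)}
  {ρT₁ : parabolicC F q (n := n) [m, k] →ₐ[F] Module.End F (M ⊗[F] N)}
  {ρT₂ : parabolicC F q (n := n) [k, m] →ₐ[F]
    Module.End F (Module.Dual F N ⊗[F] Module.Dual F M)}
  (hM : IsParity ρM JM) (hN : IsParity ρN JN) (hMd : IsTauDual ρM ρMd) (hNd : IsTauDual ρN ρNd)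
  (hT₁ : IsOuter F q n m k [m, k] ρM ρN JM ρT₁)
  (hT₂ : IsOuter F q n k m [k, m] ρNd ρMd JN.dualMap ρT₂) (hn : n = k + m) (hk : k ≤ n)
  (ω : Module.Dual F N ⊗[F] Module.Dual F M) (w : M ⊗[F] N)
include hM hN hMd hNd hT₁ hT₂

theorem koszulPairing_x (p : Fin n) :
    koszulPairing JM JN (ρT₂ (ofLaurentClifford q _ (x p)) ω) w = koszulPairing JM JN ω
      (ρT₁ (ofLaurentClifford q _ (x (((Shuffle.base hk).compl hn).positionPerm p))) w) := by
  have position := Shuffle.position_compl_base hn hk p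
  by_cases hp : (p : ℕ) < k
  · rw [if_pos hp] at position
    rw [hT₂.x_left (i := ⟨p, hp⟩) rfl, hT₁.x_right (i := ⟨p, hp⟩) position, hNd.X]
    exact koszulPairing_even_right (hN.X _) ω w
  · have hpm : (p : ℕ) - k < m := by omega
    rw [if_neg hp] at position
    rw [hT₂.x_right (i := ⟨p - k, hpm⟩) (by simp only; omega),
      hT₁.x_left (i := ⟨p - k, hpm⟩) position, hMd.X]
    exact koszulPairing_even_left (hM.X _) ω w

theorem koszulPairing_c (p : Fin n) :
    koszulPairing JM JN (ρT₂ (ofLaurentClifford q _ (c p)) ω) w = koszulPairing JM JN ω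
      (ρT₁ (ofLaurentClifford q _ (c (((Shuffle.base hk).compl hn).positionPerm p))) w) := by
  have position := Shuffle.position_compl_base hn hk p
  by_cases hp : (p : ℕ) < k
  · rw [if_pos hp] at position
    rw [hT₂.c_left (i := ⟨p, hp⟩) rfl, hT₁.c_right (i := ⟨p, hp⟩) position, hNd.C]
    exact koszulPairing_odd_right hM.sq (hN.C _) ω w
  · have hpm : (p : ℕ) - k < m := by omega
    rw [if_neg hp] at position
    rw [hT₂.c_right (i := ⟨p - k, hpm⟩) (by simp only; omega),
      hT₁.c_left (i := ⟨p - k, hpm⟩) position, hMd.C]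
    exact koszulPairing_odd_left hN.sq (hM.C _) ω w

theorem koszulPairing_hecke (hn' : n = m + k) {i : Fin (n - 1)} (hi' : (i : ℕ) + 1 ≠ k) :
    koszulPairing JM JN (ρT₂ (hecke q hn i) ω) w = koszulPairing JM JN ω
      (ρT₁ (hecke q hn' (((Shuffle.base hk).compl hn).position (lo i)) + (q - q⁻¹) •
        ofLaurentClifford q _ (c (((Shuffle.base hk).compl hn).positionPerm (lo i)) *
          c (((Shuffle.base hk).compl hn).positionPerm (hi i)))) w) := by
  have position_lo := Shuffle.position_compl_base hn hk (lo i)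
  have position_hi := Shuffle.position_compl_base hn hk (hi i)
  have lo_val : ((lo i : Fin n) : ℕ) = i := rfl
  have hi_val : ((hi i : Fin n) : ℕ) = i + 1 := rfl
  by_cases hik : (i : ℕ) + 1 < k
  · rw [if_pos (by omega)] at position_lo
    rw [if_pos (by omega)] at position_hi
    rw [hT₂.hecke_left hn (i := ⟨i, by omega⟩) rfl,
      hT₁.tauT_right hn' hM.sq (i := ⟨i, by omega⟩) position_lo position_lo position_hi, hNd.T]
    exact koszulPairing_even_right (hN.commute_tauT _) ω w
  · have him : (i : ℕ) - k < m - 1 := by omega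
    rw [if_neg (by omega)] at position_lo
    rw [if_neg (by omega)] at position_hi
    rw [hT₂.hecke_right hn (i := ⟨i - k, him⟩) (by simp only; omega),
      hT₁.tauT_left hn' (i := ⟨i - k, him⟩) position_lo position_lo
        (position_hi.trans (by simp only; omega)), hMd.T]
    exact koszulPairing_even_left (hM.commute_tauT _) ω w

end adjoint

section duality

open TensorProduct LaurentClifford parabolicC

variable {F} [Invertible (2 : F)] {q : F} {n m k : ℕ} {M N : Type} [AddCommGroup M] [Module F M]
  [AddCommGroup N] [Module F N] {ρM : H F q m →ₐ[F] Module.End F M}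
  {ρN : H F q k →ₐ[F] Module.End F N} {JM : Module.End F M} {JN : Module.End F N}
  {ρMd : H F q m →ₐ[F] Module.End F (Module.Dual F M)}
  {ρNd : H F q k →ₐ[F] Module.End F (Module.Dual F N)}
  {ρT₁ : parabolicC F q (n := n) [m, k] →ₐ[F] Module.End F (M ⊗[F] N)}
  {ρT₂ : parabolicC F q (n := n) [k, m] →ₐ[F]
    Module.End F (Module.Dual F N ⊗[F] Module.Dual F M)}
  {E₁ E₂ : Type} [AddCommGroup E₁] [Module F E₁] [AddCommGroup E₂] [Module F E₂]
  {ρE₁ : H F q n →ₐ[F] Module.End F E₁} {ρE₂ : H F q n →ₐ[F] Module.End F E₂}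
  {ρE₁d : H F q n →ₐ[F] Module.End F (Module.Dual F E₁)} {ι₁ : M ⊗[F] N →ₗ[F] E₁}
  {ι₂ : Module.Dual F N ⊗[F] Module.Dual F M →ₗ[F] E₂} {hm : m ≤ n}
  {G : E₁ →ₗ[F] (Shuffle n m → M ⊗[F] N)}
  (hM : IsParity ρM JM) (hN : IsParity ρN JN) (hMd : IsTauDual ρM ρMd) (hNd : IsTauDual ρN ρNd)
  (hT₁ : IsOuter F q n m k [m, k] ρM ρN JM ρT₁)
  (hT₂ : IsOuter F q n k m [k, m] ρNd ρMd JN.dualMap ρT₂) (hE₁ : IsTauDual ρE₁ ρE₁d)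
  (hn : n = k + m) (hn' : n = m + k) (hk : k ≤ n)
  (hG : IsShuffleCoordinates (q - q⁻¹) hm (ρE₁.comp (H.ofLaurentClifford q))
    (fun i => ρE₁ (T F q i)) (ρT₁.comp (parabolicC.ofLaurentClifford q [m, k]))
    (fun j => ρT₁ (parabolicC.hecke q hn' j)) ι₁ G)

/-- The pairing of `N^τ ⊠ M^τ` with `ind (M ⊠ N)` through the coefficient of the longest shuffle. -/
noncomputable def topPairing (JM : Module.End F M) (JN : Module.End F N)
    (G : E₁ →ₗ[F] (Shuffle n m → M ⊗[F] N)) :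
    Module.Dual F N ⊗[F] Module.Dual F M →ₗ[F] Module.Dual F E₁ :=
  LinearMap.lcomp F F (LinearMap.proj ((Shuffle.base hk).compl hn) ∘ₗ G) ∘ₗ koszulPairing JM JN

theorem topPairing_apply (ω : Module.Dual F N ⊗[F] Module.Dual F M) (e : E₁) :
    topPairing hn hk JM JN G ω e =
      koszulPairing JM JN ω (G e ((Shuffle.base hk).compl hn)) := rfl

include hM hN hMd hNd hT₁ hT₂ hE₁ hG

theorem topPairing_equivariant (b : parabolicC F q (n := n) [k, m])
    (ω : Module.Dual F N ⊗[F] Module.Dual F M) :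
    topPairing hn hk JM JN G (ρT₂ b ω) =
      ρE₁d ((parabolicC F q [k, m]).val b) (topPairing hn hk JM JN G ω) := by
  refine equivariant_of_generators q hn (fun p ω => ?_) (fun p ω => ?_) (fun i hi' ω => ?_) b ω
  all_goals refine LinearMap.ext fun e => ?_
  · have top := hG.clifford_apply_top hn hk (x p) e
    simp only [AlgHom.comp_apply, H.ofLaurentClifford_x, perm_x] at top
    rw [hE₁.X, LinearMap.dualMap_apply, topPairing_apply, topPairing_apply, top,
      koszulPairing_x hM hN hMd hNd hT₁ hT₂ hn hk]
  · have top := hG.clifford_apply_top hn hk (c p) e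
    simp only [AlgHom.comp_apply, H.ofLaurentClifford_c, perm_c] at top
    rw [hE₁.C, LinearMap.dualMap_apply, topPairing_apply, topPairing_apply, top,
      koszulPairing_c hM hN hMd hNd hT₁ hT₂ hn hk]
  · have top := hG.clifford_apply_top hn hk (c (lo i) * c (hi i)) e
    simp only [AlgHom.comp_apply, map_mul, H.ofLaurentClifford_c, perm_c] at top
    have top_hecke := hG.hecke_apply_top hn hk hi' e
    rw [hE₁.T, LinearMap.dualMap_apply, topPairing_apply, topPairing_apply, tauT,
      koszulPairing_hecke hM hN hMd hNd hT₁ hT₂ hn hk _ _ hn' hi']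
    simp only [LinearMap.add_apply, LinearMap.smul_apply, map_add, map_smul, Pi.add_apply,
      Pi.smul_apply, top, top_hecke, map_mul]

theorem exists_isInducedPairing (h : IsInducedAlong F (A := H F q n)
    (B := ↥(parabolicC F q (n := n) [k, m])) (M := Module.Dual F N ⊗[F] Module.Dual F M)
    (parabolicC F q (n := n) [k, m]).val ρT₂ ρE₂ ι₂) :
    ∃ Θ : E₂ →ₗ[F] Module.Dual F E₁, (∀ a e, Θ (ρE₂ a e) = ρE₁d a (Θ e)) ∧
      IsInducedPairing (W' := Module.Dual F N ⊗[F] Module.Dual F M) (q - q⁻¹) hn hk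
        (ρE₁.comp (H.ofLaurentClifford q)) (fun i => ρE₁ (T F q i)) G (fun i => ρE₂ (T F q i)) ι₂
        (koszulPairing JM JN) Θ := by
  obtain ⟨Θ, ⟨equivariant, map_ι⟩, -⟩ := h.2 _ ρE₁d (topPairing hn hk JM JN G)
    (topPairing_equivariant hM hN hMd hNd hT₁ hT₂ hE₁ hn hn' hk hG)
  refine ⟨Θ, equivariant, fun i e' e => ?_, fun ω e => by rw [map_ι, topPairing_apply]⟩
  rw [equivariant, hE₁.T]
  simp [tauT]

end duality

theorem duality_of_induced_general
    (F : Type) [Field F] (h2 : (2 : F) ≠ 0)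
    (q : F) (_hq : q ≠ 0) (m k : ℕ)
    (τm : H F q m →ₗ[F] H F q m) (hτm : IsTauAntiAut F q τm)
    (τk : H F q k →ₗ[F] H F q k) (hτk : IsTauAntiAut F q τk)
    (τmk : H F q (m + k) →ₗ[F] H F q (m + k)) (hτmk : IsTauAntiAut F q τmk)
    (δm : H F q m →ₐ[F] H F q m) (hδm : IsGradingAut F q δm)
    (δk : H F q k →ₐ[F] H F q k) (hδk : IsGradingAut F q δk)
    (M : Type) [AddCommGroup M] [Module F M] [FiniteDimensional F M]
    (ρM : H F q m →ₐ[F] Module.End F M)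
    (JM : Module.End F M) (hJM2 : JM * JM = 1)
    (hJMρ : ∀ h : H F q m, JM * ρM h = ρM (δm h) * JM)
    (N : Type) [AddCommGroup N] [Module F N] [FiniteDimensional F N]
    (ρN : H F q k →ₐ[F] Module.End F N)
    (JN : Module.End F N) (hJN2 : JN * JN = 1)
    (hJNρ : ∀ h : H F q k, JN * ρN h = ρN (δk h) * JN)
    (ρMd : H F q m →ₐ[F] Module.End F (Module.Dual F M))
    (hρMd : ∀ (h : H F q m) (φ : Module.Dual F M) (x : M), ρMd h φ x = φ (ρM (τm h) x))
    (ρNd : H F q k →ₐ[F] Module.End F (Module.Dual F N))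
    (hρNd : ∀ (h : H F q k) (φ : Module.Dual F N) (y : N), ρNd h φ y = φ (ρN (τk h) y))
    (ρT1 : ↥(parabolicC F q (n := m + k) [m, k]) →ₐ[F]
      Module.End F (TensorProduct F M N))
    (hT1 : IsOuter F q (m + k) m k [m, k] ρM ρN JM ρT1)
    (E1 : Type) [AddCommGroup E1] [Module F E1]
    (ρE1 : H F q (m + k) →ₐ[F] Module.End F E1)
    (ι1 : TensorProduct F M N →ₗ[F] E1)
    (hInd1 : IsInducedAlong F (A := H F q (m + k))
      (B := ↥(parabolicC F q (n := m + k) [m, k]))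
      (parabolicC F q (n := m + k) [m, k]).val ρT1 ρE1 ι1)
    (ρT2 : ↥(parabolicC F q (n := m + k) [k, m]) →ₐ[F]
      Module.End F (TensorProduct F (Module.Dual F N) (Module.Dual F M)))
    (hT2 : IsOuter F q (m + k) k m [k, m] ρNd ρMd (LinearMap.dualMap JN) ρT2)
    (E2 : Type) [AddCommGroup E2] [Module F E2]
    (ρE2 : H F q (m + k) →ₐ[F] Module.End F E2)
    (ι2 : TensorProduct F (Module.Dual F N) (Module.Dual F M) →ₗ[F] E2)
    (hInd2 : IsInducedAlong F (A := H F q (m + k))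
      (B := ↥(parabolicC F q (n := m + k) [k, m]))
      (M := TensorProduct F (Module.Dual F N) (Module.Dual F M)) (E := E2)
      (parabolicC F q (n := m + k) [k, m]).val ρT2 ρE2 ι2) :
    ∃ Φ : Module.Dual F E1 ≃ₗ[F] E2,
      ∀ (h : H F q (m + k)) (φ : Module.Dual F E1),
        Φ (φ.comp (ρE1 (τmk h))) = ρE2 h (Φ φ) := by
  let := invertibleOfNonzero h2
  have hk : k ≤ m + k := by omega
  have hM : IsParity ρM JM := .of_isGradingAut hδm hJM2 hJMρ
  have hN : IsParity ρN JN := .of_isGradingAut hδk hJN2 hJNρ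
  have hE₁ : IsTauDual ρE1 (dualRep ρE1 τmk hτmk.2.2.1 hτmk.2.1) :=
    .of_isTauAntiAut hτmk fun _ _ _ => rfl
  obtain ⟨G, hG⟩ := hInd1.exists_isShuffleCoordinates rfl (Nat.le_add_right m k)
  obtain ⟨Θ, equivariant, hΘ⟩ := exists_isInducedPairing hM hN (.of_isTauAntiAut hτm hρMd)
    (.of_isTauAntiAut hτk hρNd) hT1 hT2 hE₁ (add_comm m k) rfl hk hG hInd2
  have finrank_eq : Module.finrank F (TensorProduct F (Module.Dual F N) (Module.Dual F M)) =
      Module.finrank F (TensorProduct F M N) := by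
    simp only [Module.finrank_tensorProduct, Subspace.dual_finrank_eq, mul_comm]
  have bijective : Function.Bijective Θ := hΘ.bijective hG (hInd2.isYoungGenerated (add_comm m k))
    (koszulPairing_injective hM.sq hN.sq) finrank_eq
  refine ⟨(LinearEquiv.ofBijective Θ bijective).symm, fun h φ => ?_⟩
  obtain ⟨e, rfl⟩ := bijective.2 φ
  rw [LinearEquiv.symm_apply_eq, LinearEquiv.ofBijective_apply, equivariant,
    LinearEquiv.ofBijective_symm_apply_apply]
  rfl

/-- **Duality and induction** (Theorem `duals` of Brundan–Kleshchev): for a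
finite-dimensional `H_m`-module `M` and a finite-dimensional `H_k`-module `N`,
`(ind^{m+k}_{m,k} M ⊠ N)^τ ≅ ind^{m+k}_{k,m} (N^τ ⊠ M^τ)` as `H_{m+k}`-modules. -/
theorem duality_of_induced
    (F : Type) [Field F] [IsAlgClosed F] (h2 : (2 : F) ≠ 0)
    (q : F) (hq : GoodParam F q) (m k : ℕ)
    -- the antiautomorphisms τ of H_m, H_k and H_{m+k}
    (τm : H F q m →ₗ[F] H F q m) (hτm : IsTauAntiAut F q τm)
    (τk : H F q k →ₗ[F] H F q k) (hτk : IsTauAntiAut F q τk)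
    (τmk : H F q (m + k) →ₗ[F] H F q (m + k)) (hτmk : IsTauAntiAut F q τmk)
    -- the grading automorphisms of H_m, H_k
    (δm : H F q m →ₐ[F] H F q m) (hδm : IsGradingAut F q δm)
    (δk : H F q k →ₐ[F] H F q k) (hδk : IsGradingAut F q δk)
    -- the graded modules M and N
    (M : Type) [AddCommGroup M] [Module F M] [FiniteDimensional F M]
    (ρM : H F q m →ₐ[F] Module.End F M)
    (JM : Module.End F M) (hJM2 : JM * JM = 1)
    (hJMρ : ∀ h : H F q m, JM * ρM h = ρM (δm h) * JM)
    (N : Type) [AddCommGroup N] [Module F N] [FiniteDimensional F N]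
    (ρN : H F q k →ₐ[F] Module.End F N)
    (JN : Module.End F N) (hJN2 : JN * JN = 1)
    (hJNρ : ∀ h : H F q k, JN * ρN h = ρN (δk h) * JN)
    -- the dual modules M^τ and N^τ
    (ρMd : H F q m →ₐ[F] Module.End F (Module.Dual F M))
    (hρMd : ∀ (h : H F q m) (φ : Module.Dual F M) (x : M), ρMd h φ x = φ (ρM (τm h) x))
    (ρNd : H F q k →ₐ[F] Module.End F (Module.Dual F N))
    (hρNd : ∀ (h : H F q k) (φ : Module.Dual F N) (y : N), ρNd h φ y = φ (ρN (τk h) y))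
    -- the outer tensor product M ⊠ N over H_{(m,k)}, and its induced module E1
    (ρT1 : ↥(parabolicC F q (n := m + k) [m, k]) →ₐ[F]
      Module.End F (TensorProduct F M N))
    (hT1 : IsOuter F q (m + k) m k [m, k] ρM ρN JM ρT1)
    (E1 : Type) [AddCommGroup E1] [Module F E1]
    (ρE1 : H F q (m + k) →ₐ[F] Module.End F E1)
    (ι1 : TensorProduct F M N →ₗ[F] E1)
    (hInd1 : IsInducedAlong F (A := H F q (m + k))
      (B := ↥(parabolicC F q (n := m + k) [m, k]))
      (parabolicC F q (n := m + k) [m, k]).val ρT1 ρE1 ι1)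
    -- the outer tensor product N^τ ⊠ M^τ over H_{(k,m)}, and its induced module E2
    (ρT2 : ↥(parabolicC F q (n := m + k) [k, m]) →ₐ[F]
      Module.End F (TensorProduct F (Module.Dual F N) (Module.Dual F M)))
    (hT2 : IsOuter F q (m + k) k m [k, m] ρNd ρMd (LinearMap.dualMap JN) ρT2)
    (E2 : Type) [AddCommGroup E2] [Module F E2]
    (ρE2 : H F q (m + k) →ₐ[F] Module.End F E2)
    (ι2 : TensorProduct F (Module.Dual F N) (Module.Dual F M) →ₗ[F] E2)
    (hInd2 : IsInducedAlong F (A := H F q (m + k))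
      (B := ↥(parabolicC F q (n := m + k) [k, m]))
      (M := TensorProduct F (Module.Dual F N) (Module.Dual F M)) (E := E2)
      (parabolicC F q (n := m + k) [k, m]).val ρT2 ρE2 ι2) :
    -- conclusion: (ind M ⊠ N)^τ ≅ ind (N^τ ⊠ M^τ)
    ∃ Φ : Module.Dual F E1 ≃ₗ[F] E2,
      ∀ (h : H F q (m + k)) (φ : Module.Dual F E1),
        Φ (φ.comp (ρE1 (τmk h))) = ρE2 h (Φ φ) := by
  exact duality_of_induced_general F h2 q hq.1 m k τm hτm τk hτk τmk hτmk δm hδm δk hδk M ρM JM hJM2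
    hJMρ N ρN JN hJN2 hJNρ ρMd hρMd ρNd hρNd ρT1 hT1 E1 ρE1 ι1 hInd1 ρT2 hT2 E2 ρE2 ι2 hInd2

end HC
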